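/- arXiv:2011.00590 — 4 statements merged into one kernel-verified Lean document; each statement's English description precedes it below -/
import Mathlib

section
/- Let K be a quadratic field. If x, y ∈ K satisfy y^2 = -(2x^4 - 14x^3 + 21x^2 + 28x + 7), then x is rational. (This is the main theorem for p = 7: every quadratic point on this affine model of the non-split Cartan modular curve X_ns(7) maps under the degeneracy map (x,y) ↦ x to a rational point of X_ns^+(7) ≅ ℙ^1, i.e. X_ns(7) has no exceptional quadratic points.) -/
lemma copr7 (u v t : ℤ) (ht : t ≠ 0) (h : u * v = 7 * t ^ 4)
    (H : ∀ p : ℤ, Prime p → p ∣ u → p ∣ v → p ∣ t → False) : IsCoprime u v := by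
  have p7 : Prime (7 : ℤ) := by norm_num
  apply isCoprime_of_prime_dvd
  · rintro ⟨rfl, rfl⟩
    apply ht
    have : t ^ 4 = 0 := by linarith
    exact pow_eq_zero_iff (by norm_num) |>.1 this
  · intro p hp hu hv
    have h1 : p ∣ 7 * t ^ 4 := h ▸ Dvd.dvd.mul_right hu v
    rcases hp.dvd_or_dvd h1 with h2 | h2
    · have h3 : Associated p 7 := hp.associated_of_dvd p7 h2
      obtain ⟨u', rfl⟩ := h3.symm.dvd.trans hu
      obtain ⟨v', rfl⟩ := h3.symm.dvd.trans hv
      have h4 : (7 : ℤ) ∣ t ^ 4 := ⟨u' * v', by linarith⟩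
      exact H p hp hu hv (h3.dvd.trans (p7.dvd_of_dvd_pow h4))
    · exact H p hp hu hv (hp.dvd_of_dvd_pow h2)

lemma fac4 (u v t : ℤ) (hu : 0 < u) (hv : 0 < v) (hc : IsCoprime u v) (h : u * v = t ^ 4) :
    ∃ m n : ℤ, u = m ^ 4 ∧ v = n ^ 4 := by
  obtain ⟨m, hm⟩ := exists_associated_pow_of_mul_eq_pow' hc h
  obtain ⟨n, hn⟩ := exists_associated_pow_of_mul_eq_pow' hc.symm ((mul_comm v u).trans h)
  refine ⟨m, n, ?_, ?_⟩
  · rcases Int.associated_iff.1 hm with h | h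
    · exact h.symm
    · have : 0 ≤ m ^ 4 := by positivity
      linarith
  · rcases Int.associated_iff.1 hn with h | h
    · exact h.symm
    · have : 0 ≤ n ^ 4 := by positivity
      linarith

lemma fac7a (u v t : ℤ) (hu : 0 < u) (hv : 0 < v) (h : 7 * u * v = 7 * t ^ 4)
    (hc : IsCoprime (7 * u) v) :
    ∃ m n : ℤ, IsCoprime m n ∧ (m * n) ^ 2 = t ^ 2 ∧ u = m ^ 4 ∧ v = n ^ 4 := by
  have hc' : IsCoprime u v := hc.of_mul_left_right
  obtain ⟨m, n, rfl, rfl⟩ := fac4 u v t hu hv hc' (by linarith)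
  refine ⟨m, n, ?_, ?_, rfl, rfl⟩
  · exact (IsCoprime.pow_iff (by norm_num) (by norm_num)).1 hc'
  · have h1 : ((m * n) ^ 2) ^ 2 = (t ^ 2) ^ 2 := by
      have : 7 * (((m * n) ^ 2) ^ 2) = 7 * (t ^ 2) ^ 2 := by linear_combination h
      linarith
    exact (pow_left_inj₀ (by positivity) (by positivity) (by norm_num)).1 h1

lemma fac7 (u v t : ℤ) (hu : 0 < u) (hv : 0 < v) (h : u * v = 7 * t ^ 4)
    (H : ∀ p : ℤ, Prime p → p ∣ u → p ∣ v → p ∣ t → False) :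
    ∃ m n : ℤ, IsCoprime m n ∧ (m * n) ^ 2 = t ^ 2 ∧
      ((u = 7 * m ^ 4 ∧ v = n ^ 4) ∨ (v = 7 * m ^ 4 ∧ u = n ^ 4)) := by
  have ht : t ≠ 0 := by
    rintro rfl
    have := mul_pos hu hv
    norm_num at h
    omega
  have hc := copr7 u v t ht h H
  have p7 : Prime (7 : ℤ) := by norm_num
  rcases p7.dvd_or_dvd (⟨t ^ 4, h⟩ : (7 : ℤ) ∣ u * v) with ⟨w, rfl⟩ | ⟨w, rfl⟩
  · obtain ⟨m, n, h1, h2, rfl, rfl⟩ := fac7a w v t (by linarith) hv h hc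
    exact ⟨m, n, h1, h2, Or.inl ⟨rfl, rfl⟩⟩
  · obtain ⟨m, n, h1, h2, rfl, rfl⟩ := fac7a w u t (by linarith) hu (by linarith) hc.symm
    exact ⟨m, n, h1, h2, Or.inr ⟨rfl, rfl⟩⟩

lemma sq_add_sq_seven (x y : ℤ) (h : (7 : ℤ) ∣ x ^ 2 + y ^ 2) : (7 : ℤ) ∣ x ∧ (7 : ℤ) ∣ y := by
  have h1 := (ZMod.intCast_zmod_eq_zero_iff_dvd (x ^ 2 + y ^ 2) 7).2 h
  push_cast at h1
  have h2 : ∀ a b : ZMod 7, a ^ 2 + b ^ 2 = 0 → a = 0 ∧ b = 0 := by decide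
  obtain ⟨h3, h4⟩ := h2 _ _ h1
  exact ⟨(ZMod.intCast_zmod_eq_zero_iff_dvd x 7).1 h3, (ZMod.intCast_zmod_eq_zero_iff_dvd y 7).1 h4⟩

lemma noSeven (m n s : ℤ) (hc : IsCoprime m n)
    (h : 7 * m ^ 4 - 42 * m ^ 2 * n ^ 2 - n ^ 4 = s ^ 2) : False := by
  have p7 : Prime (7 : ℤ) := by norm_num
  have h1 : (7 : ℤ) ∣ s ^ 2 + (n ^ 2) ^ 2 :=
    ⟨m ^ 4 - 6 * m ^ 2 * n ^ 2, by linear_combination -h⟩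
  obtain ⟨⟨s', rfl⟩, h2⟩ := sq_add_sq_seven _ _ h1
  have hn := p7.dvd_of_dvd_pow h2
  obtain ⟨n', rfl⟩ := hn
  have h3 : (7 : ℤ) ∣ m ^ 4 :=
    ⟨s' ^ 2 + 42 * m ^ 2 * n' ^ 2 + 49 * n' ^ 4, by linarith⟩
  exact p7.not_isUnit (hc.isUnit_of_dvd' (p7.dvd_of_dvd_pow h3) (Dvd.intro _ rfl))

lemma Apos (a b c : ℤ) (hb : b ≠ 0) (h : a ^ 4 - 42 * a ^ 2 * b ^ 2 - 7 * b ^ 4 = c ^ 2) :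
    0 < a ^ 2 - 21 * b ^ 2 := by
  by_contra hA
  have hb2 : 0 < b ^ 2 := by positivity
  have : 0 ≤ a ^ 2 := by positivity
  nlinarith [sq_nonneg c, mul_nonneg this (by linarith : 0 ≤ 21 * b ^ 2 - a ^ 2), mul_pos hb2 hb2, mul_nonneg this hb2.le]

lemma pos_of (u v : ℤ) (h : 0 < u * v) (h' : 0 < u + v) : 0 < u ∧ 0 < v := by
  rcases pos_and_pos_or_neg_and_neg_of_mul_pos h with h | h
  · exact h
  · omega

lemma oddodd (a b c : ℤ) (ha : Odd a) (hb : Odd b) (hc : IsCoprime a b)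
    (h : a ^ 4 - 42 * a ^ 2 * b ^ 2 - 7 * b ^ 4 = c ^ 2) : False := by
  have hb0 : b ≠ 0 := by rintro rfl; simp at hb
  have hA := Apos a b c hb0 h
  have hk : ∃ k, a ^ 2 - 21 * b ^ 2 = 4 * k := by
    obtain ⟨i, rfl⟩ := ha
    obtain ⟨j, rfl⟩ := hb
    exact ⟨i ^ 2 + i - 21 * j ^ 2 - 21 * j - 5, by ring⟩
  obtain ⟨k, hk⟩ := hk
  have h1 : (4 : ℤ) ^ 2 ∣ c ^ 2 := ⟨k ^ 2 - 28 * b ^ 4, by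
    linear_combination (a ^ 2 - 21 * b ^ 2 + 4 * k) * hk - h⟩
  obtain ⟨d, rfl⟩ := (Int.pow_dvd_pow_iff (by norm_num)).1 h1
  have h2 : k ^ 2 - d ^ 2 = 28 * b ^ 4 := by
    have : 16 * (k ^ 2 - d ^ 2) = 16 * (28 * b ^ 4) := by
      linear_combination -(a ^ 2 - 21 * b ^ 2 + 4 * k) * hk + h
    linarith
  have h3 : Even (k - d) := by
    have : Even (k ^ 2 - d ^ 2) := ⟨14 * b ^ 4, by rw [h2]; ring⟩
    simpa [Int.even_sub, Int.even_pow] using this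
  obtain ⟨u, hu⟩ := h3
  have hd : d = k - 2 * u := by linarith
  subst hd
  have huv : u * (k - u) = 7 * b ^ 4 := by linarith
  have hpos : 0 < u * (k - u) := by rw [huv]; positivity
  obtain ⟨p1, p2⟩ := pos_of u (k - u) hpos (by linarith)
  obtain ⟨m, n, -, hmn, hh⟩ := fac7 u (k - u) b p1 p2 huv (by
    intro p hp q1 q2 q3
    have q4 : p ∣ a ^ 2 := by
      have : a ^ 2 = 21 * b * b + 4 * (u + (k - u)) := by linarith
      rw [this]
      exact dvd_add (Dvd.dvd.mul_left q3 _) (Dvd.dvd.mul_left (dvd_add q1 q2) _)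
    exact hp.not_isUnit (hc.isUnit_of_dvd' (hp.dvd_of_dvd_pow q4) q3))
  have hmn' : Odd (m * n) := by
    have : Odd ((m * n) ^ 2) := by rw [hmn]; exact hb.pow
    exact (Int.odd_pow' (by norm_num)).1 this
  obtain ⟨om, on⟩ := Int.odd_mul.1 hmn'
  obtain ⟨i, hi⟩ : Odd (m ^ 4) := om.pow
  obtain ⟨j, hj⟩ : Odd (n ^ 4) := on.pow
  have ea := Int.sq_mod_four_eq_one_of_odd ha
  have e1 := Int.eight_dvd_sq_sub_one_of_odd ha
  have e2 := Int.eight_dvd_sq_sub_one_of_odd hb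
  rcases hh with ⟨w1, w2⟩ | ⟨w1, w2⟩ <;> omega

lemma opp (a b c : ℤ) (hab : Odd (a + b)) (hb0 : b ≠ 0) (hc : IsCoprime a b)
    (h : a ^ 4 - 42 * a ^ 2 * b ^ 2 - 7 * b ^ 4 = c ^ 2) :
    ∃ u v : ℤ, 0 < u ∧ 0 < v ∧ Odd v ∧ u * v = 7 * b ^ 4 ∧ 16 * u + v = a ^ 2 - 21 * b ^ 2 := by
  have hA := Apos a b c hb0 h
  have oA : Odd (a ^ 2 - 21 * b ^ 2) := by
    simp only [Int.odd_sub, Int.odd_mul, Int.odd_pow, Int.even_mul, Int.even_pow,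
      Int.odd_add] at *
    have : Odd (21 : ℤ) := by decide
    grind [Int.not_even_iff_odd]
  have h2 : (a ^ 2 - 21 * b ^ 2) ^ 2 - c ^ 2 = 448 * b ^ 4 := by linear_combination h
  generalize hk : a ^ 2 - 21 * b ^ 2 = k at *
  have h3 : Even (k - c) := by
    have : Even (k ^ 2 - c ^ 2) := ⟨224 * b ^ 4, by rw [h2]; ring⟩
    simpa [Int.even_sub, Int.even_pow] using this
  obtain ⟨u, hu⟩ := h3
  obtain rfl : c = k - 2 * u := by linarith
  have huv : u * (k - u) = 112 * b ^ 4 := by linarith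
  have hpos : 0 < u * (k - u) := by rw [huv]; positivity
  obtain ⟨p1, p2⟩ := pos_of u (k - u) hpos (by linarith)
  have key : ∀ z w : ℤ, 0 < z → 0 < w → z * w = 112 * b ^ 4 → z + w = k → Odd w → 
      ∃ u v : ℤ, 0 < u ∧ 0 < v ∧ Odd v ∧ u * v = 7 * b ^ 4 ∧ 16 * u + v = k := by
    intro z w hz hw hzw hs ow
    have : IsCoprime ((2 : ℤ) ^ 4) w := by
      apply IsCoprime.pow_left
      exact Int.isCoprime_two_left.2 ow
    obtain ⟨z', rfl⟩ := this.dvd_of_dvd_mul_right (⟨7 * b ^ 4, by rw [hzw]; ring⟩ : (2 : ℤ) ^ 4 ∣ z * w)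
    exact ⟨z', w, by linarith, hw, ow, by linarith, by linarith⟩
  rcases Int.even_or_odd u with e | o
  · exact key u (k - u) p1 p2 huv (by ring) (by
      obtain ⟨i, hi⟩ := e
      obtain ⟨j, hj⟩ := oA
      exact ⟨j - i, by omega⟩)
  · exact key (k - u) u p2 p1 (by linarith) (by ring) o

lemma opp' (a b c : ℤ) (hab : Odd (a + b)) (hb0 : b ≠ 0) (hc : IsCoprime a b)
    (h : a ^ 4 - 42 * a ^ 2 * b ^ 2 - 7 * b ^ 4 = c ^ 2) :
    ∃ r s : ℤ, Odd s ∧ IsCoprime r s ∧ (r * s) ^ 2 = b ^ 2 ∧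
      (a ^ 2 = s ^ 4 + 21 * r ^ 2 * s ^ 2 + 112 * r ^ 4 ∨
       a ^ 2 = 16 * r ^ 4 + 21 * r ^ 2 * s ^ 2 + 7 * s ^ 4) := by
  obtain ⟨u, v, hu, hv, ov, huv, hs⟩ := opp a b c hab hb0 hc h
  obtain ⟨m, n, h1, h2, h3⟩ := fac7 u v b hu hv huv (by
    intro p hp q1 q2 q3
    have q4 : p ∣ a ^ 2 := by
      have : a ^ 2 = 21 * b * b + (16 * u + v) := by linarith
      rw [this]
      exact dvd_add (Dvd.dvd.mul_left q3 _) (dvd_add (Dvd.dvd.mul_left q1 _) q2)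
    exact hp.not_isUnit (hc.isUnit_of_dvd' (hp.dvd_of_dvd_pow q4) q3))
  rcases h3 with ⟨rfl, rfl⟩ | ⟨rfl, rfl⟩
  · refine ⟨m, n, ?_, h1, h2, Or.inl ?_⟩
    · exact (Int.odd_pow' (by norm_num)).1 ov
    · linear_combination -hs - 21 * h2
  · refine ⟨n, m, ?_, h1.symm, by rw [← h2]; ring, Or.inr ?_⟩
    · exact (Int.odd_pow' (by norm_num)).1 (Int.odd_mul.1 ov).2
    · linear_combination -hs - 21 * h2

lemma caseII (a r s : ℤ) (hr : Odd r) (hs : Odd s) (hc : IsCoprime r s)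
    (h : a ^ 2 = 16 * r ^ 4 + 21 * r ^ 2 * s ^ 2 + 7 * s ^ 4) : False := by
  wlog ha : 0 ≤ a generalizing a
  · exact this (-a) (by linarith [neg_sq a]) (by linarith)
  have hs0 : s ≠ 0 := by rintro rfl; simp at hs
  have huv : (8 * a - (32 * r ^ 2 + 21 * s ^ 2)) * (8 * a + (32 * r ^ 2 + 21 * s ^ 2)) = 7 * s ^ 4 := by
    linear_combination 64 * h
  have hB : 0 < 32 * r ^ 2 + 21 * s ^ 2 := by positivity
  have hv : 0 < 8 * a + (32 * r ^ 2 + 21 * s ^ 2) := by positivity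
  have hu : 0 < 8 * a - (32 * r ^ 2 + 21 * s ^ 2) := by
    have : 0 < (8 * a - (32 * r ^ 2 + 21 * s ^ 2)) * (8 * a + (32 * r ^ 2 + 21 * s ^ 2)) := by
      rw [huv]; positivity
    exact pos_of_mul_pos_left this hv.le
  obtain ⟨m, n, h1, h2, h3⟩ := fac7 _ _ s hu hv huv (by
    intro p hp q1 q2 q3
    have q4 : p ∣ (2 ^ 6) * r ^ 2 := by
      have : (2 ^ 6) * r ^ 2 = (8 * a + (32 * r ^ 2 + 21 * s ^ 2)) - (8 * a - (32 * r ^ 2 + 21 * s ^ 2)) - 42 * s * s := by ring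
      rw [this]
      exact dvd_sub (dvd_sub q2 q1) (Dvd.dvd.mul_left q3 _)
    rcases hp.dvd_or_dvd q4 with q5 | q5
    · exact hp.not_isUnit ((Int.isCoprime_two_left.2 hs).isUnit_of_dvd' (hp.dvd_of_dvd_pow q5) q3)
    · exact hp.not_isUnit (hc.isUnit_of_dvd' (hp.dvd_of_dvd_pow q5) q3))
  have hmn' : Odd (m * n) := by
    have : Odd ((m * n) ^ 2) := by rw [h2]; exact hs.pow
    exact (Int.odd_pow' (by norm_num)).1 this
  obtain ⟨om, on⟩ := Int.odd_mul.1 hmn'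
  rcases h3 with ⟨w1, w2⟩ | ⟨w1, w2⟩
  · exact oddodd n m (8 * r) on om h1.symm (by linear_combination w1 - w2 - 42 * h2)
  · exact noSeven m n (8 * r) h1 (by linear_combination w2 - w1 - 42 * h2)

lemma caseI (a s t : ℤ) (ht : t ≠ 0) (hs : Odd s) (hc : IsCoprime t s)
    (h : a ^ 2 = s ^ 4 + 84 * t ^ 2 * s ^ 2 + 1792 * t ^ 4) :
    ∃ m n : ℤ, IsCoprime n m ∧ (m * n) ^ 2 = t ^ 2 ∧
      n ^ 4 - 42 * n ^ 2 * m ^ 2 - 7 * m ^ 4 = s ^ 2 := by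
  wlog ha : 0 ≤ a generalizing a
  · exact this (-a) (by linarith [neg_sq a]) (by linarith)
  have oa : Odd a := by
    have : Odd (a ^ 2) := by
      rw [h]
      obtain ⟨j, hj⟩ : Odd (s ^ 4) := hs.pow
      exact ⟨j + 42 * t ^ 2 * s ^ 2 + 896 * t ^ 4, by rw [hj]; ring⟩
    exact (Int.odd_pow' (by norm_num)).1 this
  have oB : Odd (s ^ 2) := hs.pow
  obtain ⟨i, hi⟩ := oa
  obtain ⟨j, hj⟩ := oB
  have huv : (i - j - 21 * t ^ 2) * (i + j + 1 + 21 * t ^ 2) = 7 * t ^ 4 := by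
    have e1 : i = (i - j) + j := by ring
    have : (a - (s ^ 2 + 42 * t ^ 2)) * (a + (s ^ 2 + 42 * t ^ 2)) = 28 * t ^ 4 := by
      linear_combination h
    rw [hi, hj] at this
    linarith
  have hs2 : 0 < s ^ 2 := by
    have : s ≠ 0 := by rintro rfl; simp at hs
    positivity
  have ht2 : 0 < t ^ 2 := by positivity
  have hv : 0 < i + j + 1 + 21 * t ^ 2 := by omega
  have hu : 0 < i - j - 21 * t ^ 2 := by
    have : 0 < (i - j - 21 * t ^ 2) * (i + j + 1 + 21 * t ^ 2) := by
      rw [huv]; positivity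
    exact pos_of_mul_pos_left this hv.le
  obtain ⟨m, n, h1, h2, h3⟩ := fac7 _ _ t hu hv huv (by
    intro p hp q1 q2 q3
    have q4 : p ∣ s ^ 2 := by
      have : s ^ 2 = (i + j + 1 + 21 * t ^ 2) - (i - j - 21 * t ^ 2) - 42 * t * t := by
        rw [hj]; ring
      rw [this]
      exact dvd_sub (dvd_sub q2 q1) (Dvd.dvd.mul_left q3 _)
    exact hp.not_isUnit (hc.isUnit_of_dvd' q3 (hp.dvd_of_dvd_pow q4)))
  rcases h3 with ⟨w1, w2⟩ | ⟨w1, w2⟩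
  · exact ⟨m, n, h1.symm, h2, by linear_combination w1 - w2 - 42 * h2 - hj⟩
  · exact (noSeven m n s h1 (by linear_combination w2 - w1 - 42 * h2 - hj)).elim

lemma descent (N : ℕ) : ∀ a b c : ℤ, b.natAbs = N → b ≠ 0 → IsCoprime a b →
    a ^ 4 - 42 * a ^ 2 * b ^ 2 - 7 * b ^ 4 = c ^ 2 → False := by
  induction N using Nat.strong_induction_on with
  | _ N ih =>
  intro a b c hN hb0 hc h
  rcases Int.even_or_odd (a + b) with hab | hab
  · have : Odd a ∧ Odd b := by
      rcases Int.even_or_odd a with e | o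
      · have e' : Even b := (Int.even_add.1 hab).1 e
        have := hc.isUnit_of_dvd' e.two_dvd e'.two_dvd
        exact absurd this (by decide)
      · refine ⟨o, ?_⟩
        rw [← Int.not_even_iff_odd] at o ⊢
        exact fun hb => o ((Int.even_add.1 hab).2 hb)
    exact oddodd a b c this.1 this.2 hc h
  · obtain ⟨r, s, os, hrs, hb, hh⟩ := opp' a b c hab hb0 hc h
    have hs8 := Int.eight_dvd_sq_sub_one_of_odd os
    rcases hh with hh | hh
    · rcases Int.even_or_odd r with e | o
      · obtain ⟨t, rfl⟩ := e
        have ht : t ≠ 0 := by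
          rintro rfl
          simp at hb
          exact hb0 (pow_eq_zero_iff (by norm_num) |>.1 hb.symm)
        have hts : IsCoprime t s := by
          rw [← two_mul] at hrs
          exact hrs.of_mul_left_right
        obtain ⟨m, n, g1, g2, g3⟩ := caseI a s t ht os hts (by rw [hh]; ring)
        have hm0 : m ≠ 0 := by
          rintro rfl
          simp at g2
          exact ht (pow_eq_zero_iff (by norm_num) |>.1 g2.symm)
        have hn0 : n ≠ 0 := by
          rintro rfl
          simp at g2
          exact ht (pow_eq_zero_iff (by norm_num) |>.1 g2.symm)
        have hs0 : s ≠ 0 := by rintro rfl; simp at os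
        refine ih m.natAbs ?_ n m s rfl hm0 g1 g3
        rw [← hN]
        apply Int.natAbs_lt_iff_sq_lt.2
        have hb' : b ^ 2 = 4 * (m ^ 2 * (n ^ 2 * s ^ 2)) := by
          linear_combination -hb - 4 * s ^ 2 * g2
        have k1 : 0 < m ^ 2 := by positivity
        have k2 : 0 < n ^ 2 * s ^ 2 := by positivity
        nlinarith
      · skip
        have hr8 := Int.eight_dvd_sq_sub_one_of_odd o
        obtain ⟨i, hi⟩ := hr8
        obtain ⟨j, hj⟩ := hs8
        have hr2 : r ^ 2 = 8 * i + 1 := by linarith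
        have hs2 : s ^ 2 = 8 * j + 1 := by linarith
        have : a ^ 2 = 4 * (16 * j ^ 2 + 4 * j + 21 * (16 * i * j + 2 * i + 2 * j) + 28 * r ^ 4 + 5) + 2 := by
          rw [hh, show s ^ 4 = (s ^ 2) ^ 2 by ring, hr2, hs2]; ring
        have := Int.emod_emod_of_dvd a (show (2 : ℤ) ∣ 4 by norm_num)
        rcases Int.even_or_odd a with ⟨w, rfl⟩ | ⟨w, rfl⟩
        · ring_nf at this; ring_nf at *; omega
        · ring_nf at *; omega
    · rcases Int.even_or_odd r with e | o
      · obtain ⟨t, rfl⟩ := e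
        obtain ⟨j, hj⟩ := hs8
        have hs2 : s ^ 2 = 8 * j + 1 := by linarith
        have : a ^ 2 = 4 * (64 * t ^ 4 + 21 * t ^ 2 * s ^ 2 + 7 * 16 * j ^ 2 + 28 * j + 1) + 3 := by
          rw [hh, show s ^ 4 = (s ^ 2) ^ 2 by ring, hs2]; ring
        rcases Int.even_or_odd a with e | o
        · obtain ⟨w, rfl⟩ := e
          have : (w + w) ^ 2 = 4 * w ^ 2 := by ring
          omega
        · have := Int.sq_mod_four_eq_one_of_odd o
          omega
      · exact caseII a r s o os hrs hh

lemma ell_int (p q z : ℤ) (hq : 0 < q) (hc : IsCoprime p q)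
    (h : q * (p * (p ^ 2 - 42 * p * q - 7 * q ^ 2)) = z ^ 2) : p = 0 := by
  by_contra hp0
  have p7 : Prime (7 : ℤ) := by norm_num
  have c1 : IsCoprime q (p ^ 2 - 42 * p * q - 7 * q ^ 2) := by
    have : IsCoprime q (p ^ 2 + q * (-42 * p - 7 * q)) := hc.symm.pow_right.add_mul_left_right _
    convert this using 1
    ring
  have c2 : IsCoprime q (p * (p ^ 2 - 42 * p * q - 7 * q ^ 2)) := hc.symm.mul_right c1
  have hqs : ∃ b : ℤ, q = b ^ 2 := by
    obtain ⟨b, hb | hb⟩ := Int.sq_of_isCoprime c2 h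
    · exact ⟨b, hb⟩
    · nlinarith [sq_nonneg b]
  obtain ⟨b, rfl⟩ := hqs
  have hb0 : b ≠ 0 := by rintro rfl; simp at hq
  have hcb : IsCoprime p b := (IsCoprime.pow_right_iff (by norm_num)).1 hc
  have hbz : b ∣ z := by
    apply (Int.pow_dvd_pow_iff (n := 2) (by norm_num)).1
    exact ⟨_, h.symm⟩
  obtain ⟨w, rfl⟩ := hbz
  have hw : p * (p ^ 2 - 42 * p * b ^ 2 - 7 * (b ^ 2) ^ 2) = w ^ 2 := by
    apply mul_left_cancel₀ (pow_ne_zero 2 hb0)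
    rw [h]; ring
  by_cases h7 : (7 : ℤ) ∣ p
  · obtain ⟨p', rfl⟩ := h7
    have hw7 : (7 : ℤ) ∣ w := by
      apply p7.dvd_of_dvd_pow (n := 2)
      rw [← hw]
      exact ⟨_, mul_assoc _ _ _⟩
    obtain ⟨w', rfl⟩ := hw7
    have hw' : p' * (7 * p' ^ 2 - 42 * p' * b ^ 2 - b ^ 4) = w' ^ 2 := by linarith
    have hcb' : IsCoprime p' b := hcb.of_mul_left_right
    have c3 : IsCoprime p' (7 * p' ^ 2 - 42 * p' * b ^ 2 - b ^ 4) := by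
      have : IsCoprime p' (-b ^ 4 + p' * (7 * p' - 42 * b ^ 2)) :=
        (hcb'.pow_right.neg_right).add_mul_left_right _
      convert this using 1
      ring
    obtain ⟨a, ha⟩ := Int.sq_of_isCoprime c3 hw'
    obtain ⟨d, hd⟩ := Int.sq_of_isCoprime c3.symm ((mul_comm _ _).trans hw')
    have ha0 : a ≠ 0 := by
      rintro rfl
      apply hp0
      rcases ha with ha | ha <;> simp [ha]
    have hca : IsCoprime a b := by
      rcases ha with ha | ha
      · rw [ha] at hcb'
        exact (IsCoprime.pow_left_iff (by norm_num)).1 hcb'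
      · rw [ha] at hcb'
        exact (IsCoprime.pow_left_iff (by norm_num)).1 (IsCoprime.neg_left_iff _ _ |>.1 hcb')
    have hp2 : 0 < p' ^ 2 := by
      have : p' ≠ 0 := by rintro rfl; simp at hp0
      positivity
    rcases ha with rfl | rfl
    · have hd' : 7 * (a ^ 2) ^ 2 - 42 * a ^ 2 * b ^ 2 - b ^ 4 = d ^ 2 := by
        rcases hd with hd | hd
        · exact hd
        · have k1 : 0 < a ^ 2 := by positivity
          have k2 : 0 ≤ d ^ 2 := by positivity
          rw [hd] at hw'
          have : d ^ 2 = 0 := by nlinarith [sq_nonneg w']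
          rw [hd, this]; ring
      exact noSeven a b d hca (by linear_combination hd')
    · have hd' : 7 * (-a ^ 2) ^ 2 - 42 * (-a ^ 2) * b ^ 2 - b ^ 4 = -d ^ 2 := by
        rcases hd with hd | hd
        · have k1 : 0 < a ^ 2 := by positivity
          have k2 : 0 ≤ d ^ 2 := by positivity
          rw [hd] at hw'
          have : d ^ 2 = 0 := by nlinarith [sq_nonneg w']
          rw [hd, this]; ring
        · exact hd
      exact descent _ b a d rfl ha0 hca.symm (by linear_combination -hd')
  · have c7 : IsCoprime p 7 := ((p7.coprime_iff_not_dvd).2 h7).symm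
    have c3 : IsCoprime p (p ^ 2 - 42 * p * b ^ 2 - 7 * (b ^ 2) ^ 2) := by
      have : IsCoprime p (-(7 * b ^ 4) + p * (p - 42 * b ^ 2)) :=
        ((c7.mul_right hcb.pow_right).neg_right).add_mul_left_right _
      convert this using 1
      ring
    obtain ⟨a, ha⟩ := Int.sq_of_isCoprime c3 hw
    obtain ⟨d, hd⟩ := Int.sq_of_isCoprime c3.symm ((mul_comm _ _).trans hw)
    have ha0 : a ≠ 0 := by
      rintro rfl
      apply hp0
      rcases ha with ha | ha <;> simp [ha]
    have hca : IsCoprime a b := by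
      rcases ha with ha | ha
      · rw [ha] at hcb
        exact (IsCoprime.pow_left_iff (by norm_num)).1 hcb
      · rw [ha] at hcb
        exact (IsCoprime.pow_left_iff (by norm_num)).1 (IsCoprime.neg_left_iff _ _ |>.1 hcb)
    rcases ha with rfl | rfl
    · have hd' : (a ^ 2) ^ 2 - 42 * a ^ 2 * b ^ 2 - 7 * (b ^ 2) ^ 2 = d ^ 2 := by
        rcases hd with hd | hd
        · exact hd
        · have k1 : 0 < a ^ 2 := by positivity
          have k2 : 0 ≤ d ^ 2 := by positivity
          rw [hd] at hw
          have : d ^ 2 = 0 := by nlinarith [sq_nonneg w]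
          rw [hd, this]; ring
      exact descent _ a b d rfl hb0 hca (by linear_combination hd')
    · have hd' : (-a ^ 2) ^ 2 - 42 * (-a ^ 2) * b ^ 2 - 7 * (b ^ 2) ^ 2 = -d ^ 2 := by
        rcases hd with hd | hd
        · have k1 : 0 < a ^ 2 := by positivity
          have k2 : 0 ≤ d ^ 2 := by positivity
          rw [hd] at hw
          have : d ^ 2 = 0 := by nlinarith [sq_nonneg w]
          rw [hd, this]; ring
        · exact hd
      exact noSeven b a d hca.symm (by linear_combination -hd')

lemma ell (X Y : ℚ) (h : X * (X ^ 2 - 42 * X - 7) = Y ^ 2) : X = 0 := by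
  have hq : (X.den : ℚ) ≠ 0 := by exact_mod_cast X.den_nz
  have hX : X * X.den = X.num := Rat.mul_den_eq_num X
  have h1 : IsSquare (((X.den : ℤ) * (X.num * (X.num ^ 2 - 42 * X.num * (X.den : ℤ) - 7 * (X.den : ℤ) ^ 2)) : ℤ) : ℚ) := by
    refine ⟨Y * X.den ^ 2, ?_⟩
    push_cast
    rw [← hX]
    linear_combination (X.den : ℚ) ^ 4 * h
  rw [Rat.isSquare_intCast_iff] at h1
  obtain ⟨z, hz⟩ := h1
  have := ell_int X.num X.den z (by exact_mod_cast X.den_pos)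
    (Int.isCoprime_iff_gcd_eq_one.2 X.reduced) (by rw [hz]; ring)
  exact Rat.num_eq_zero.1 this

lemma algebra_part (b c u v d e : ℚ) (hd : d = -7 - b) (he : 2 * (c + e + b * d) = 21 + v ^ 2)
    (h1 : 2 * (b * e + c * d) = 28 + 2 * u * v) (h0 : 2 * c * e = 7 + u ^ 2) : False := by
  have hX : (7 + 2 * (c + e)) * ((7 + 2 * (c + e)) ^ 2 - 42 * (7 + 2 * (c + e)) - 7) =
      (2 * (c * (-v) - b * (-u) + (e * v - d * u))) ^ 2 := by
    subst hd
    have hW : (b * e + c * (-7 - b) - 14) ^ 2 =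
        (2 * (c + e + b * (-7 - b)) - 21) * (2 * c * e - 7) := by
      have i1 : b * e + c * (-7 - b) - 14 = u * v := by linarith
      have i2 : 2 * (c + e + b * (-7 - b)) - 21 = v ^ 2 := by linarith
      have i3 : 2 * c * e - 7 = u ^ 2 := by linarith
      rw [i1, i2, i3]; ring
    linear_combination -8 * hW + 4 * (e - c) ^ 2 * he + 4 * (e - c) * (b - (-7 - b)) * h1 + 4 * (b - (-7 - b)) ^ 2 * h0
  have := ell _ _ hX
  have e' : e = -7 / 2 - c := by linarith
  subst e'
  nlinarith [sq_nonneg u, sq_nonneg (4 * c + 7)]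

/-- **Main theorem for p = 7.** Let `K` be a quadratic field (a field with a
`ℚ`-algebra structure which is 2-dimensional over `ℚ`). If `x, y ∈ K` satisfy
`y² = -(2x⁴ - 14x³ + 21x² + 28x + 7)` (an affine model of the non-split Cartan
modular curve `X_ns(7)`), then `x` is rational, i.e. lies in the image of
`ℚ → K`. Hence `X_ns(7)` has no exceptional quadratic points. -/
theorem no_exceptional_quadratic_points_Xns7
    (K : Type*) [Field K] [Algebra ℚ K] (hK : Module.finrank ℚ K = 2)
    (x y : K) (h : y ^ 2 = -(2 * x ^ 4 - 14 * x ^ 3 + 21 * x ^ 2 + 28 * x + 7)) :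
    x ∈ Set.range (algebraMap ℚ K) := by
  by_contra hx
  have hne : ∀ α β : ℚ, algebraMap ℚ K β * x + algebraMap ℚ K α = 0 → β = 0 ∧ α = 0 := by
    intro α β hh
    have hβ : β = 0 := by
      by_contra hβ
      apply hx
      refine ⟨-α / β, ?_⟩
      have : algebraMap ℚ K β ≠ 0 := (map_ne_zero_iff _ (algebraMap ℚ K).injective).2 hβ
      rw [map_div₀, map_neg, div_eq_iff this]
      linear_combination -hh
    subst hβ
    rw [map_zero, zero_mul, zero_add] at hh
    exact ⟨rfl, (map_eq_zero_iff _ (algebraMap ℚ K).injective).1 hh⟩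
  have hli : LinearIndependent ℚ ![x, (1 : K)] := by
    rw [LinearIndependent.pair_iff]
    intro s t hst
    rw [Algebra.smul_def, Algebra.smul_def, mul_one] at hst
    exact hne t s hst
  have : FiniteDimensional ℚ K := Module.finite_of_finrank_pos (by omega)
  have hspan := hli.span_eq_top_of_card_eq_finrank' (by simp [hK])
  have hrep : ∀ w : K, ∃ s t : ℚ, w = algebraMap ℚ K s * x + algebraMap ℚ K t := by
    intro w
    have hw : w ∈ Submodule.span ℚ (Set.range ![x, (1 : K)]) := by rw [hspan]; trivial
    rw [Matrix.range_cons, Matrix.range_cons, Matrix.range_empty, Set.union_empty,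
      Set.singleton_union, Submodule.mem_span_pair] at hw
    obtain ⟨s, t, hst⟩ := hw
    refine ⟨s, t, ?_⟩
    rw [← hst, Algebra.smul_def, Algebra.smul_def, mul_one]
  obtain ⟨b, c, hbc⟩ := hrep (-x ^ 2)
  obtain ⟨v, u, huv⟩ := hrep y
  obtain ⟨d, hd⟩ : ∃ d : ℚ, d = -7 - b := ⟨_, rfl⟩
  obtain ⟨e, he'⟩ : ∃ e : ℚ, e = (21 + v ^ 2) / 2 - c - b * d := ⟨_, rfl⟩
  have he : 2 * (c + e + b * d) = 21 + v ^ 2 := by rw [he']; ring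
  have hdK := congrArg (algebraMap ℚ K) hd
  have heK := congrArg (algebraMap ℚ K) he
  simp only [map_add, map_sub, map_neg, map_mul, map_pow, map_ofNat] at hdK heK
  obtain ⟨hβ, hα⟩ := hne (7 + u ^ 2 - 2 * c * e) (28 + 2 * u * v - 2 * (b * e + c * d)) (by
    simp only [map_add, map_sub, map_neg, map_mul, map_pow, map_ofNat]
    rw [huv] at h
    linear_combination h + 2 * (x ^ 2 + algebraMap ℚ K d * x + algebraMap ℚ K e) * hbc
      + 2 * x ^ 3 * hdK + x ^ 2 * heK)
  exact algebra_part b c u v d e hd he (by linarith) (by linarith)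
end

section
/- Let K be a quadratic field. If x, y ∈ K satisfy y^2 = -81x^4 + 189x^2 - 112, then x is rational. -/
/-- Square class of the first coordinate on `Y² = m (m² + P m + Q)`. -/
theorem Xns7_core (P Q : ℤ) (m Y : ℚ) (hm : m ≠ 0)
    (h : m * (m ^ 2 + P * m + Q) = Y ^ 2) :
    ∃ D u v w : ℤ, Squarefree D ∧ D ∣ Q ∧ u ≠ 0 ∧ v ≠ 0 ∧ IsCoprime (D * u) v ∧
      m = D * u ^ 2 / v ^ 2 ∧
      D * w ^ 2 = D ^ 2 * u ^ 4 + P * D * u ^ 2 * v ^ 2 + Q * v ^ 4 := by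
  obtain ⟨a, ha⟩ : ∃ a : ℤ, a = m.num := ⟨_, rfl⟩
  obtain ⟨b, hb⟩ : ∃ b : ℤ, b = (m.den : ℤ) := ⟨_, rfl⟩
  have hbpos : 0 < b := by rw [hb]; exact_mod_cast m.den_pos
  have ha0 : a ≠ 0 := by rw [ha]; simpa using hm
  have hbQ : (b : ℚ) ≠ 0 := by exact_mod_cast hbpos.ne'
  have hmab : m = a / b := by
    rw [ha, hb]; push_cast; exact (Rat.num_div_den m).symm
  have hcop : IsCoprime a b := by
    rw [ha, hb, Int.isCoprime_iff_gcd_eq_one]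
    exact m.reduced
  have hN : IsSquare (b * (a * (a ^ 2 + P * a * b + Q * b ^ 2))) := by
    rw [← Rat.isSquare_intCast_iff]
    refine ⟨Y * b ^ 2, ?_⟩
    rw [hmab] at h
    have h2 : Y * (b:ℚ) ^ 2 * (Y * (b:ℚ) ^ 2) = Y ^ 2 * b ^ 4 := by ring
    rw [h2, ← h]; push_cast; field_simp
  obtain ⟨N, hN⟩ := hN
  have hcop2 : IsCoprime b (a * (a ^ 2 + P * a * b + Q * b ^ 2)) := by
    refine IsCoprime.mul_right hcop.symm ?_
    have : a ^ 2 + P * a * b + Q * b ^ 2 = a ^ 2 + b * (P * a + Q * b) := by ring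
    rw [this]
    exact (hcop.symm.pow_right (n := 2)).add_mul_left_right _
  obtain ⟨v, hv⟩ := Int.sq_of_isCoprime hcop2 (hN.trans (sq N).symm)
  have hv : b = v ^ 2 := by
    rcases hv with hv | hv
    · exact hv
    · nlinarith [sq_nonneg v]
  have hv0 : v ≠ 0 := by rintro rfl; simp at hv; omega
  have h1 : v ∣ N := by
    rw [← Int.pow_dvd_pow_iff (n := 2) (by norm_num), ← hv]
    exact ⟨_, (sq N).trans hN.symm⟩
  obtain ⟨N1, rfl⟩ := h1
  have hN1 : a * (a ^ 2 + P * a * b + Q * b ^ 2) = N1 ^ 2 := by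
    apply mul_left_cancel₀ hbpos.ne'
    rw [hN, hv]; ring
  obtain ⟨d, e, hde, hdsq⟩ := Nat.sq_mul_squarefree a.natAbs
  obtain ⟨D, hDa, hDd⟩ : ∃ D : ℤ, a = D * (e:ℤ) ^ 2 ∧ D.natAbs = d := by
    rcases Int.natAbs_eq a with h' | h'
    · exact ⟨d, by rw [h', ← hde]; push_cast; ring, by simp⟩
    · exact ⟨-d, by rw [h', ← hde]; push_cast; ring, by simp⟩
  have hDsq : Squarefree D := by
    rw [← Int.squarefree_natAbs, hDd]; exact hdsq
  have he0 : (e:ℤ) ≠ 0 := by rintro h'; rw [h'] at hDa; simp at hDa; exact ha0 hDa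
  have hD0 : D ≠ 0 := by rintro rfl; simp at hDa; exact ha0 hDa
  have h2 : (e:ℤ) ∣ N1 := by
    rw [← Int.pow_dvd_pow_iff (n := 2) (by norm_num), ← hN1]
    exact Dvd.dvd.mul_right ⟨D, by rw [hDa]; ring⟩ _
  obtain ⟨N2, rfl⟩ := h2
  have hN2 : D * (a ^ 2 + P * a * b + Q * b ^ 2) = N2 ^ 2 := by
    apply mul_left_cancel₀ (pow_ne_zero 2 he0)
    calc (e:ℤ) ^ 2 * (D * (a ^ 2 + P * a * b + Q * b ^ 2))
        = (D * (e:ℤ) ^ 2) * (a ^ 2 + P * a * b + Q * b ^ 2) := by ring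
      _ = _ := by rw [← hDa, hN1]; ring
  have h3 : D ∣ N2 := by
    rw [← hDsq.dvd_pow_iff_dvd (n := 2) (by norm_num), ← hN2]
    exact dvd_mul_right _ _
  obtain ⟨w, rfl⟩ := h3
  have hC : a ^ 2 + P * a * b + Q * b ^ 2 = D * w ^ 2 := by
    apply mul_left_cancel₀ hD0
    rw [hN2]; ring
  have hDdvd : D ∣ a := ⟨_, hDa⟩
  refine ⟨D, e, v, w, hDsq, ?_, he0, hv0, ?_, ?_, ?_⟩
  · have : D ∣ Q * b ^ 2 := by
      have h4 : Q * b ^ 2 = D * w ^ 2 - a * (a + P * b) := by rw [← hC]; ring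
      rw [h4]
      exact dvd_sub (dvd_mul_right _ _) (hDdvd.mul_right _)
    exact ((hcop.of_isCoprime_of_dvd_left hDdvd).pow_right (n := 2)).dvd_of_dvd_mul_right this
  · refine (hcop.of_isCoprime_of_dvd_left ⟨e, by rw [hDa]; ring⟩).of_isCoprime_of_dvd_right
      ⟨v, by rw [hv]; ring⟩
  · rw [hmab, hDa, hv]; push_cast; ring
  · rw [← hC, hDa, hv]; ring

theorem Xns7_seven {x y : ℤ} (h : (7:ℤ) ∣ x ^ 2 + y ^ 2) : (7:ℤ) ∣ x ∧ (7:ℤ) ∣ y := by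
  have key : ∀ a b : ZMod 7, a ^ 2 + b ^ 2 = 0 → a = 0 ∧ b = 0 := by decide
  have := key x y (by
    have := (ZMod.intCast_zmod_eq_zero_iff_dvd (x ^ 2 + y ^ 2) 7).2 (by exact_mod_cast h)
    push_cast at this; exact this)
  exact ⟨by exact_mod_cast (ZMod.intCast_zmod_eq_zero_iff_dvd x 7).1 this.1,
    by exact_mod_cast (ZMod.intCast_zmod_eq_zero_iff_dvd y 7).1 this.2⟩

theorem Xns7_seven_prime : Prime (7:ℤ) := by
  have : Nat.Prime 7 := by norm_num
  exact_mod_cast Nat.prime_iff_prime_int.1 this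

theorem Xns7_E (m Y : ℚ) (hm : m ≠ 0) (h : m * (m ^ 2 - 42 * m - 7) = Y ^ 2) :
    ∃ e : ℚ, e ≠ 0 ∧ (m = e ^ 2 ∨ m = -7 * e ^ 2) := by
  obtain ⟨D, u, v, w, -, hD, hu, hv, hc, hmD, heq⟩ :=
    Xns7_core (-42) (-7) m Y hm (by rw [← h]; push_cast; ring)
  have huQ : (u:ℚ) ≠ 0 := by exact_mod_cast hu
  have hvQ : (v:ℚ) ≠ 0 := by exact_mod_cast hv
  refine ⟨u / v, div_ne_zero huQ hvQ, ?_⟩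
  have hD7 : D ∣ 7 := by simpa using hD
  have hle := Int.le_of_dvd (by norm_num) hD7
  have hge := Int.le_of_dvd (by norm_num) (neg_dvd.2 hD7)
  have hD' : D = 1 ∨ D = -1 ∨ D = 7 ∨ D = -7 := by
    have : -7 ≤ D := by omega
    clear heq hmD hc hD h
    interval_cases D <;> first | omega | (revert hD7; decide)
  have h7 : ¬ IsUnit (7:ℤ) := Xns7_seven_prime.not_isUnit
  rcases hD' with rfl | rfl | rfl | rfl
  · left; rw [hmD]; push_cast; field_simp
  · exfalso
    have h1 : (7:ℤ) ∣ (u ^ 2) ^ 2 + w ^ 2 :=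
      ⟨-6 * u ^ 2 * v ^ 2 + v ^ 4, by linear_combination -heq⟩
    obtain ⟨⟨a, ha⟩, c, hc'⟩ := Xns7_seven h1
    obtain ⟨u', rfl⟩ := Xns7_seven_prime.dvd_of_dvd_pow ⟨a, ha⟩
    have h2 : (7:ℤ) ∣ v ^ 4 := ⟨7 ^ 2 * u' ^ 4 + 6 * 7 * u' ^ 2 * v ^ 2 + c ^ 2, by
      subst hc'; linarith⟩
    have h3 := Xns7_seven_prime.dvd_of_dvd_pow h2
    exact h7 (hc.isUnit_of_dvd' ⟨-u', by ring⟩ h3)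
  · exfalso
    have h1 : (7:ℤ) ∣ (v ^ 2) ^ 2 + w ^ 2 :=
      ⟨u ^ 4 - 6 * u ^ 2 * v ^ 2, by linarith⟩
    obtain ⟨h2, -⟩ := Xns7_seven h1
    have h3 := Xns7_seven_prime.dvd_of_dvd_pow h2
    exact h7 (hc.isUnit_of_dvd' ⟨u, by ring⟩ h3)
  · right; rw [hmD]; push_cast; field_simp

theorem Xns7_sq_mod (x : ℤ) (h : x % 2 = 1) : x ^ 2 % 8 = 1 := by
  have : x % 8 = 1 ∨ x % 8 = 3 ∨ x % 8 = 5 ∨ x % 8 = 7 := by omega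
  rcases this with h | h | h | h <;> simp [pow_two, Int.mul_emod, h]

theorem Xns7_sq_mod' (x : ℤ) : x ^ 2 % 8 = 0 ∨ x ^ 2 % 8 = 1 ∨ x ^ 2 % 8 = 4 := by
  have : x % 8 = 0 ∨ x % 8 = 1 ∨ x % 8 = 2 ∨ x % 8 = 3 ∨ x % 8 = 4 ∨ x % 8 = 5 ∨ x % 8 = 6
    ∨ x % 8 = 7 := by omega
  rcases this with h | h | h | h | h | h | h | h <;> simp [pow_two, Int.mul_emod, h]

/-- The local obstruction at two. -/
theorem Xns7_two (A B u v w : ℤ) (hv : v % 2 = 1)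
    (hAB : (A = 2 ∧ B = 56) ∨ (A = 14 ∧ B = 8))
    (h : w ^ 2 = A * u ^ 4 + 21 * u ^ 2 * v ^ 2 + B * v ^ 4) : False := by
  have hv2 := Xns7_sq_mod v hv
  obtain ⟨k, hk⟩ : ∃ k, v ^ 2 = 8 * k + 1 := ⟨v ^ 2 / 8, by omega⟩
  have hv4 : v ^ 4 = (8 * k + 1) ^ 2 := by rw [← hk]; ring
  rcases Int.even_or_odd u with ⟨u', hu⟩ | hu
  · have hw : (2:ℤ) ∣ w := by
      apply Int.prime_two.dvd_of_dvd_pow (n := 2)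
      rw [h, hu]
      rcases hAB with ⟨rfl, rfl⟩ | ⟨rfl, rfl⟩
      · exact ⟨16 * u' ^ 4 + 42 * u' ^ 2 * v ^ 2 + 28 * v ^ 4, by ring⟩
      · exact ⟨112 * u' ^ 4 + 42 * u' ^ 2 * v ^ 2 + 4 * v ^ 4, by ring⟩
    obtain ⟨w', rfl⟩ := hw
    have h' : 4 * w' ^ 2 = A * (16 * u' ^ 4) + 84 * u' ^ 2 * v ^ 2 + B * v ^ 4 := by
      rw [hu] at h; linarith
    have hw' := Xns7_sq_mod' w'
    rw [hv4, hk] at h'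
    rcases Int.even_or_odd u' with ⟨t, ht⟩ | hu'
    · rw [ht] at h'
      rcases hAB with ⟨rfl, rfl⟩ | ⟨rfl, rfl⟩ <;> ring_nf at h' hw' <;> omega
    · have := Xns7_sq_mod u' (Int.odd_iff.1 hu')
      obtain ⟨l, hl⟩ : ∃ l, u' ^ 2 = 8 * l + 1 := ⟨u' ^ 2 / 8, by omega⟩
      have hl4 : u' ^ 4 = (8 * l + 1) ^ 2 := by rw [← hl]; ring
      rw [hl4, hl] at h'
      rcases hAB with ⟨rfl, rfl⟩ | ⟨rfl, rfl⟩ <;> ring_nf at h' hw' <;> omega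
  · have := Xns7_sq_mod u (Int.odd_iff.1 hu)
    obtain ⟨l, hl⟩ : ∃ l, u ^ 2 = 8 * l + 1 := ⟨u ^ 2 / 8, by omega⟩
    have hl4 : u ^ 4 = (8 * l + 1) ^ 2 := by rw [← hl]; ring
    have hw' := Xns7_sq_mod' w
    rw [hl4, hl, hv4, hk] at h
    rcases hAB with ⟨rfl, rfl⟩ | ⟨rfl, rfl⟩ <;> ring_nf at h hw' <;> omega

theorem Xns7_E' (m Y : ℚ) (hm : m ≠ 0) (h : m * (m ^ 2 + 21 * m + 112) = Y ^ 2) :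
    ∃ e : ℚ, e ≠ 0 ∧ (m = e ^ 2 ∨ m = 7 * e ^ 2) := by
  have hmpos : 0 < m := by
    have h1 : 0 < m ^ 2 + 21 * m + 112 := by nlinarith [sq_nonneg (m + 21 / 2)]
    by_contra hneg
    have : m < 0 := lt_of_le_of_ne (not_lt.1 hneg) hm
    nlinarith [sq_nonneg Y, mul_pos (neg_pos.2 this) h1]
  obtain ⟨D, u, v, w, hsq, hD, hu, hv, hc, hmD, heq⟩ :=
    Xns7_core 21 112 m Y hm (by rw [← h]; push_cast; ring)
  have huQ : (u:ℚ) ≠ 0 := by exact_mod_cast hu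
  have hvQ : (v:ℚ) ≠ 0 := by exact_mod_cast hv
  refine ⟨u / v, div_ne_zero huQ hvQ, ?_⟩
  have hDpos : 0 < D := by
    by_contra hneg
    have h1 : (D:ℚ) ≤ 0 := by exact_mod_cast not_lt.1 hneg
    have h2 : (D:ℚ) * u ^ 2 / v ^ 2 ≤ 0 :=
      div_nonpos_of_nonpos_of_nonneg (mul_nonpos_of_nonpos_of_nonneg h1 (sq_nonneg _))
        (sq_nonneg _)
    linarith
  have hD14 : D ∣ 14 := by
    rw [← hsq.dvd_pow_iff_dvd (n := 4) (by norm_num)]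
    exact hD.trans ⟨343, by norm_num⟩
  have hle := Int.le_of_dvd (by norm_num) hD14
  have hD' : D = 1 ∨ D = 2 ∨ D = 7 ∨ D = 14 := by
    clear heq hmD hc hD h hsq
    interval_cases D <;> omega
  have hodd : (2:ℤ) ∣ D → v % 2 = 1 := by
    intro h2
    by_contra hne
    exact Int.prime_two.not_isUnit (hc.isUnit_of_dvd' (h2.mul_right _) (by omega))
  rcases hD' with rfl | rfl | rfl | rfl
  · left; rw [hmD]; push_cast; field_simp
  · exact (Xns7_two 2 56 u v w (hodd (by norm_num)) (by simp) (by linarith)).elim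
  · right; rw [hmD]; push_cast; field_simp
  · exact (Xns7_two 14 8 u v w (hodd (by norm_num)) (by simp) (by linarith)).elim

/-- Growth of the numerator under duplication. -/
theorem Xns7_height (a b c p q : ℤ) (hb : b ≠ 0) (hq : q ≠ 0) (hab : IsCoprime a b)
    (hpq : IsCoprime p q) (hc : c ^ 2 = a ^ 4 - 42 * a ^ 2 * b ^ 2 - 7 * b ^ 4)
    (h : p * (2 * a * b * c) = q * (a ^ 4 + 7 * b ^ 4)) : a.natAbs < p.natAbs := by
  have h7a : ¬ (7:ℤ) ∣ a := by
    rintro ⟨a', rfl⟩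
    have h1 : (7:ℤ) ∣ c := Xns7_seven_prime.dvd_of_dvd_pow (n := 2)
      ⟨343 * a' ^ 4 - 294 * a' ^ 2 * b ^ 2 - b ^ 4, by rw [hc]; ring⟩
    obtain ⟨c', rfl⟩ := h1
    have h2 : (7:ℤ) ∣ b := Xns7_seven_prime.dvd_of_dvd_pow (n := 4)
      ⟨49 * a' ^ 4 - 42 * a' ^ 2 * b ^ 2 - c' ^ 2, by linarith⟩
    exact Xns7_seven_prime.not_isUnit (hab.isUnit_of_dvd' (dvd_mul_right _ _) h2)
  have hcop : ∀ n : ℤ, n ∣ a ^ 4 + 7 * b ^ 4 → n % 2 = 1 → IsCoprime n (2 * a * b * c) := by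
    intro n hn hodd
    refine isCoprime_of_prime_dvd (by rintro ⟨rfl, -⟩; simp at hodd) ?_
    intro l hl hln hl2
    have hlN := hln.trans hn
    have nab : l ∣ a → l ∣ b → False := fun h1 h2 => hl.not_isUnit (hab.isUnit_of_dvd' h1 h2)
    have n2 : ¬ l ∣ 2 := by
      intro h2
      have h3 : Associated l 2 := hl.associated_of_dvd Int.prime_two h2
      have := h3.symm.dvd.trans hln
      omega
    have n7 : ¬ l ∣ 7 := by
      intro h2
      have h3 : Associated l 7 := hl.associated_of_dvd Xns7_seven_prime h2
      have h4 : (7:ℤ) ∣ a ^ 4 := by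
        have := dvd_sub (h3.symm.dvd.trans hlN) (dvd_mul_right 7 (b ^ 4))
        simpa using this
      exact h7a (Xns7_seven_prime.dvd_of_dvd_pow h4)
    have na : ¬ l ∣ a := by
      intro h2
      have h3 : l ∣ 7 * b ^ 4 := (dvd_add_right (dvd_pow h2 (by norm_num))).1 hlN
      rcases hl.dvd_or_dvd h3 with h3 | h3
      · exact n7 h3
      · exact nab h2 (hl.dvd_of_dvd_pow h3)
    have nb : ¬ l ∣ b := by
      intro h2
      have h3 : l ∣ a ^ 4 :=
        (dvd_add_left ((dvd_pow h2 (by norm_num : 4 ≠ 0)).mul_left 7)).1 hlN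
      exact na (hl.dvd_of_dvd_pow h3)
    have nc : ¬ l ∣ c := by
      intro h2
      have h3 : l ∣ 2 * 7 * b ^ 2 * (3 * a ^ 2 + b ^ 2) := by
        have h4 : 2 * 7 * b ^ 2 * (3 * a ^ 2 + b ^ 2) = (a ^ 4 + 7 * b ^ 4) - c ^ 2 := by
          rw [hc]; ring
        rw [h4]
        exact dvd_sub hlN (dvd_pow h2 (by norm_num))
      rcases hl.dvd_or_dvd h3 with h3 | h3
      · rcases hl.dvd_or_dvd h3 with h3 | h3
        · rcases hl.dvd_or_dvd h3 with h3 | h3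
          · exact n2 h3
          · exact n7 h3
        · exact nb (hl.dvd_of_dvd_pow h3)
      · have h4 : l ∣ 2 ^ 6 * a ^ 4 := by
          have h5 : 2 ^ 6 * a ^ 4 = (a ^ 4 + 7 * b ^ 4)
            + (3 * a ^ 2 + b ^ 2) * (7 * (3 * a ^ 2 - b ^ 2)) := by ring
          rw [h5]
          exact dvd_add hlN (h3.mul_right _)
        rcases hl.dvd_or_dvd h4 with h4 | h4
        · exact n2 (hl.dvd_of_dvd_pow h4)
        · exact na (hl.dvd_of_dvd_pow h4)
    rcases hl.dvd_or_dvd hl2 with h3 | h3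
    · rcases hl.dvd_or_dvd h3 with h3 | h3
      · rcases hl.dvd_or_dvd h3 with h3 | h3
        · exact n2 h3
        · exact na h3
      · exact nb h3
    · exact nc h3
  have hb2 : 0 < b ^ 2 := by positivity
  have hNpos : 0 < a ^ 4 + 7 * b ^ 4 := by positivity
  have hp0 : p ≠ 0 := by
    rintro rfl
    rw [zero_mul] at h
    rcases mul_eq_zero.1 h.symm with h | h
    · exact hq h
    · omega
  have hdiv : ∀ n : ℤ, n ∣ a ^ 4 + 7 * b ^ 4 → n % 2 = 1 → n ≤ |p| := by
    intro n hn hodd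
    have h1 : n ∣ p * (2 * a * b * c) := by rw [h]; exact hn.mul_left _
    have h2 := (hcop n hn hodd).dvd_of_dvd_mul_right h1
    exact Int.le_of_dvd (abs_pos.2 hp0) ((dvd_abs _ _).2 h2)
  have hbig : a ^ 4 + 7 * b ^ 4 ≤ 8 * |p| := by
    by_cases hodd : (a ^ 4 + 7 * b ^ 4) % 2 = 1
    · have := hdiv _ dvd_rfl hodd
      have := abs_nonneg p
      linarith
    · have ho : a % 2 = 1 ∧ b % 2 = 1 := by
        have e1 : (a ^ 4 + 7 * b ^ 4) % 2 = (a + b) % 2 := by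
          rcases Int.emod_two_eq_zero_or_one a with h1 | h1 <;>
          rcases Int.emod_two_eq_zero_or_one b with h2 | h2 <;>
          simp [Int.add_emod, Int.mul_emod, pow_succ, h1, h2]
        by_contra hne
        have h1 : a % 2 = 0 ∧ b % 2 = 0 := by omega
        exact Int.prime_two.not_isUnit (hab.isUnit_of_dvd' (by omega) (by omega))
      obtain ⟨k, hk⟩ : ∃ k, a ^ 2 = 8 * k + 1 :=
        ⟨a ^ 2 / 8, by have := Xns7_sq_mod a ho.1; omega⟩
      obtain ⟨l, hl⟩ : ∃ l, b ^ 2 = 8 * l + 1 :=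
        ⟨b ^ 2 / 8, by have := Xns7_sq_mod b ho.2; omega⟩
      have e : a ^ 4 + 7 * b ^ 4
          = 8 * (2 * (4 * k ^ 2 + k + 7 * (4 * l ^ 2 + l)) + 1) := by
        calc a ^ 4 + 7 * b ^ 4 = (a ^ 2) ^ 2 + 7 * (b ^ 2) ^ 2 := by ring
          _ = _ := by rw [hk, hl]; ring
      have := hdiv (2 * (4 * k ^ 2 + k + 7 * (4 * l ^ 2 + l)) + 1)
        ⟨8, by rw [e]; ring⟩ (by omega)
      rw [e]; linarith
  have ha42 : 42 < a ^ 2 := by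
    by_contra hle
    nlinarith [sq_nonneg c, sq_nonneg a, mul_pos hb2 hb2, mul_nonneg (sq_nonneg a) hb2.le]
  have habs : 7 ≤ |a| := by
    by_contra hlt
    have : |a| ≤ 6 := by omega
    nlinarith [sq_abs a, abs_nonneg a]
  have hlt : |a| < |p| := by
    have h4 : a ^ 4 = |a| ^ 4 := by rw [show (4:ℕ) = 2 * 2 from rfl, pow_mul, pow_mul, sq_abs]
    have h3 : 49 ≤ |a| ^ 2 := by nlinarith
    have h5 : 343 * |a| ≤ |a| ^ 4 := by nlinarith
    nlinarith [sq_nonneg (b ^ 2)]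
  rw [Int.abs_eq_natAbs, Int.abs_eq_natAbs] at hlt
  exact_mod_cast hlt

theorem Xns7_descent (n : ℕ) : ∀ z w : ℚ, z.num.natAbs = n →
    w ^ 2 = z ^ 4 - 42 * z ^ 2 - 7 → False := by
  induction n using Nat.strong_induction_on with
  | _ n ih =>
  intro z w hn h
  have hz : z ≠ 0 := by rintro rfl; nlinarith [sq_nonneg w]
  -- first isogeny
  obtain ⟨r, hr, hr2⟩ : ∃ r : ℚ, r ≠ 0 ∧ z ^ 2 * r ^ 2 = r ^ 4 + 21 * r ^ 2 + 112 := by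
    have hX : (z ^ 2 - 21 + w) / 2 ≠ 0 := by
      intro h0
      have : w = 21 - z ^ 2 := by linarith
      rw [this] at h; nlinarith
    have hrel : ((z ^ 2 - 21 + w) / 2) ^ 2 + 21 * ((z ^ 2 - 21 + w) / 2) + 112
        = z ^ 2 * ((z ^ 2 - 21 + w) / 2) := by linear_combination (1 / 4) * h
    generalize (z ^ 2 - 21 + w) / 2 = X at hX hrel
    obtain ⟨e, he, rfl | rfl⟩ := Xns7_E' X (z * X) hX (by rw [hrel]; ring)
    · exact ⟨e, he, by linear_combination -hrel⟩
    · refine ⟨4 / e, by positivity, ?_⟩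
      field_simp
      linear_combination (-16 / 7) * hrel
  -- second isogeny
  obtain ⟨z1, e, hz1, he, h1, h2⟩ : ∃ z1 e : ℚ, z1.num.natAbs = n ∧ e ≠ 0 ∧
      4 * r ^ 2 * e ^ 2 = e ^ 4 - 42 * e ^ 2 - 7 ∧ 4 * z1 * r * e ^ 2 = e ^ 4 + 7 := by
    have hB : (2 * r ^ 2 + 21 + 2 * z * r) * (2 * r ^ 2 + 21 - 2 * z * r) = -7 := by
      linear_combination -4 * hr2
    obtain ⟨B, hBd⟩ : ∃ B, B = 2 * r ^ 2 + 21 + 2 * z * r := ⟨_, rfl⟩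
    have hB0 : B ≠ 0 := by
      intro h0; rw [← hBd, h0] at hB; norm_num at hB
    have hrel : B ^ 2 - 42 * B - 7 = 4 * r ^ 2 * B := by
      rw [hBd]; linear_combination -hB
    have hrel2 : 4 * z * r * B = B ^ 2 + 7 := by
      rw [hBd]; linear_combination -hB
    obtain ⟨e, he, rfl | rfl⟩ := Xns7_E B (2 * r * B) hB0 (by rw [hrel]; ring)
    · exact ⟨z, e, hn, he, by linear_combination -hrel, by linear_combination hrel2⟩
    · refine ⟨-z, 1 / e, by simpa using hn, by positivity, ?_, ?_⟩
      · field_simp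
        linear_combination (1 / 7) * hrel
      · field_simp
        linear_combination (1 / 7) * hrel2
  have hc : (2 * r * e) ^ 2 = e ^ 4 - 42 * e ^ 2 - 7 := by linear_combination h1
  refine ih e.num.natAbs ?_ e (2 * r * e) rfl hc
  rw [← hz1]
  obtain ⟨c, hcdef⟩ : ∃ c, c = 2 * r * e := ⟨_, rfl⟩
  rw [← hcdef] at hc
  have hzc : z1 * (2 * c * e) = e ^ 4 + 7 := by rw [hcdef]; linear_combination h2
  have hed : (e.den : ℚ) ≠ 0 := by exact_mod_cast e.den_nz
  have hzd : (z1.den : ℚ) ≠ 0 := by exact_mod_cast z1.den_nz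
  have hee : e * e.den = e.num := Rat.mul_den_eq_num e
  have hzz : z1 * z1.den = z1.num := Rat.mul_den_eq_num z1
  have hsq : IsSquare (e.num ^ 4 - 42 * e.num ^ 2 * (e.den:ℤ) ^ 2 - 7 * (e.den:ℤ) ^ 4) := by
    rw [← Rat.isSquare_intCast_iff]
    refine ⟨c * e.den ^ 2, ?_⟩
    push_cast
    rw [← hee]
    linear_combination -(e.den:ℚ) ^ 4 * hc
  obtain ⟨c0, hc0⟩ := hsq
  have hcc : c * e.den ^ 2 = c0 ∨ c * e.den ^ 2 = -c0 := by
    rw [← sq_eq_sq_iff_eq_or_eq_neg]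
    have : (c0:ℚ) ^ 2 = e.num ^ 4 - 42 * e.num ^ 2 * (e.den:ℚ) ^ 2 - 7 * (e.den:ℚ) ^ 4 := by
      rw [sq]; exact_mod_cast hc0.symm
    rw [this, ← hee]
    linear_combination (e.den:ℚ) ^ 4 * hc
  obtain ⟨c1, hc1, hc1'⟩ : ∃ c1 : ℤ, c * e.den ^ 2 = c1 ∧ c1 ^ 2 = c0 * c0 := by
    rcases hcc with h | h
    · exact ⟨c0, h, by ring⟩
    · exact ⟨-c0, by rw [h]; push_cast; ring, by ring⟩
  refine Xns7_height e.num e.den c1 z1.num z1.den (by exact_mod_cast e.den_nz)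
    (by exact_mod_cast z1.den_nz) ?_ ?_ (hc1'.trans hc0.symm) ?_
  · rw [Int.isCoprime_iff_gcd_eq_one]; exact e.reduced
  · rw [Int.isCoprime_iff_gcd_eq_one]; exact z1.reduced
  · have : (z1.num:ℚ) * (2 * e.num * e.den * c1)
        = z1.den * (e.num ^ 4 + 7 * (e.den:ℚ) ^ 4) := by
      rw [← hc1, ← hee, ← hzz]
      linear_combination (z1.den:ℚ) * (e.den:ℚ) ^ 4 * hzc
    exact_mod_cast this

/-- Let `K` be a quadratic field (a field with a `ℚ`-algebra structure which is
2-dimensional over `ℚ`). If `x, y ∈ K` satisfy `y² = -81x⁴ + 189x² - 112`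
(the affine patch `Z = 1` of the model of the non-split Cartan modular curve
`X_ns(7)` in weighted projective space), then `x` is rational. -/
theorem quadratic_points_Xns7_newModel
    (K : Type*) [Field K] [Algebra ℚ K] (hK : Module.finrank ℚ K = 2)
    (x y : K) (h : y ^ 2 = -81 * x ^ 4 + 189 * x ^ 2 - 112) :
    x ∈ Set.range (algebraMap ℚ K) := by
  by_contra hx
  have hind : ∀ a b : ℚ, algebraMap ℚ K a * x + algebraMap ℚ K b = 0 → a = 0 ∧ b = 0 := by
    intro a b hab
    have ha : a = 0 := by
      by_contra ha
      apply hx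
      refine ⟨-b / a, ?_⟩
      have ha' : algebraMap ℚ K a ≠ 0 := (map_ne_zero _).2 ha
      rw [map_div₀, map_neg, div_eq_iff ha']
      linear_combination -hab
    refine ⟨ha, ?_⟩
    rw [ha, map_zero, zero_mul, zero_add] at hab
    exact (map_eq_zero _).1 hab
  have hli : LinearIndependent ℚ ![x, 1] := by
    rw [LinearIndependent.pair_iff]
    intro a b hab
    apply hind
    simpa [Algebra.smul_def] using hab
  have hspan := hli.span_eq_top_of_card_eq_finrank (by simp [hK])
  have hrep : ∀ k : K, ∃ a b : ℚ, k = algebraMap ℚ K a * x + algebraMap ℚ K b := by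
    intro k
    have hk : k ∈ Submodule.span ℚ (Set.range ![x, 1]) := by rw [hspan]; trivial
    rw [Matrix.range_cons, Matrix.range_cons, Matrix.range_empty, Set.union_empty,
      Set.singleton_union, Submodule.mem_span_pair] at hk
    obtain ⟨a, b, hab⟩ := hk
    exact ⟨a, b, by rw [← hab]; simp [Algebra.smul_def]⟩
  obtain ⟨p, q, hy⟩ := hrep y
  obtain ⟨s, t, hx2⟩ := hrep (x ^ 2)
  obtain ⟨e1, e2⟩ := hind (p ^ 2 * s + 2 * p * q + 81 * (s ^ 3 + 2 * s * t) - 189 * s)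
    (p ^ 2 * t + q ^ 2 + 81 * (s ^ 2 * t + t ^ 2) - 189 * t + 112) (by
      simp only [map_add, map_sub, map_mul, map_pow, map_ofNat]
      rw [hy] at h
      generalize algebraMap ℚ K p = p at *
      generalize algebraMap ℚ K q = q at *
      generalize algebraMap ℚ K s = s at *
      generalize algebraMap ℚ K t = t at *
      linear_combination h - (p ^ 2 + 81 * (x ^ 2 + s * x + t + s ^ 2) - 189) * hx2)
  have hE : (p ^ 2 + 81 * s ^ 2) * ((p ^ 2 + 81 * s ^ 2) ^ 2 - 378 * (p ^ 2 + 81 * s ^ 2) - 567)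
      = (162 * q * s - p * (162 * t - 189 + (p ^ 2 + 81 * s ^ 2))) ^ 2 := by
    linear_combination 81 * (p ^ 2 * s + 2 * p * q + 81 * (s ^ 3 + 2 * s * t) - 189 * s) * e1
      - 324 * (p ^ 2 + 81 * s ^ 2) * e2
  by_cases hmu : p ^ 2 + 81 * s ^ 2 = 0
  · have hp : p = 0 := by nlinarith [sq_nonneg p, sq_nonneg s]
    have hs : s = 0 := by nlinarith [sq_nonneg p, sq_nonneg s]
    rw [hp, hs] at e2
    nlinarith [sq_nonneg q, sq_nonneg (t - 7 / 6)]
  · have hpos : 0 < p ^ 2 + 81 * s ^ 2 := lt_of_le_of_ne (by positivity) (Ne.symm hmu)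
    generalize p ^ 2 + 81 * s ^ 2 = μ at *
    generalize 162 * q * s - p * (162 * t - 189 + μ) = Y at *
    have hE' : (μ / 9) * ((μ / 9) ^ 2 - 42 * (μ / 9) - 7) = (Y / 27) ^ 2 := by
      linear_combination (1 / 729) * hE
    obtain ⟨e, he, h1 | h1⟩ := Xns7_E (μ / 9) (Y / 27) (by positivity) hE'
    · rw [h1] at hE'
      refine Xns7_descent _ e (Y / 27 / e) rfl ?_
      rw [div_pow, ← hE']
      field_simp
    · have : 0 < e ^ 2 := by positivity
      linarith
end

section
/- The conic C ⊆ ℙ^2 given by Y^2 = -81X^2 + 189XZ - 112Z^2 has no rational points: there is no triple (X, Y, Z) ∈ ℚ^3 with (X, Y, Z) ≠ (0, 0, 0) satisfying Y^2 = -81X^2 + 189XZ - 112Z^2. -/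
/-- The conic `C ⊆ ℙ²` given by `Y² = -81X² + 189XZ - 112Z²` has no rational
points: there is no nonzero triple `(X, Y, Z) ∈ ℚ³` satisfying the equation. -/
theorem conic_has_no_rational_points :
    ¬ ∃ X Y Z : ℚ, (X, Y, Z) ≠ (0, 0, 0) ∧
      Y ^ 2 = -81 * X ^ 2 + 189 * X * Z - 112 * Z ^ 2 := by
  rintro ⟨X, Y, Z, hne, h⟩
  -- Completing the square: the form is negative definite.
  have key : Y ^ 2 + (9 * X - 21 / 2 * Z) ^ 2 + 7 / 4 * Z ^ 2 = 0 := by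
    rw [h]; ring
  have h1 := sq_nonneg Y
  have h2 := sq_nonneg (9 * X - 21 / 2 * Z)
  have h3 := sq_nonneg Z
  have hY : Y = 0 := pow_eq_zero_iff (two_ne_zero) |>.mp (by linarith : Y ^ 2 = 0)
  have hZ : Z = 0 := pow_eq_zero_iff (two_ne_zero) |>.mp (by linarith : Z ^ 2 = 0)
  have hW : 9 * X - 21 / 2 * Z = 0 :=
    pow_eq_zero_iff (two_ne_zero) |>.mp (by linarith : (9 * X - 21 / 2 * Z) ^ 2 = 0)
  have hX : X = 0 := by linarith
  exact hne (by rw [hX, hY, hZ])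
end

section
/- Let K be a quadratic field. If u, v, w ∈ K satisfy both v^2 + v = u^3 - u^2 - 7u + 10 and w^2 = -(4u^3 + 7u^2 - 6u + 19), then u is rational and v is rational. (This is the main theorem for p = 11: every quadratic point on this affine model of X_ns(11) maps under the degeneracy map (u,v,w) ↦ (u,v) to a rational point of X_ns^+(11), i.e. X_ns(11) has no exceptional quadratic points.) -/
namespace Xns11

/-- The cubic ring `ℤ[α]`, `α³ + α² + 4α - 2 = 0`, in coordinates `1, α, α²`. -/
@[ext] structure Za where
  x : ℤ
  y : ℤ
  z : ℤ

namespace Za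

instance : Zero Za := ⟨⟨0, 0, 0⟩⟩
instance : One Za := ⟨⟨1, 0, 0⟩⟩
instance : Add Za := ⟨fun a b => ⟨a.x + b.x, a.y + b.y, a.z + b.z⟩⟩
instance : Neg Za := ⟨fun a => ⟨-a.x, -a.y, -a.z⟩⟩
instance : Sub Za := ⟨fun a b => ⟨a.x - b.x, a.y - b.y, a.z - b.z⟩⟩
instance : Mul Za := ⟨fun a b =>
  ⟨a.x * b.x + 2 * (a.y * b.z + a.z * b.y) - 2 * (a.z * b.z),
   a.x * b.y + a.y * b.x - 4 * (a.y * b.z + a.z * b.y) + 6 * (a.z * b.z),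
   a.x * b.z + a.y * b.y + a.z * b.x - (a.y * b.z + a.z * b.y) - 3 * (a.z * b.z)⟩⟩

@[simp] theorem zero_x : (0 : Za).x = 0 := rfl
@[simp] theorem zero_y : (0 : Za).y = 0 := rfl
@[simp] theorem zero_z : (0 : Za).z = 0 := rfl
@[simp] theorem one_x : (1 : Za).x = 1 := rfl
@[simp] theorem one_y : (1 : Za).y = 0 := rfl
@[simp] theorem one_z : (1 : Za).z = 0 := rfl
@[simp] theorem add_x (a b : Za) : (a + b).x = a.x + b.x := rfl
@[simp] theorem add_y (a b : Za) : (a + b).y = a.y + b.y := rfl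
@[simp] theorem add_z (a b : Za) : (a + b).z = a.z + b.z := rfl
@[simp] theorem neg_x (a : Za) : (-a).x = -a.x := rfl
@[simp] theorem neg_y (a : Za) : (-a).y = -a.y := rfl
@[simp] theorem neg_z (a : Za) : (-a).z = -a.z := rfl
@[simp] theorem sub_x (a b : Za) : (a - b).x = a.x - b.x := rfl
@[simp] theorem sub_y (a b : Za) : (a - b).y = a.y - b.y := rfl
@[simp] theorem sub_z (a b : Za) : (a - b).z = a.z - b.z := rfl
@[simp] theorem mul_x (a b : Za) : (a * b).x =
  a.x * b.x + 2 * (a.y * b.z + a.z * b.y) - 2 * (a.z * b.z) := rfl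
@[simp] theorem mul_y (a b : Za) : (a * b).y =
  a.x * b.y + a.y * b.x - 4 * (a.y * b.z + a.z * b.y) + 6 * (a.z * b.z) := rfl
@[simp] theorem mul_z (a b : Za) : (a * b).z =
  a.x * b.z + a.y * b.y + a.z * b.x - (a.y * b.z + a.z * b.y) - 3 * (a.z * b.z) := rfl

instance : CommRing Za where
  add_assoc a b c := by ext <;> simp <;> ring
  zero_add a := by ext <;> simp
  add_zero a := by ext <;> simp
  add_comm a b := by ext <;> simp <;> ring
  neg_add_cancel a := by ext <;> simp
  sub_eq_add_neg a b := by ext <;> simp <;> ring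
  mul_assoc a b c := by ext <;> simp <;> ring
  one_mul a := by ext <;> simp
  mul_one a := by ext <;> simp
  zero_mul a := by ext <;> simp
  mul_zero a := by ext <;> simp
  left_distrib a b c := by ext <;> simp <;> ring
  right_distrib a b c := by ext <;> simp <;> ring
  mul_comm a b := by ext <;> simp <;> ring
  nsmul := nsmulRec
  zsmul := zsmulRec

/-- The integer `n` as an element of the ring. -/
def C (n : ℤ) : Za := ⟨n, 0, 0⟩

@[simp] theorem C_x (n : ℤ) : (C n).x = n := rfl
@[simp] theorem C_y (n : ℤ) : (C n).y = 0 := rfl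
@[simp] theorem C_z (n : ℤ) : (C n).z = 0 := rfl

/-- The norm. -/
def N (a : Za) : ℤ :=
  a.x ^ 3 - a.x ^ 2 * a.y - 7 * a.x ^ 2 * a.z + 4 * a.x * a.y ^ 2 - 10 * a.x * a.y * a.z
    + 20 * a.x * a.z ^ 2 + 2 * a.y ^ 3 - 2 * a.y ^ 2 * a.z + 8 * a.y * a.z ^ 2 + 4 * a.z ^ 3

/-- The cofactor: `a * adj a = N a`. -/
def adj (a : Za) : Za :=
  ⟨a.x ^ 2 - a.x * a.y - 7 * a.x * a.z + 4 * a.y ^ 2 - 6 * a.y * a.z + 18 * a.z ^ 2,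
   -a.x * a.y + a.y ^ 2 - a.y * a.z + 6 * a.z ^ 2,
   -a.x * a.z + a.y ^ 2 - a.y * a.z + 4 * a.z ^ 2⟩

theorem mul_adj (a : Za) : a * adj a = C (N a) := by
  ext <;> simp [adj, N] <;> ring

theorem N_mul (a b : Za) : N (a * b) = N a * N b := by
  simp only [N, mul_x, mul_y, mul_z]; ring

theorem C_mul (m n : ℤ) : C (m * n) = C m * C n := by
  ext <;> simp

theorem C_add (m n : ℤ) : C (m + n) = C m + C n := by
  ext <;> simp

theorem N_C (n : ℤ) : N (C n) = n ^ 3 := by simp [N]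

theorem C_mul_eq_zero {n : ℤ} (hn : n ≠ 0) {b : Za} (h : C n * b = 0) : b = 0 := by
  have hx := congrArg Za.x h
  have hy := congrArg Za.y h
  have hz := congrArg Za.z h
  simp [hn] at hx hy hz
  ext <;> simp [hx, hy, hz]

theorem eq_zero_of_mul {a b : Za} (ha : N a ≠ 0) (h : a * b = 0) : b = 0 := by
  apply C_mul_eq_zero ha
  rw [← mul_adj]
  calc a * adj a * b = adj a * (a * b) := by ring
    _ = 0 := by rw [h, mul_zero]

theorem C_mul_cancel {n : ℤ} (hn : n ≠ 0) {b c : Za} (h : C n * b = C n * c) : b = c := by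
  have : C n * (b - c) = 0 := by rw [mul_sub, h, sub_self]
  exact sub_eq_zero.mp (C_mul_eq_zero hn this)

/-- Evaluation at a real number. -/
def ev (r : ℝ) (a : Za) : ℝ := a.x + a.y * r + a.z * r ^ 2

theorem ev_mul {r : ℝ} (hr : r ^ 3 + r ^ 2 + 4 * r - 2 = 0) (a b : Za) :
    ev r (a * b) = ev r a * ev r b := by
  simp only [ev, mul_x, mul_y, mul_z]
  push_cast
  linear_combination (-(a.y * b.z + a.z * b.y : ℝ) - a.z * b.z * (r - 1)) * hr

/-- `α² `-coordinate free element `p - q α`. -/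
def lin (p q : ℤ) : Za := ⟨p, -q, 0⟩

@[simp] theorem lin_x (p q : ℤ) : (lin p q).x = p := rfl
@[simp] theorem lin_y (p q : ℤ) : (lin p q).y = -q := rfl
@[simp] theorem lin_z (p q : ℤ) : (lin p q).z = 0 := rfl

end Za

open Za

/-- The binary cubic form `N (p - q α)`. -/
def F (p q : ℤ) : ℤ := p ^ 3 + p ^ 2 * q + 4 * p * q ^ 2 - 2 * q ^ 3

theorem N_lin (p q : ℤ) : N (lin p q) = F p q := by simp [N, F]; ring

/-- `f k` holds for all `k < n`. -/
def allBelow (f : ℕ → Bool) (n : ℕ) : Bool := Nat.rec true (fun k r => f k && r) n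

theorem allBelow_spec {f : ℕ → Bool} : ∀ {n : ℕ}, allBelow f n = true → ∀ k < n, f k = true
  | 0, _, k, hk => absurd hk (Nat.not_lt_zero k)
  | n + 1, h, k, hk => by
    have h' : (f n && allBelow f n) = true := h
    rw [Bool.and_eq_true] at h'
    rcases Nat.lt_succ_iff_lt_or_eq.mp hk with h1 | h1
    · exact allBelow_spec h'.2 k h1
    · exact h1 ▸ h'.1

/-- Ternary quadratic form on naturals. -/
def qf (a b c d e f x y z : ℕ) : ℕ :=
  Nat.add (Nat.mul x (Nat.add (Nat.mul a x) (Nat.add (Nat.mul b y) (Nat.mul c z))))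
    (Nat.add (Nat.mul y (Nat.add (Nat.mul d y) (Nat.mul e z))) (Nat.mul f (Nat.mul z z)))

/-- local test: no solution of `A = 0, B = d M²` modulo `m` with `(x,y,z)` primitive at `l`. -/
def killTest (m l d a0 a1 a2 a3 a4 a5 b0 b1 b2 b3 b4 b5 : ℕ) : Bool :=
  allBelow (fun x => allBelow (fun y => allBelow (fun z =>
    !(Nat.beq (Nat.mod (qf a0 a1 a2 a3 a4 a5 x y z) m) 0) ||
    (Nat.beq (Nat.add (Nat.mod x l) (Nat.add (Nat.mod y l) (Nat.mod z l))) 0) ||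
      allBelow (fun t => !(Nat.beq (Nat.mod (qf b0 b1 b2 b3 b4 b5 x y z) m)
        (Nat.mod (Nat.mul d (Nat.mul t t)) m))) m) m) m) m

theorem killTest_spec {m l d a0 a1 a2 a3 a4 a5 b0 b1 b2 b3 b4 b5 : ℕ}
    (h : killTest m l d a0 a1 a2 a3 a4 a5 b0 b1 b2 b3 b4 b5 = true)
    {x y z t : ℕ} (hx : x < m) (hy : y < m) (hz : z < m) (ht : t < m)
    (hA : qf a0 a1 a2 a3 a4 a5 x y z % m = 0)
    (hB : qf b0 b1 b2 b3 b4 b5 x y z % m = (d * (t * t)) % m) :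
    x % l = 0 ∧ y % l = 0 ∧ z % l = 0 := by
  have h1 := allBelow_spec (allBelow_spec (allBelow_spec h x hx) y hy) z hz
  simp only [Bool.or_eq_true, Bool.not_eq_true'] at h1
  rcases h1 with (h1 | h1) | h1
  · exfalso
    have : Nat.beq (Nat.mod (qf a0 a1 a2 a3 a4 a5 x y z) m) 0 = true := by
      rw [Nat.beq_eq]; exact hA
    rw [this] at h1
    exact Bool.noConfusion h1
  · have h2 : x % l + (y % l + z % l) = 0 := Nat.eq_of_beq_eq_true h1
    omega
  · exfalso
    have h2 := allBelow_spec h1 t ht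
    have : Nat.beq (Nat.mod (qf b0 b1 b2 b3 b4 b5 x y z) m)
        (Nat.mod (Nat.mul d (Nat.mul t t)) m) = true := by
      rw [Nat.beq_eq]; exact hB
    rw [this] at h2
    exact Bool.noConfusion h2

theorem qf_eq (a b c d e f x y z : ℕ) : qf a b c d e f x y z =
    x * (a * x + (b * y + c * z)) + (y * (d * y + e * z) + f * (z * z)) := rfl

/-- residue of an integer -/
theorem exists_res {m : ℕ} (hm : 0 < m) (x : ℤ) :
    ∃ k : ℕ, k < m ∧ ((k : ℕ) : ZMod m) = (x : ZMod m) ∧ (m : ℤ) ∣ x - k := by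
  have hm' : (m : ℤ) ≠ 0 := by positivity
  have hnn := Int.emod_nonneg x hm'
  refine ⟨(x % m).toNat, ?_, ?_, ?_⟩
  · have := Int.emod_lt_of_pos x (by positivity : (0 : ℤ) < m)
    omega
  · have h1 : (((x % m).toNat : ℤ) : ZMod m) = ((x % m : ℤ) : ZMod m) := by
      rw [Int.toNat_of_nonneg hnn]
    rw [ZMod.intCast_mod] at h1
    exact_mod_cast h1
  · rw [Int.toNat_of_nonneg hnn]
    exact Int.dvd_self_sub_emod

/-- local step: every solution is divisible by `l`. -/
theorem kill_step {m l d a0 a1 a2 a3 a4 a5 b0 b1 b2 b3 b4 b5 : ℕ} (hm : 0 < m) (hlm : l ∣ m)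
    (ht : killTest m l d a0 a1 a2 a3 a4 a5 b0 b1 b2 b3 b4 b5 = true)
    {A0 A1 A2 A3 A4 A5 B0 B1 B2 B3 B4 B5 : ℤ}
    (hA : (A0 : ZMod m) = a0 ∧ (A1 : ZMod m) = a1 ∧ (A2 : ZMod m) = a2 ∧ (A3 : ZMod m) = a3 ∧
      (A4 : ZMod m) = a4 ∧ (A5 : ZMod m) = a5)
    (hB : (B0 : ZMod m) = b0 ∧ (B1 : ZMod m) = b1 ∧ (B2 : ZMod m) = b2 ∧ (B3 : ZMod m) = b3 ∧
      (B4 : ZMod m) = b4 ∧ (B5 : ZMod m) = b5)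
    {x y z M : ℤ}
    (h1 : A0 * x ^ 2 + A1 * x * y + A2 * x * z + A3 * y ^ 2 + A4 * y * z + A5 * z ^ 2 = 0)
    (h2 : B0 * x ^ 2 + B1 * x * y + B2 * x * z + B3 * y ^ 2 + B4 * y * z + B5 * z ^ 2
      = d * M ^ 2) : (l : ℤ) ∣ x ∧ (l : ℤ) ∣ y ∧ (l : ℤ) ∣ z := by
  obtain ⟨x', hx, hx', hxd⟩ := exists_res hm x
  obtain ⟨y', hy, hy', hyd⟩ := exists_res hm y
  obtain ⟨z', hz, hz', hzd⟩ := exists_res hm z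
  obtain ⟨t', ht', htt, -⟩ := exists_res hm M
  obtain ⟨e0, e1, e2, e3, e4, e5⟩ := hA
  obtain ⟨f0, f1, f2, f3, f4, f5⟩ := hB
  have k1 := congrArg (Int.cast : ℤ → ZMod m) h1
  have k2 := congrArg (Int.cast : ℤ → ZMod m) h2
  push_cast at k1 k2
  rw [← hx', ← hy', ← hz', e0, e1, e2, e3, e4, e5] at k1
  rw [← hx', ← hy', ← hz', f0, f1, f2, f3, f4, f5, ← htt] at k2
  have r := killTest_spec ht hx hy hz ht'
    (by
      rw [← Nat.dvd_iff_mod_eq_zero, ← ZMod.natCast_eq_zero_iff, qf_eq]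
      push_cast
      rw [← k1]; ring)
    (by
      change _ ≡ _ [MOD m]
      rw [← ZMod.natCast_eq_natCast_iff, qf_eq]
      push_cast
      linear_combination k2)
  have hlm' : (l : ℤ) ∣ m := Int.natCast_dvd_natCast.mpr hlm
  have key : ∀ {u : ℤ} {v : ℕ}, (m : ℤ) ∣ u - v → v % l = 0 → (l : ℤ) ∣ u := by
    intro u v h h'
    have h3 : (l : ℤ) ∣ (v : ℤ) := Int.natCast_dvd_natCast.mpr (Nat.dvd_of_mod_eq_zero h')
    have h4 := dvd_add (hlm'.trans h) h3
    simpa using h4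
  exact ⟨key hxd r.1, key hyd r.2.1, key hzd r.2.2⟩

/-- Infinite descent at `l`. -/
theorem kill_descent {h : Za} {l d : ℕ} (hl : l.Prime) (hd : ¬ l ^ 2 ∣ d)
    (step : ∀ (b : Za) (M : ℤ), (h * (b * b)).z = 0 →
      (h * (b * b)).y - 3 * (h * (b * b)).x = d * M ^ 2 →
      (l : ℤ) ∣ b.x ∧ (l : ℤ) ∣ b.y ∧ (l : ℤ) ∣ b.z) :
    ∀ (n : ℕ) (b : Za) (M : ℤ), b.x.natAbs + b.y.natAbs + b.z.natAbs ≤ n →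
      (h * (b * b)).z = 0 → (h * (b * b)).y - 3 * (h * (b * b)).x = d * M ^ 2 → b = 0 := by
  intro n
  induction n with
  | zero =>
    intro b M hn _ _
    have h1 : b.x = 0 := by omega
    have h2 : b.y = 0 := by omega
    have h3 : b.z = 0 := by omega
    ext <;> simp [h1, h2, h3]
  | succ n ih =>
    intro b M hn hA hB
    by_cases hb : b = 0
    · exact hb
    obtain ⟨⟨x, hx⟩, ⟨y, hy⟩, ⟨z, hz⟩⟩ := step b M hA hB
    have hb' : b = C l * ⟨x, y, z⟩ := by ext <;> simp [hx, hy, hz]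
    set c : Za := ⟨x, y, z⟩ with hc
    have hl0 : (l : ℤ) ≠ 0 := by exact_mod_cast hl.ne_zero
    have e : h * (b * b) = C ((l : ℤ) ^ 2) * (h * (c * c)) := by
      rw [hb', pow_two, C_mul]; ring
    have hlp : Prime (l : ℤ) := Nat.prime_iff_prime_int.mp hl
    rw [e] at hA hB
    have hA' : (h * (c * c)).z = 0 := by
      have : (l : ℤ) ^ 2 * (h * (c * c)).z = 0 := by
        rw [← hA]; simp only [mul_z (C _), C_x, C_y, C_z]; ring
      rcases mul_eq_zero.mp this with h1 | h1
      · exact absurd h1 (pow_ne_zero 2 hl0)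
      · exact h1
    have hB' : (l : ℤ) ^ 2 * ((h * (c * c)).y - 3 * (h * (c * c)).x) = d * M ^ 2 := by
      rw [← hB]; simp only [mul_x (C _), mul_y (C _), C_x, C_y, C_z]; ring
    have hM : (l : ℤ) ∣ M := by
      by_contra hM
      have hcop : IsCoprime ((l : ℤ) ^ 2) (M ^ 2) :=
        IsCoprime.pow ((Prime.coprime_iff_not_dvd hlp).mpr hM)
      have h1 : (l : ℤ) ^ 2 ∣ d := hcop.dvd_of_dvd_mul_right ⟨_, hB'.symm⟩
      exact hd (by exact_mod_cast h1)
    obtain ⟨M', rfl⟩ := hM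
    have hB'' : (h * (c * c)).y - 3 * (h * (c * c)).x = d * M' ^ 2 := by
      apply mul_left_cancel₀ (pow_ne_zero 2 hl0)
      rw [hB']; ring
    have hc0 : c = 0 := by
      apply ih c M' _ hA' hB''
      have h2 : 2 ≤ l := hl.two_le
      have k : ∀ w : ℤ, ((l : ℤ) * w).natAbs = l * w.natAbs := by
        intro w; rw [Int.natAbs_mul, Int.natAbs_natCast]
      rw [hx, hy, hz, k, k, k] at hn
      change x.natAbs + y.natAbs + z.natAbs ≤ n
      have : 2 * (x.natAbs + y.natAbs + z.natAbs) ≤ n + 1 := by nlinarith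
      by_contra hcon
      have h0 : x.natAbs + y.natAbs + z.natAbs = 0 ∨ n + 1 ≤ x.natAbs + y.natAbs + z.natAbs := by
        omega
      omega
    rw [hb', hc0, mul_zero]

theorem kill {m l d a0 a1 a2 a3 a4 a5 b0 b1 b2 b3 b4 b5 : ℕ}
    (ht : killTest m l d a0 a1 a2 a3 a4 a5 b0 b1 b2 b3 b4 b5 = true)
    (u v w : ℤ)
    (hm : 0 < m ∧ l ∣ m ∧ ¬ l ^ 2 ∣ d) (hl : l.Prime)
    (hA : w ≡ a0 [ZMOD m] ∧ 2 * v - 2 * w ≡ a1 [ZMOD m]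
      ∧ 2 * u - 2 * v - 6 * w ≡ a2 [ZMOD m] ∧ u - v - 3 * w ≡ a3 [ZMOD m]
      ∧ -2 * u - 6 * v + 18 * w ≡ a4 [ZMOD m] ∧ -3 * u + 9 * v + w ≡ a5 [ZMOD m])
    (hB : -3 * u + v ≡ b0 [ZMOD m] ∧ 2 * u - 20 * w ≡ b1 [ZMOD m]
      ∧ -20 * v + 24 * w ≡ b2 [ZMOD m] ∧ -10 * v + 12 * w ≡ b3 [ZMOD m]
      ∧ -20 * u + 24 * v + 56 * w ≡ b4 [ZMOD m] ∧ 12 * u + 28 * v - 96 * w ≡ b5 [ZMOD m])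
    {b : Za} {M : ℤ} (h1 : ((⟨u, v, w⟩ : Za) * (b * b)).z = 0)
    (h2 : ((⟨u, v, w⟩ : Za) * (b * b)).y - 3 * ((⟨u, v, w⟩ : Za) * (b * b)).x = d * M ^ 2) :
    b = 0 := by
  have cv : ∀ {s : ℤ} {t : ℕ}, s ≡ t [ZMOD m] → (s : ZMod m) = t := by
    intro s t hst
    have := (ZMod.intCast_eq_intCast_iff _ _ _).mpr hst
    simpa using this
  refine kill_descent hl hm.2.2 ?_ _ b M le_rfl h1 h2
  intro b M h1 h2
  refine kill_step hm.1 hm.2.1 ht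
    ⟨cv hA.1, cv hA.2.1, cv hA.2.2.1, cv hA.2.2.2.1, cv hA.2.2.2.2.1, cv hA.2.2.2.2.2⟩
    ⟨cv hB.1, cv hB.2.1, cv hB.2.2.1, cv hB.2.2.2.1, cv hB.2.2.2.2.1, cv hB.2.2.2.2.2⟩
    (M := M) ?_ ?_
  · rw [← h1]; simp only [mul_x, mul_y, mul_z]; ring
  · rw [← h2]; simp only [mul_x, mul_y, mul_z]; ring

theorem kt0 : killTest 16 2 11 15 0 10 5 2 3 12 6 12 14 12 0 = true := by decide +kernel
theorem kt1 : killTest 32 2 22 3 6 28 14 24 2 15 30 16 8 20 4 = true := by decide +kernel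
theorem kt2 : killTest 32 2 11 6 12 28 30 12 30 24 0 0 16 0 0 = true := by decide +kernel
theorem kt3 : killTest 32 2 22 4 24 24 12 24 28 24 0 0 16 0 0 = true := by decide +kernel
theorem kt4 : killTest 8 2 11 0 4 4 2 4 6 6 0 0 4 0 0 = true := by decide +kernel
theorem kt5 : killTest 8 2 22 6 0 0 0 0 4 6 0 0 4 0 0 = true := by decide +kernel
theorem kt6 : killTest 27 3 11 21 6 3 15 3 12 15 0 24 12 9 15 = true := by decide +kernel
theorem kt7 : killTest 27 3 22 0 3 0 0 15 9 24 3 24 12 6 6 = true := by decide +kernel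
theorem kt8 : killTest 27 3 11 6 9 6 3 9 6 24 24 15 21 12 15 = true := by decide +kernel
theorem kt9 : killTest 27 3 22 6 12 24 12 6 15 21 18 12 6 0 21 = true := by decide +kernel

theorem kill0 {b : Za} {M : ℤ} (h1 : ((⟨1, -1, -1⟩ : Za) * (b * b)).z = 0)
    (h2 : ((⟨1, -1, -1⟩ : Za) * (b * b)).y - 3 * ((⟨1, -1, -1⟩ : Za) * (b * b)).x
      = 11 * M ^ 2) : b = 0 :=
  kill kt0 _ _ _ (by decide) (by norm_num) (by decide) (by decide) h1 h2

theorem kill1 {b : Za} {M : ℤ} (h1 : ((⟨-35, 38, 99⟩ : Za) * (b * b)).z = 0)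
    (h2 : ((⟨-35, 38, 99⟩ : Za) * (b * b)).y - 3 * ((⟨-35, 38, 99⟩ : Za) * (b * b)).x
      = 22 * M ^ 2) : b = 0 :=
  kill kt1 _ _ _ (by decide) (by norm_num) (by decide) (by decide) h1 h2

theorem kill2 {b : Za} {M : ℤ} (h1 : ((⟨-4, 12, 6⟩ : Za) * (b * b)).z = 0)
    (h2 : ((⟨-4, 12, 6⟩ : Za) * (b * b)).y - 3 * ((⟨-4, 12, 6⟩ : Za) * (b * b)).x
      = 11 * M ^ 2) : b = 0 :=
  kill kt2 _ _ _ (by decide) (by norm_num) (by decide) (by decide) h1 h2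

theorem kill3 {b : Za} {M : ℤ} (h1 : ((⟨40, -80, -28⟩ : Za) * (b * b)).z = 0)
    (h2 : ((⟨40, -80, -28⟩ : Za) * (b * b)).y - 3 * ((⟨40, -80, -28⟩ : Za) * (b * b)).x
      = 22 * M ^ 2) : b = 0 :=
  kill kt3 _ _ _ (by decide) (by norm_num) (by decide) (by decide) h1 h2

theorem kill4 {b : Za} {M : ℤ} (h1 : ((⟨-4, 10, 0⟩ : Za) * (b * b)).z = 0)
    (h2 : ((⟨-4, 10, 0⟩ : Za) * (b * b)).y - 3 * ((⟨-4, 10, 0⟩ : Za) * (b * b)).x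
      = 11 * M ^ 2) : b = 0 :=
  kill kt4 _ _ _ (by decide) (by norm_num) (by decide) (by decide) h1 h2

theorem kill5 {b : Za} {M : ℤ} (h1 : ((⟨24, -58, 6⟩ : Za) * (b * b)).z = 0)
    (h2 : ((⟨24, -58, 6⟩ : Za) * (b * b)).y - 3 * ((⟨24, -58, 6⟩ : Za) * (b * b)).x
      = 22 * M ^ 2) : b = 0 :=
  kill kt5 _ _ _ (by decide) (by norm_num) (by decide) (by decide) h1 h2

theorem kill6 {b : Za} {M : ℤ} (h1 : ((⟨-6, 24, -6⟩ : Za) * (b * b)).z = 0)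
    (h2 : ((⟨-6, 24, -6⟩ : Za) * (b * b)).y - 3 * ((⟨-6, 24, -6⟩ : Za) * (b * b)).x
      = 11 * M ^ 2) : b = 0 :=
  kill kt6 _ _ _ (by decide) (by norm_num) (by decide) (by decide) h1 h2

theorem kill7 {b : Za} {M : ℤ} (h1 : ((⟨42, -120, 54⟩ : Za) * (b * b)).z = 0)
    (h2 : ((⟨42, -120, 54⟩ : Za) * (b * b)).y - 3 * ((⟨42, -120, 54⟩ : Za) * (b * b)).x
      = 22 * M ^ 2) : b = 0 :=
  kill kt7 _ _ _ (by decide) (by norm_num) (by decide) (by decide) h1 h2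

theorem kill8 {b : Za} {M : ℤ} (h1 : ((⟨18, -30, -21⟩ : Za) * (b * b)).z = 0)
    (h2 : ((⟨18, -30, -21⟩ : Za) * (b * b)).y - 3 * ((⟨18, -30, -21⟩ : Za) * (b * b)).x
      = 11 * M ^ 2) : b = 0 :=
  kill kt8 _ _ _ (by decide) (by norm_num) (by decide) (by decide) h1 h2

theorem kill9 {b : Za} {M : ℤ} (h1 : ((⟨-120, 228, 114⟩ : Za) * (b * b)).z = 0)
    (h2 : ((⟨-120, 228, 114⟩ : Za) * (b * b)).y - 3 * ((⟨-120, 228, 114⟩ : Za) * (b * b)).x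
      = 22 * M ^ 2) : b = 0 :=
  kill kt9 _ _ _ (by decide) (by norm_num) (by decide) (by decide) h1 h2

open MeasureTheory in
/-- Minkowski's theorem for the Euclidean ball in dimension three. -/
theorem minkowski3 (A : Matrix (Fin 3) (Fin 3) ℝ) (hA : |A.det| = 22) :
    ∃ v : Fin 3 → ℤ, v ≠ 0 ∧ ∑ i, (∑ j, (v j : ℝ) * A j i) ^ 2 ≤ 12.1104 := by
  have hdet : A.det ≠ 0 := by
    intro h; rw [h] at hA; norm_num at hA
  have hunit : IsUnit A.det := isUnit_iff_ne_zero.mpr hdet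
  have hli : LinearIndependent ℝ A.row := by
    rw [Matrix.linearIndependent_rows_iff_isUnit]
    exact (Matrix.isUnit_iff_isUnit_det A).mpr hunit
  let b : Module.Basis (Fin 3) ℝ (Fin 3 → ℝ) :=
    basisOfLinearIndependentOfCardEqFinrank hli (by simp)
  have hb : ∀ j, b j = A j := by
    intro j
    have := coe_basisOfLinearIndependentOfCardEqFinrank hli (by simp)
    exact congrFun this j
  let s : Set (Fin 3 → ℝ) := {x | ∑ i, x i ^ 2 < 12.1104}
  have hs_eq : s = (WithLp.toLp 2) ⁻¹' (Metric.ball (0 : EuclideanSpace ℝ (Fin 3)) 3.48) := by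
    ext x
    simp only [s, Set.mem_ofPred_eq, Set.mem_preimage, mem_ball_zero_iff, EuclideanSpace.norm_eq,
      Real.norm_eq_abs, sq_abs]
    rw [Real.sqrt_lt' (by norm_num)]
    norm_num
  have hvol : volume s = ENNReal.ofReal 3.48 ^ 3 * ENNReal.ofReal (Real.pi * 4 / 3) := by
    rw [hs_eq]
    rw [(PiLp.volume_preserving_toLp (Fin 3)).measure_preimage
      measurableSet_ball.nullMeasurableSet]
    exact EuclideanSpace.volume_ball_fin_three 0 _
  have hfund : volume (ZSpan.fundamentalDomain b) = ENNReal.ofReal 22 := by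
    rw [ZSpan.volume_fundamentalDomain]
    have : Matrix.of b = A := by
      ext i j; simp [hb]
    rw [this, hA]
  have hconv : Convex ℝ s := by
    rw [hs_eq]
    exact (convex_ball _ _).is_linear_preimage
      (WithLp.linearEquiv 2 ℝ (Fin 3 → ℝ)).symm.toLinearMap.isLinear
  have hsymm : ∀ x ∈ s, -x ∈ s := by
    intro x hx
    simpa [s] using hx
  have hlt : volume (ZSpan.fundamentalDomain b) * 2 ^ Module.finrank ℝ (Fin 3 → ℝ) < volume s := by
    rw [hfund, hvol, Module.finrank_fin_fun]
    rw [← ENNReal.ofReal_pow (by norm_num), ← ENNReal.ofReal_mul (by norm_num)]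
    rw [show (2 : ENNReal) = ENNReal.ofReal 2 by simp, ← ENNReal.ofReal_pow (by norm_num),
      ← ENNReal.ofReal_mul (by norm_num)]
    rw [ENNReal.ofReal_lt_ofReal_iff (by positivity)]
    have := Real.pi_gt_d4
    norm_num
    linarith
  have : Countable (Submodule.span ℤ (Set.range b)).toAddSubgroup :=
    inferInstanceAs (Countable (Submodule.span ℤ (Set.range b)))
  obtain ⟨x, hx0, hxs⟩ := exists_ne_zero_mem_lattice_of_measure_mul_two_pow_lt_measure
    (L := (Submodule.span ℤ (Set.range b)).toAddSubgroup)
    (ZSpan.isAddFundamentalDomain b volume) hsymm hconv hlt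
  obtain ⟨x, hx⟩ := x
  have hx' : x ∈ Submodule.span ℤ (Set.range b) := hx
  rw [Submodule.mem_span_range_iff_exists_fun] at hx'
  obtain ⟨c, hc⟩ := hx'
  refine ⟨c, ?_, ?_⟩
  · rintro rfl
    apply hx0
    ext1
    simp at hc
    simp [← hc]
  · have h2 : ∀ i, x i = ∑ j, (c j : ℝ) * A j i := by
      intro i
      rw [← hc]
      simp [hb, Finset.sum_apply]
    have h3 : ∑ i, x i ^ 2 < 12.1104 := hxs
    simp only [h2] at h3
    exact h3.le

theorem N_mod5 : ∀ x y z : ZMod 5, x ^ 3 - x ^ 2 * y - 7 * x ^ 2 * z + 4 * x * y ^ 2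
    - 10 * x * y * z + 20 * x * z ^ 2 + 2 * y ^ 3 - 2 * y ^ 2 * z + 8 * y * z ^ 2
    + 4 * z ^ 3 = 0 → x = 0 ∧ y = 0 ∧ z = 0 := by
  decide

theorem N_eq_zero_aux : ∀ (n : ℕ) (b : Za), b.x.natAbs + b.y.natAbs + b.z.natAbs ≤ n →
    N b = 0 → b = 0 := by
  intro n
  induction n with
  | zero =>
    intro b hn _
    have h1 : b.x = 0 := by omega
    have h2 : b.y = 0 := by omega
    have h3 : b.z = 0 := by omega
    ext <;> simp [h1, h2, h3]
  | succ n ih =>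
    intro b hn hN
    have h5 := congrArg (Int.cast : ℤ → ZMod 5) hN
    unfold N at h5
    push_cast at h5
    obtain ⟨hx, hy, hz⟩ := N_mod5 _ _ _ h5
    rw [ZMod.intCast_zmod_eq_zero_iff_dvd] at hx hy hz
    obtain ⟨x, hx⟩ := hx
    obtain ⟨y, hy⟩ := hy
    obtain ⟨z, hz⟩ := hz
    push_cast at hx hy hz
    have hb' : b = C 5 * ⟨x, y, z⟩ := by ext <;> simp [hx, hy, hz]
    have hc0 : (⟨x, y, z⟩ : Za) = 0 := by
      apply ih
      · change x.natAbs + y.natAbs + z.natAbs ≤ n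
        omega
      · rw [hb', N_mul, N_C] at hN
        simpa using hN
    rw [hb', hc0, mul_zero]

theorem N_ne_zero {b : Za} (hb : b ≠ 0) : N b ≠ 0 :=
  fun h => hb (N_eq_zero_aux _ b le_rfl h)

theorem exists_root : ∃ a : ℝ, a ^ 3 + a ^ 2 + 4 * a - 2 = 0 ∧ 0.432876 < a ∧ a < 0.432877 := by
  have hc : ContinuousOn (fun a : ℝ => a ^ 3 + a ^ 2 + 4 * a - 2)
      (Set.Icc 0.432876 0.432877) := by fun_prop
  have := intermediate_value_Ioo (by norm_num) hc
  have h0 : (0 : ℝ) ∈ Set.Ioo ((0.432876 : ℝ) ^ 3 + 0.432876 ^ 2 + 4 * 0.432876 - 2)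
      ((0.432877 : ℝ) ^ 3 + 0.432877 ^ 2 + 4 * 0.432877 - 2) := by
    constructor <;> norm_num
  obtain ⟨a, ha, ha'⟩ := this h0
  exact ⟨a, ha', ha.1, ha.2⟩

/-- `|a₂|²`-form: squared absolute value at the complex place. -/
noncomputable def S (a : ℝ) (b : Za) : ℝ :=
  (b.x + b.y * ((-1 - a) / 2) + b.z * (((-1 - a) / 2) ^ 2 - (3 * a ^ 2 + 2 * a + 15) / 4)) ^ 2
    + (3 * a ^ 2 + 2 * a + 15) / 4 * (b.y + 2 * ((-1 - a) / 2) * b.z) ^ 2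

theorem ev_mul_S {a : ℝ} (ha : a ^ 3 + a ^ 2 + 4 * a - 2 = 0) (b : Za) :
    ev a b * S a b = N b := by
  have h3 : a ^ 3 = 2 - 4 * a - a ^ 2 := by linarith
  have h4 : a ^ 4 = -2 + 6 * a - 3 * a ^ 2 := by
    have : a ^ 4 = a * a ^ 3 := by ring
    rw [this, h3]; linear_combination -ha
  have h5 : a ^ 5 = a * (-2 + 6 * a - 3 * a ^ 2) := by rw [← h4]; ring
  have h6 : a ^ 6 = a ^ 2 * (-2 + 6 * a - 3 * a ^ 2) := by rw [← h4]; ring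
  simp only [ev, S, N]
  push_cast
  ring_nf
  simp only [h6, h5, h4, h3]
  ring_nf
  simp only [h4]
  ring_nf

theorem exists_gamma {a : ℝ} (ha : a ^ 3 + a ^ 2 + 4 * a - 2 = 0)
    {p q n d k : ℤ} {κ : Za} (hn : 0 < n) (hd : 0 < d) (hF : F p q = d * n ^ 2)
    (hκ : N κ = d) (hκ1 : 0 < ev a κ) (hP1 : 0 < ev a (lin p q))
    (hdvd : ∀ x y z : ℤ, ∃ γ : Za,
      κ * ((⟨n * x - k * y - k ^ 2 * z, y, z⟩ : Za) * ⟨n * x - k * y - k ^ 2 * z, y, z⟩)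
        = lin p q * γ) :
    ∃ (β γ : Za) (m : ℤ) (g : ℝ), β ≠ 0 ∧ κ * (β * β) = lin p q * γ ∧ m ≠ 0 ∧ N γ = m ^ 2 ∧
      0 < g ∧ g ^ 2 = ev a γ ∧ 25 / 49 * g ^ 2 + 14 / 5 * (|m| / g) ≤ 12.1104 := by
  have hnR : (0 : ℝ) < n := by exact_mod_cast hn
  set lam : ℝ := ev a (lin p q) / ev a κ with hlam
  have hlam0 : 0 < lam := div_pos hP1 hκ1
  set σ := Real.sqrt lam with hσ
  have hσ0 : 0 < σ := Real.sqrt_pos.mpr hlam0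
  have hσ2 : σ ^ 2 = lam := Real.sq_sqrt hlam0.le
  set bb : ℝ := (3 * a ^ 2 + 2 * a + 15) / 4 with hbb
  have hbb0 : 0 < bb := by rw [hbb]; nlinarith [sq_nonneg (3 * a + 1)]
  set b := Real.sqrt bb with hb
  have hb2 : b ^ 2 = bb := Real.sq_sqrt hbb0.le
  have hb0 : 0 < b := Real.sqrt_pos.mpr hbb0
  set c : ℝ := (-1 - a) / 2 with hc
  have hT : 0 < 14 * σ / (5 * n) := by positivity
  set s2 := Real.sqrt (14 * σ / (5 * n)) with hs2
  have hs22 : s2 ^ 2 = 14 * σ / (5 * n) := Real.sq_sqrt hT.le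
  have h11 : b * ((a - c) ^ 2 + b ^ 2) = 11 := by
    have h1 : 0 < b * ((a - c) ^ 2 + b ^ 2) := by positivity
    have h2 : (b * ((a - c) ^ 2 + b ^ 2)) ^ 2 = 11 ^ 2 := by
      rw [mul_pow, hb2, hbb, hc]
      linear_combination (27 / 4 * a ^ 3 + 27 / 4 * a ^ 2 + 27 * a + 61 / 2) * ha
    exact (pow_left_inj₀ h1.le (by norm_num) (by norm_num)).mp h2
  have hs1 : 5 / (7 * σ) * s2 ^ 2 * n = 2 := by
    rw [hs22]; field_simp; norm_num
  obtain ⟨v, hv0, hv⟩ := minkowski3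
    !![5 / (7 * σ) * n, s2 * n, 0;
       5 / (7 * σ) * (a - k), s2 * (c - k), s2 * b;
       5 / (7 * σ) * (a ^ 2 - k ^ 2), s2 * (c ^ 2 - b ^ 2 - k ^ 2), s2 * (2 * b * c)] (by
      rw [Matrix.det_fin_three]
      simp
      have e : 5 / (7 * σ) * s2 ^ 2 * n * (b * ((a - c) ^ 2 + b ^ 2)) = 22 := by
        rw [hs1, h11]; norm_num
      rw [← abs_of_pos (show (0 : ℝ) < 22 by norm_num), ← e]
      congr 1
      ring)
  obtain ⟨γ, hγ⟩ := hdvd (v 0) (v 1) (v 2)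
  set β : Za := ⟨n * v 0 - k * v 1 - k ^ 2 * v 2, v 1, v 2⟩ with hβ
  have hβ0 : β ≠ 0 := by
    intro h0
    have hy : v 1 = 0 := congrArg Za.y h0
    have hz : v 2 = 0 := congrArg Za.z h0
    have hx : n * v 0 - k * v 1 - k ^ 2 * v 2 = 0 := congrArg Za.x h0
    rw [hy, hz] at hx
    have hx' : v 0 = 0 := by
      have : n * v 0 = 0 := by linarith
      exact (mul_eq_zero.mp this).resolve_left hn.ne'
    apply hv0
    ext i
    fin_cases i
    · exact hx'
    · exact hy
    · exact hz
  have hNβ : N β ≠ 0 := N_ne_zero hβ0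
  have hNN : N β ^ 2 = n ^ 2 * N γ := by
    have h := congrArg N hγ
    rw [N_mul, N_mul, N_mul, hκ, N_lin, hF] at h
    apply mul_left_cancel₀ hd.ne'
    linear_combination h
  obtain ⟨m, hm⟩ : n ∣ N β := by
    rw [← Int.pow_dvd_pow_iff (two_ne_zero)]
    exact ⟨_, hNN⟩
  have hm0 : m ≠ 0 := by
    rintro rfl; exact hNβ (by rw [hm, mul_zero])
  have hNγ : N γ = m ^ 2 := by
    apply mul_left_cancel₀ (pow_ne_zero 2 hn.ne')
    rw [← hNN, hm]; ring
  have heS := ev_mul_S ha β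
  have he0 : ev a β ≠ 0 := by
    intro h; rw [h, zero_mul] at heS
    exact hNβ (by exact_mod_cast heS.symm)
  have hγ1 : ev a κ * (ev a β * ev a β) = ev a (lin p q) * ev a γ := by
    rw [← ev_mul ha, ← ev_mul ha, hγ, ev_mul ha]
  have hg0 : 0 < |ev a β| / σ := div_pos (abs_pos.mpr he0) hσ0
  refine ⟨β, γ, m, |ev a β| / σ, hβ0, hγ, hm0, hNγ, hg0, ?_, ?_⟩
  · rw [div_pow, sq_abs, hσ2, hlam]
    field_simp
    linear_combination hγ1
  · have hsum : 25 / 49 * (|ev a β| / σ) ^ 2 + s2 ^ 2 * S a β ≤ 12.1104 := by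
      refine le_trans (le_of_eq ?_) hv
      simp [Fin.sum_univ_three]
      simp only [S, ev, hβ]
      rw [div_pow, sq_abs, ← hc, ← hbb, ← hb2]
      push_cast
      field_simp
      ring
    have hS0 : 0 ≤ S a β := by
      unfold S
      rw [← hbb]; positivity
    have hS : s2 ^ 2 * S a β = 14 / 5 * (|(m : ℝ)| / (|ev a β| / σ)) := by
      have h1 : |ev a β| * S a β = n * |(m : ℝ)| := by
        rw [← abs_of_nonneg hS0, ← abs_mul, heS, hm]
        push_cast
        rw [abs_mul, abs_of_pos hnR]
      rw [hs22]
      have : |ev a β| ≠ 0 := abs_ne_zero.mpr he0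
      field_simp
      linear_combination h1
    rw [hS] at hsum
    push_cast
    exact hsum

/-- The finite check in the enumeration of small elements of square norm. -/
def enumTest : Bool :=
  allBelow (fun i => allBelow (fun j => allBelow (fun k =>
    let r : ℤ := Int.ofNat i - 4
    let s : ℤ := Int.ofNat j - 9
    let t : ℤ := Int.ofNat k - 5
    let G : ℤ := 1000000 * r + 432876 * s + 187381 * t
    let n : ℤ := N ⟨r, s, t⟩
    !(decide (0 < G + 20)) || !(decide (25 * (G - 20) ≤ 593409600)) ||
    !(decide (4 * 49 ^ 3 * 10 ^ 18 * n ≤ 25 * (G + 20) * (593409600 - 25 * (G - 20)) ^ 2)) ||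
    !(decide (n = 1) || decide (n = 4) || decide (n = 9) || decide (n = 16) || decide (n = 25) ||
      decide (n = 36) || decide (n = 49) || decide (n = 64)) ||
    (decide (r = 1 ∧ s = 0 ∧ t = 0) || decide (r = 1 ∧ s = -1 ∧ t = 0) ||
     decide (r = 3 ∧ s = 1 ∧ t = 1) || decide (r = 6 ∧ s = 2 ∧ t = 1) ||
     decide (r = 2 ∧ s = 1 ∧ t = 1) || decide (r = 4 ∧ s = 1 ∧ t = 1) ||
     decide (r = 4 ∧ s = 0 ∧ t = 1) || decide (r = 11 ∧ s = 3 ∧ t = 2))) 11) 19) 33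

theorem enumTest_true : enumTest = true := by decide +kernel

theorem enum_spec {r s t : ℤ} (hr : -4 ≤ r ∧ r ≤ 28) (hs : -9 ≤ s ∧ s ≤ 9) (ht : -5 ≤ t ∧ t ≤ 5)
    (h1 : 0 < (1000000 * r + 432876 * s + 187381 * t) + 20)
    (h2 : 25 * ((1000000 * r + 432876 * s + 187381 * t) - 20) ≤ 593409600)
    (h3 : 4 * 49 ^ 3 * 10 ^ 18 * N ⟨r, s, t⟩ ≤
      25 * ((1000000 * r + 432876 * s + 187381 * t) + 20) *
        (593409600 - 25 * ((1000000 * r + 432876 * s + 187381 * t) - 20)) ^ 2)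
    {m : ℤ} (hm : 1 ≤ m ∧ m ≤ 8) (hN : N ⟨r, s, t⟩ = m ^ 2) :
    (⟨r, s, t⟩ : Za) ∈ ([⟨1, 0, 0⟩, ⟨1, -1, 0⟩, ⟨3, 1, 1⟩, ⟨6, 2, 1⟩, ⟨2, 1, 1⟩, ⟨4, 1, 1⟩,
      ⟨4, 0, 1⟩, ⟨11, 3, 2⟩] : List Za) := by
  have hN' : N ⟨r, s, t⟩ = 1 ∨ N ⟨r, s, t⟩ = 4 ∨ N ⟨r, s, t⟩ = 9 ∨ N ⟨r, s, t⟩ = 16 ∨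
      N ⟨r, s, t⟩ = 25 ∨ N ⟨r, s, t⟩ = 36 ∨ N ⟨r, s, t⟩ = 49 ∨ N ⟨r, s, t⟩ = 64 := by
    obtain ⟨ha, hb⟩ := hm
    rw [hN]
    interval_cases m <;> norm_num
  have h := allBelow_spec (allBelow_spec (allBelow_spec enumTest_true (r + 4).toNat (by omega))
    (s + 9).toNat (by omega)) (t + 5).toNat (by omega)
  have er : Int.ofNat (r + 4).toNat - 4 = r := by
    rw [Int.ofNat_eq_natCast]; omega
  have es : Int.ofNat (s + 9).toNat - 9 = s := by
    rw [Int.ofNat_eq_natCast]; omega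
  have et : Int.ofNat (t + 5).toNat - 5 = t := by
    rw [Int.ofNat_eq_natCast]; omega
  simp only [er, es, et, Bool.or_eq_true, Bool.not_eq_true', decide_eq_true_eq,
    decide_eq_false_iff_not] at h
  rcases h with (((h | h) | h) | h) | h
  · exact absurd h1 h
  · exact absurd h2 h
  · exact absurd h3 h
  · exfalso
    rcases hN' with e | e | e | e | e | e | e | e <;> rw [e] at h <;> revert h <;> decide
  · simp only [List.mem_cons, Za.mk.injEq, List.not_mem_nil, or_false]
    simpa only [or_assoc] using h

theorem mul_I_le {a I : ℝ} (ha1 : 0.432876 < a) (ha2 : a < 0.432877)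
    (h1 : -2.14 ≤ I) (h2 : I ≤ 2.14) : (3 * a + 1) / 2 * I ≤ 2.5 := by
  nlinarith

theorem t_lt_six {D t : ℝ} (hD : 5.42 ≤ D) (h : t * D ≤ 31) : t < 6 := by
  by_contra hcon
  push Not at hcon
  nlinarith

theorem prod_le {a t : ℝ} {u v w : ℝ} (ha1 : u ≤ a) (ha2 : a ≤ u + v) (h1 : -w ≤ t) (h2 : t ≤ w)
    (hv : 0 ≤ v) : t * a ≤ t * u + w * v ∧ t * u - w * v ≤ t * a := by
  constructor <;> nlinarith

theorem real_bounds {a M R I : ℝ} (ha1 : 0.432876 < a) (hMsq : M ^ 2 ≤ 18.7074)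
    (hS : R ^ 2 + (3 * a ^ 2 + 2 * a + 15) / 4 * I ^ 2 = M ^ 2) :
    |R| ≤ 4.3253 ∧ |I| ≤ 2.14 := by
  have hbb : 4.1069 ≤ (3 * a ^ 2 + 2 * a + 15) / 4 := by nlinarith
  constructor
  · apply abs_le_of_sq_le_sq _ (by norm_num)
    nlinarith [sq_nonneg I]
  · apply abs_le_of_sq_le_sq _ (by norm_num)
    nlinarith [sq_nonneg I, sq_nonneg R]

theorem cubic_le {E : ℝ} (h1 : 0 ≤ E) (h0 : E ≤ 24) :
    E * (12.1104 - 25 / 49 * E) ^ 2 ≤ 520 := by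
  nlinarith [mul_nonneg (by linarith : (0 : ℝ) ≤ 31.648 - E) (sq_nonneg (E - 7.912))]

theorem root_bounds {a : ℝ} (ha1 : 0.432876 < a) (ha2 : a < 0.432877) :
    0.187381 < a ^ 2 ∧ a ^ 2 < 0.187383 := by
  constructor <;> nlinarith

set_option maxHeartbeats 1000000 in
theorem gamma_list {a : ℝ} (ha : a ^ 3 + a ^ 2 + 4 * a - 2 = 0) (ha1 : 0.432876 < a)
    (ha2 : a < 0.432877) {γ : Za} {m : ℤ} {g : ℝ} (hm0 : m ≠ 0) (hN : N γ = m ^ 2) (hg0 : 0 < g)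
    (hg : g ^ 2 = ev a γ) (hb : 25 / 49 * g ^ 2 + 14 / 5 * (|m| / g) ≤ 12.1104) :
    γ ∈ ([⟨1, 0, 0⟩, ⟨1, -1, 0⟩, ⟨3, 1, 1⟩, ⟨6, 2, 1⟩, ⟨2, 1, 1⟩, ⟨4, 1, 1⟩,
      ⟨4, 0, 1⟩, ⟨11, 3, 2⟩] : List Za) := by
  obtain ⟨r, s, t⟩ := γ
  -- the absolute value of `m`
  wlog hmpos : 0 < m generalizing m
  · exact this (m := -m) (by simpa using hm0) (by rwa [abs_neg]) (by rw [hN]; ring)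
      (by omega)
  rw [abs_of_pos hmpos] at hb
  have hmR : (0 : ℝ) < m := by exact_mod_cast hmpos
  set M : ℝ := (m : ℝ) / g with hM
  have hM0 : 0 < M := div_pos hmR hg0
  have hmM : (m : ℝ) = M * g := by rw [hM]; field_simp
  have hG0 : 0 < ev a ⟨r, s, t⟩ := by rw [← hg]; positivity
  set E := ev a ⟨r, s, t⟩ with hE
  have hM1 : M ≤ 4.3252 := by
    have := sq_nonneg g
    linarith
  have hE1 : E ≤ 23.7364 := by rw [← hg]; linarith
  have hMM : E * M ^ 2 = m ^ 2 := by rw [← hg, hmM]; ring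
  have hS : S a ⟨r, s, t⟩ = M ^ 2 := by
    have h := ev_mul_S ha ⟨r, s, t⟩
    rw [hN] at h
    push_cast at h
    rw [← hMM] at h
    exact mul_left_cancel₀ hG0.ne' h
  -- bounds
  unfold S at hS
  simp only at hS
  set R : ℝ := (r : ℝ) + s * ((-1 - a) / 2)
    + t * (((-1 - a) / 2) ^ 2 - (3 * a ^ 2 + 2 * a + 15) / 4) with hR
  set I : ℝ := (s : ℝ) + 2 * ((-1 - a) / 2) * t with hI
  have hMsq : M ^ 2 ≤ 18.7074 := by
    have := pow_le_pow_left₀ hM0.le hM1 2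
    norm_num at this ⊢
    linarith
  obtain ⟨hR1, hI1⟩ := real_bounds ha1 hMsq hS
  obtain ⟨hRa, hRb⟩ := abs_le.mp hR1
  obtain ⟨hIa, hIb⟩ := abs_le.mp hI1
  have ht : (t : ℝ) * (3 * a ^ 2 + 2 * a + 4) = E - R - (3 * a + 1) / 2 * I := by
    rw [hE, hR, hI]; simp only [ev]; ring
  obtain ⟨haa1, haa2⟩ := root_bounds ha1 ha2
  have hD : 5.42 ≤ 3 * a ^ 2 + 2 * a + 4 := by linarith
  have hp1 : (3 * a + 1) / 2 * I ≤ 2.5 := mul_I_le ha1 ha2 hIa hIb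
  have hp2 : -2.5 ≤ (3 * a + 1) / 2 * I := by
    have := mul_I_le (I := -I) ha1 ha2 (by linarith) (by linarith)
    linarith
  have ht1 : (t : ℝ) < 6 := t_lt_six hD (by rw [ht]; linarith)
  have ht2 : (-6 : ℝ) < t := by
    have := t_lt_six (t := -t) hD (by rw [neg_mul, ht]; linarith)
    linarith
  have ht1' : t < 6 := by exact_mod_cast ht1
  have ht2' : -6 < t := by exact_mod_cast ht2
  have ht1'' : (t : ℝ) ≤ 5 := by exact_mod_cast (by omega : t ≤ 5)
  have ht2'' : (-5 : ℝ) ≤ t := by exact_mod_cast (by omega : -5 ≤ t)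
  have hs : (s : ℝ) = I + (1 + a) * t := by rw [hI]; ring
  obtain ⟨ps1, ps2⟩ := prod_le (t := t) ha1.le (by linarith : a ≤ 0.432876 + 0.000001)
    ht2'' ht1'' (by norm_num)
  have hs1 : (s : ℝ) < 10 := by rw [hs]; linarith
  have hs2 : (-10 : ℝ) < s := by rw [hs]; linarith
  have hs1' : s < 10 := by exact_mod_cast hs1
  have hs2' : -10 < s := by exact_mod_cast hs2
  have hs1'' : (s : ℝ) ≤ 9 := by exact_mod_cast (by omega : s ≤ 9)
  have hs2'' : (-9 : ℝ) ≤ s := by exact_mod_cast (by omega : -9 ≤ s)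
  have hEe : E = r + s * a + t * a ^ 2 := rfl
  obtain ⟨pa1, pa2⟩ := prod_le (t := s) ha1.le (by linarith : a ≤ 0.432876 + 0.000001)
    hs2'' hs1'' (by norm_num)
  obtain ⟨pt1, pt2⟩ := prod_le (t := t) haa1.le (by linarith : a ^ 2 ≤ 0.187381 + 0.000002)
    ht2'' ht1'' (by norm_num)
  have hclose1 : (1000000 * r + 432876 * s + 187381 * t : ℝ) - 20 < 1000000 * E := by
    rw [hEe]; linarith
  have hclose2 : 1000000 * E < (1000000 * r + 432876 * s + 187381 * t : ℝ) + 20 := by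
    rw [hEe]; linarith
  have hr1 : (r : ℝ) < 29 := by linarith
  have hr2 : (-5 : ℝ) < r := by linarith
  have hr1' : r < 29 := by exact_mod_cast hr1
  have hr2' : -5 < r := by exact_mod_cast hr2
  have hbnd : 14 / 5 * M ≤ 12.1104 - 25 / 49 * E := by rw [← hg]; linarith
  have hkey : 4 * 49 / 25 * (m : ℝ) ^ 2 ≤ E * (12.1104 - 25 / 49 * E) ^ 2 := by
    rw [← hMM]
    have : (14 / 5 * M) ^ 2 ≤ (12.1104 - 25 / 49 * E) ^ 2 := by
      apply pow_le_pow_left₀ (by positivity) hbnd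
    calc 4 * 49 / 25 * (E * M ^ 2) = E * (14 / 5 * M) ^ 2 := by ring
      _ ≤ _ := mul_le_mul_of_nonneg_left this hG0.le
  have hm8 : (m : ℝ) < 9 := by
    by_contra hcon
    push Not at hcon
    have h1 := cubic_le hG0.le (by linarith : E ≤ 24)
    have h2 : (9 : ℝ) ^ 2 ≤ (m : ℝ) ^ 2 := pow_le_pow_left₀ (by norm_num) hcon 2
    linarith
  have hm8' : m < 9 := by exact_mod_cast hm8
  refine enum_spec ⟨by omega, by omega⟩ ⟨by omega, by omega⟩ ⟨by omega, by omega⟩ ?_ ?_ ?_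
    (m := m) ⟨by omega, by omega⟩ hN
  · have : (0 : ℝ) < (1000000 * r + 432876 * s + 187381 * t) + 20 := by linarith
    exact_mod_cast this
  · have : (25 : ℝ) * ((1000000 * r + 432876 * s + 187381 * t) - 20) ≤ 593409600 := by linarith
    exact_mod_cast this
  · rw [hN]
    set G : ℤ := 1000000 * r + 432876 * s + 187381 * t with hG
    have hGR : (G : ℝ) = 1000000 * r + 432876 * s + 187381 * t := by rw [hG]; push_cast; ring
    rw [← hGR] at hclose1 hclose2
    have : (4 * 49 ^ 3 * 10 ^ 18 * m ^ 2 : ℝ) ≤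
      25 * (G + 20) * (593409600 - 25 * (G - 20)) ^ 2 := by
      have e1 : 0 ≤ 593409600 - 25 * (1000000 * E) := by linarith
      have e2 : (593409600 - 25 * (1000000 * E)) ^ 2 ≤ (593409600 - 25 * ((G : ℝ) - 20)) ^ 2 :=
        pow_le_pow_left₀ e1 (by linarith) 2
      have e3 : 25 * (1000000 * E) * (593409600 - 25 * (1000000 * E)) ^ 2 ≤
          25 * ((G : ℝ) + 20) * (593409600 - 25 * ((G : ℝ) - 20)) ^ 2 := by
        apply mul_le_mul (by linarith) e2 (by positivity) (by linarith)
      refine le_trans ?_ e3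
      calc (4 * 49 ^ 3 * 10 ^ 18 * m ^ 2 : ℝ)
          = 25 * 49 ^ 2 * 10 ^ 18 * (4 * 49 / 25 * (m : ℝ) ^ 2) := by ring
        _ ≤ 25 * 49 ^ 2 * 10 ^ 18 * (E * (12.1104 - 25 / 49 * E) ^ 2) :=
          mul_le_mul_of_nonneg_left hkey (by norm_num)
        _ = _ := by ring
    exact_mod_cast this

theorem lattice_dvd {p q n d k q' j f : ℤ} {κ : Za} (hF : F p q = d * n ^ 2)
    (hq : q * q' = 1 - d * n ^ 2 * j) (hk : k = q' * p)
    (hf : κ.x + κ.y * k + κ.z * k ^ 2 = d * f) (x y z : ℤ) : ∃ γ : Za,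
      κ * ((⟨n * x - k * y - k ^ 2 * z, y, z⟩ : Za) * ⟨n * x - k * y - k ^ 2 * z, y, z⟩)
        = lin p q * γ := by
  set P := lin p q with hP
  set β : Za := ⟨n * x - k * y - k ^ 2 * z, y, z⟩ with hβ
  have hPP : P * adj P = C (d * n ^ 2) := by rw [mul_adj, hP, N_lin, hF]
  set α : Za := ⟨0, 1, 0⟩ with hα
  have hτ : α - C k = P * (C (-q') + C j * α * adj P) := by
    have e1 : P * (C (-q') + C j * α * adj P) = P * C (-q') + C j * α * (P * adj P) := by ring
    rw [e1, hPP, hk]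
    ext
    · simp [hP, hα]; ring
    · simp [hP, hα]; linear_combination -hq
    · simp [hP, hα]
  set τ := C (-q') + C j * α * adj P with hτd
  have hκ : κ = C (d * f) + P * τ * (C κ.y + C κ.z * (α + C k)) := by
    rw [← hτ, ← hf]
    ext <;> simp [hα] <;> ring
  have hb : β = C (n * x) + P * τ * (C y + C z * (α + C k)) := by
    rw [← hτ]
    ext <;> simp [hα, hβ] <;> ring
  set κ' := C κ.y + C κ.z * (α + C k)
  set β' := C y + C z * (α + C k)
  refine ⟨adj P * C (f * x ^ 2) + τ * κ' * (β * β)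
    + C (d * f) * (2 * C (n * x) * (τ * β') + P * (τ * β') * (τ * β')), ?_⟩
  have hcc : C (d * f) * (C (n * x) * C (n * x)) = P * adj P * C (f * x ^ 2) := by
    rw [hPP, ← C_mul, ← C_mul, ← C_mul]; congr 1; ring
  have e1 : κ * (β * β) = C (d * f) * (β * β) + P * τ * κ' * (β * β) := by
    nth_rewrite 1 [hκ]; ring
  have e2 : C (d * f) * (β * β) = C (d * f) * (C (n * x) * C (n * x))
      + P * (C (d * f) * (2 * C (n * x) * (τ * β') + P * (τ * β') * (τ * β'))) := by
    rw [hb]; ring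
  rw [e1, e2, hcc]; ring

theorem mk_sq {κ β γ μ ν P : Za} {K : ℤ} (hγ : κ * (β * β) = P * γ)
    (he : ν * (μ * μ) * γ = C K) : ν * κ * ((μ * β) * (μ * β)) = C K * P := by
  rw [← he]
  linear_combination ν * μ * μ * hγ

theorem read_z {h b : Za} {p q K : ℤ} (e : h * (b * b) = C K * lin p q) :
    (h * (b * b)).z = 0 := by rw [e]; simp

theorem read_yx {h b : Za} {p q c d m : ℤ} (e : h * (b * b) = C (c ^ 2) * lin p q)
    (hm : -(3 * p + q) = d * m ^ 2) :
    (h * (b * b)).y - 3 * (h * (b * b)).x = d * (c * m) ^ 2 := by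
  rw [e]; simp; linear_combination c ^ 2 * hm

theorem good {h b θ : Za} {p q c e : ℤ} (hh : h * (b * b) = C (c ^ 2) * lin p q)
    (hθ : θ * θ = C e * ((⟨1, 3, 0⟩ : Za) * h)) :
    ((⟨1, 3, 0⟩ : Za) * θ * b) * ((⟨1, 3, 0⟩ : Za) * θ * b)
      = C (11 * (e * c ^ 2)) * ((⟨5, -9, 0⟩ : Za) * lin p q) := by
  have h3 : C 11 * (⟨5, -9, 0⟩ : Za) = (⟨1, 3, 0⟩ : Za) * ⟨1, 3, 0⟩ * ⟨1, 3, 0⟩ := by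
    ext <;> simp
  rw [C_mul, C_mul]
  linear_combination (⟨1, 3, 0⟩ * ⟨1, 3, 0⟩ * b * b) * hθ
    + (⟨1, 3, 0⟩ * ⟨1, 3, 0⟩ * ⟨1, 3, 0⟩ * C e) * hh
    - (C e * C (c ^ 2) * lin p q) * h3

theorem ne_zero_of_unitlike {μ β ν γ : Za} {K : ℤ} (hK : K ≠ 0) (he : ν * (μ * μ) * γ = C K)
    (h : μ * β = 0) : β = 0 := by
  apply C_mul_eq_zero hK
  rw [← he]
  linear_combination (ν * μ * γ) * h

theorem cases11 {β γ : Za} {p q m : ℤ} (hβ : β ≠ 0)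
    (hγ : (⟨1, -1, -1⟩ : Za) * (β * β) = lin p q * γ) (hm : -(3 * p + q) = 11 * m ^ 2)
    (hl : γ ∈ ([⟨1, 0, 0⟩, ⟨1, -1, 0⟩, ⟨3, 1, 1⟩, ⟨6, 2, 1⟩, ⟨2, 1, 1⟩, ⟨4, 1, 1⟩,
      ⟨4, 0, 1⟩, ⟨11, 3, 2⟩] : List Za)) :
    ∃ (V : Za) (c : ℤ), c ≠ 0 ∧
      V * V = C (11 * (22 * 11 * c ^ 2)) * ((⟨5, -9, 0⟩ : Za) * lin p q) := by
  have hθ : (⟨-22, 77, -55⟩ : Za) * ⟨-22, 77, -55⟩ =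
      C (22 * 11) * ((⟨1, 3, 0⟩ : Za) * ⟨3, 0, -16⟩) := by ext <;> simp
  have ek : (⟨1, -1, -3⟩ : Za) * ⟨1, -1, -1⟩ = ⟨3, 0, -16⟩ := by ext <;> simp
  simp only [List.mem_cons, List.not_mem_nil, or_false] at hl
  rcases hl with rfl | rfl | rfl | rfl | rfl | rfl | rfl | rfl
  · have he : (1 : Za) * ((1 : Za) * 1) * ⟨1, 0, 0⟩ = C (1 ^ 2) := by ext <;> simp
    have h := mk_sq hγ he
    rw [show (1 : Za) * ⟨1, -1, -1⟩ = ⟨1, -1, -1⟩ by ext <;> simp] at h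
    exact absurd (ne_zero_of_unitlike (by norm_num) he (kill0 (read_z h) (read_yx h hm))) hβ
  · have he : (⟨1, -1, -3⟩ : Za) * (adj ⟨1, -2, -1⟩ * adj ⟨1, -2, -1⟩) * ⟨1, -1, 0⟩
      = C (2 ^ 2) := by ext <;> simp [adj]
    have h := mk_sq hγ he
    rw [ek] at h
    exact ⟨_, 2, by norm_num, good h hθ⟩
  · have he : (⟨1, -1, -3⟩ : Za) * (adj ⟨1, -2, 0⟩ * adj ⟨1, -2, 0⟩) * ⟨3, 1, 1⟩
      = C (3 ^ 2) := by ext <;> simp [adj]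
    have h := mk_sq hγ he
    rw [ek] at h
    exact ⟨_, 3, by norm_num, good h hθ⟩
  · have he : (⟨1, -1, -3⟩ : Za) * (adj ⟨0, 0, 1⟩ * adj ⟨0, 0, 1⟩) * ⟨6, 2, 1⟩
      = C (4 ^ 2) := by ext <;> simp [adj]
    have h := mk_sq hγ he
    rw [ek] at h
    exact ⟨_, 4, by norm_num, good h hθ⟩
  · have he : (adj ⟨2, 1, 1⟩ : Za) * ((1 : Za) * 1) * ⟨2, 1, 1⟩ = C (4 ^ 2) := by
      ext <;> simp [adj]
    have h := mk_sq hγ he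
    rw [show adj ⟨2, 1, 1⟩ * ⟨1, -1, -1⟩ = ⟨-4, 12, 6⟩ by ext <;> simp [adj]] at h
    exact absurd (ne_zero_of_unitlike (by norm_num) he (kill2 (read_z h) (read_yx h hm))) hβ
  · have he : (adj ⟨4, 1, 1⟩ : Za) * ((1 : Za) * 1) * ⟨4, 1, 1⟩ = C (2 ^ 2) := by
      ext <;> simp [adj]
    have h := mk_sq hγ he
    rw [show adj ⟨4, 1, 1⟩ * ⟨1, -1, -1⟩ = ⟨-4, 10, 0⟩ by ext <;> simp [adj]] at h
    exact absurd (ne_zero_of_unitlike (by norm_num) he (kill4 (read_z h) (read_yx h hm))) hβ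
  · have he : (adj ⟨4, 0, 1⟩ : Za) * ((1 : Za) * 1) * ⟨4, 0, 1⟩ = C (6 ^ 2) := by
      ext <;> simp [adj]
    have h := mk_sq hγ he
    rw [show adj ⟨4, 0, 1⟩ * ⟨1, -1, -1⟩ = ⟨-6, 24, -6⟩ by ext <;> simp [adj]] at h
    exact absurd (ne_zero_of_unitlike (by norm_num) he (kill6 (read_z h) (read_yx h hm))) hβ
  · have he : (adj ⟨11, 3, 2⟩ : Za) * ((1 : Za) * 1) * ⟨11, 3, 2⟩ = C (6 ^ 2) := by
      ext <;> simp [adj]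
    have h := mk_sq hγ he
    rw [show adj ⟨11, 3, 2⟩ * ⟨1, -1, -1⟩ = ⟨18, -30, -21⟩ by ext <;> simp [adj]] at h
    exact absurd (ne_zero_of_unitlike (by norm_num) he (kill8 (read_z h) (read_yx h hm))) hβ

theorem cases22 {β γ : Za} {p q m : ℤ} (hβ : β ≠ 0)
    (hγ : (⟨-5, 9, 6⟩ : Za) * (β * β) = lin p q * γ) (hm : -(3 * p + q) = 22 * m ^ 2)
    (hl : γ ∈ ([⟨1, 0, 0⟩, ⟨1, -1, 0⟩, ⟨3, 1, 1⟩, ⟨6, 2, 1⟩, ⟨2, 1, 1⟩, ⟨4, 1, 1⟩,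
      ⟨4, 0, 1⟩, ⟨11, 3, 2⟩] : List Za)) :
    ∃ (V : Za) (c : ℤ), c ≠ 0 ∧
      V * V = C (11 * (22 * 22 * c ^ 2)) * ((⟨5, -9, 0⟩ : Za) * lin p q) := by
  have hθ : (⟨66, -132, -22⟩ : Za) * ⟨66, -132, -22⟩ =
      C (22 * 22) * ((⟨1, 3, 0⟩ : Za) * ⟨-5, 9, 6⟩) := by ext <;> simp
  have ek : (⟨1, -1, -3⟩ : Za) * ⟨-5, 9, 6⟩ = ⟨-35, 38, 99⟩ := by ext <;> simp
  simp only [List.mem_cons, List.not_mem_nil, or_false] at hl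
  rcases hl with rfl | rfl | rfl | rfl | rfl | rfl | rfl | rfl
  · have he : (1 : Za) * ((1 : Za) * 1) * ⟨1, 0, 0⟩ = C (1 ^ 2) := by ext <;> simp
    have h := mk_sq hγ he
    rw [show (1 : Za) * ⟨-5, 9, 6⟩ = ⟨-5, 9, 6⟩ by ext <;> simp] at h
    exact ⟨_, 1, by norm_num, good h hθ⟩
  · have he : (⟨1, -1, -3⟩ : Za) * (adj ⟨1, -2, -1⟩ * adj ⟨1, -2, -1⟩) * ⟨1, -1, 0⟩
      = C (2 ^ 2) := by ext <;> simp [adj]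
    have h := mk_sq hγ he
    rw [ek] at h
    exact absurd (ne_zero_of_unitlike (by norm_num) he (kill1 (read_z h) (read_yx h hm))) hβ
  · have he : (⟨1, -1, -3⟩ : Za) * (adj ⟨1, -2, 0⟩ * adj ⟨1, -2, 0⟩) * ⟨3, 1, 1⟩
      = C (3 ^ 2) := by ext <;> simp [adj]
    have h := mk_sq hγ he
    rw [ek] at h
    exact absurd (ne_zero_of_unitlike (by norm_num) he (kill1 (read_z h) (read_yx h hm))) hβ
  · have he : (⟨1, -1, -3⟩ : Za) * (adj ⟨0, 0, 1⟩ * adj ⟨0, 0, 1⟩) * ⟨6, 2, 1⟩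
      = C (4 ^ 2) := by ext <;> simp [adj]
    have h := mk_sq hγ he
    rw [ek] at h
    exact absurd (ne_zero_of_unitlike (by norm_num) he (kill1 (read_z h) (read_yx h hm))) hβ
  · have he : (adj ⟨2, 1, 1⟩ : Za) * ((1 : Za) * 1) * ⟨2, 1, 1⟩ = C (4 ^ 2) := by
      ext <;> simp [adj]
    have h := mk_sq hγ he
    rw [show adj ⟨2, 1, 1⟩ * ⟨-5, 9, 6⟩ = ⟨40, -80, -28⟩ by ext <;> simp [adj]] at h
    exact absurd (ne_zero_of_unitlike (by norm_num) he (kill3 (read_z h) (read_yx h hm))) hβ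
  · have he : (adj ⟨4, 1, 1⟩ : Za) * ((1 : Za) * 1) * ⟨4, 1, 1⟩ = C (2 ^ 2) := by
      ext <;> simp [adj]
    have h := mk_sq hγ he
    rw [show adj ⟨4, 1, 1⟩ * ⟨-5, 9, 6⟩ = ⟨24, -58, 6⟩ by ext <;> simp [adj]] at h
    exact absurd (ne_zero_of_unitlike (by norm_num) he (kill5 (read_z h) (read_yx h hm))) hβ
  · have he : (adj ⟨4, 0, 1⟩ : Za) * ((1 : Za) * 1) * ⟨4, 0, 1⟩ = C (6 ^ 2) := by
      ext <;> simp [adj]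
    have h := mk_sq hγ he
    rw [show adj ⟨4, 0, 1⟩ * ⟨-5, 9, 6⟩ = ⟨42, -120, 54⟩ by ext <;> simp [adj]] at h
    exact absurd (ne_zero_of_unitlike (by norm_num) he (kill7 (read_z h) (read_yx h hm))) hβ
  · have he : (adj ⟨11, 3, 2⟩ : Za) * ((1 : Za) * 1) * ⟨11, 3, 2⟩ = C (6 ^ 2) := by
      ext <;> simp [adj]
    have h := mk_sq hγ he
    rw [show adj ⟨11, 3, 2⟩ * ⟨-5, 9, 6⟩ = ⟨-120, 228, 114⟩ by ext <;> simp [adj]] at h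
    exact absurd (ne_zero_of_unitlike (by norm_num) he (kill9 (read_z h) (read_yx h hm))) hβ


theorem ev_lin_pos {a : ℝ} (ha : a ^ 3 + a ^ 2 + 4 * a - 2 = 0) (ha1 : 0.432876 < a)
    {b : Za} (hF : 0 < N b) : 0 < ev a b := by
  have h := ev_mul_S ha b
  have hS : 0 ≤ S a b := by
    unfold S
    have : 0 ≤ (3 * a ^ 2 + 2 * a + 15) / 4 := by nlinarith
    positivity
  have hFR : (0 : ℝ) < N b := by exact_mod_cast hF
  rw [← h] at hFR
  exact pos_of_mul_pos_left hFR hS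

theorem coprime_q_F {p q : ℤ} (h : IsCoprime p q) : IsCoprime q (F p q) := by
  have e : F p q = p ^ 3 + q * (p ^ 2 + 4 * p * q - 2 * q ^ 2) := by unfold F; ring
  rw [e]
  exact (IsCoprime.pow_right h.symm).add_mul_left_right _

theorem exists_V11 {p q m n : ℤ} (h : IsCoprime p q) (hn : 0 < n)
    (hm : -(3 * p + q) = 11 * m ^ 2) (hF : F p q = 11 * n ^ 2) :
    ∃ (V : Za) (c : ℤ), c ≠ 0 ∧
      V * V = C (11 * (22 * 11 * c ^ 2)) * ((⟨5, -9, 0⟩ : Za) * lin p q) := by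
  obtain ⟨a, ha, ha1, ha2⟩ := exists_root
  obtain ⟨q', j, hj⟩ := hF ▸ coprime_q_F h
  have hq : q * q' = 1 - 11 * n ^ 2 * j := by linarith
  have hk3 : 3 * (q' * p) + 1 = 11 * (n ^ 2 * j - m ^ 2 * q') := by
    linear_combination -q' * hm - hq
  obtain ⟨t, ht⟩ : ∃ t, q' * p = 11 * t + 7 := ⟨(q' * p) / 11, by omega⟩
  have hκ : N ⟨1, -1, -1⟩ = 11 := by simp [N]
  have hPP : 0 < N (lin p q) := by rw [N_lin, hF]; positivity
  obtain ⟨β, γ, m', g, hβ, hγ, hm0, hN, hg0, hg, hb⟩ := exists_gamma ha (k := q' * p) hn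
    (by norm_num) hF hκ (ev_lin_pos ha ha1 (by rw [hκ]; norm_num)) (ev_lin_pos ha ha1 hPP)
    (lattice_dvd (f := -5 - 15 * t - 11 * t ^ 2) hF hq rfl (by
      simp only; rw [ht]; ring))
  exact cases11 hβ hγ hm (gamma_list ha ha1 ha2 hm0 hN hg0 hg hb)

theorem exists_V22 {p q m n : ℤ} (h : IsCoprime p q) (hn : 0 < n)
    (hm : -(3 * p + q) = 22 * m ^ 2) (hF : F p q = 22 * n ^ 2) :
    ∃ (V : Za) (c : ℤ), c ≠ 0 ∧
      V * V = C (11 * (22 * 22 * c ^ 2)) * ((⟨5, -9, 0⟩ : Za) * lin p q) := by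
  obtain ⟨a, ha, ha1, ha2⟩ := exists_root
  obtain ⟨q', j, hj⟩ := hF ▸ coprime_q_F h
  have hq : q * q' = 1 - 22 * n ^ 2 * j := by linarith
  have hk3 : 3 * (q' * p) + 1 = 22 * (n ^ 2 * j - m ^ 2 * q') := by
    linear_combination -q' * hm - hq
  obtain ⟨t, ht⟩ : ∃ t, q' * p = 22 * t + 7 := ⟨(q' * p) / 22, by omega⟩
  have hκ : N ⟨-5, 9, 6⟩ = 22 := by simp [N]
  have hPP : 0 < N (lin p q) := by rw [N_lin, hF]; positivity
  obtain ⟨β, γ, m', g, hβ, hγ, hm0, hN, hg0, hg, hb⟩ := exists_gamma ha (k := q' * p) hn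
    (by norm_num) hF hκ (ev_lin_pos ha ha1 (by rw [hκ]; norm_num)) (ev_lin_pos ha ha1 hPP)
    (lattice_dvd (f := 16 + 93 * t + 132 * t ^ 2) hF hq rfl (by
      simp only; rw [ht]; ring))
  exact cases22 hβ hγ hm (gamma_list ha ha1 ha2 hm0 hN hg0 hg hb)

/-- Numerator of the duplication map. -/
def G1 (p q : ℤ) : ℤ := -5 * p ^ 4 - 12 * p ^ 3 * q - 38 * p ^ 2 * q ^ 2 + 4 * p * q ^ 3 + 3 * q ^ 4
/-- Denominator of the duplication map. -/
def G2 (p q : ℤ) : ℤ := -9 * p ^ 4 + 4 * p ^ 3 * q + 10 * p ^ 2 * q ^ 2 + 4 * p * q ^ 3 + 7 * q ^ 4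

theorem descent_core {p q m d c : ℤ} {V : Za} (hd : d ≠ 0) (hc : c ≠ 0)
    (hm : -(3 * p + q) = d * m ^ 2) (h0 : 3 * p + q ≠ 0)
    (hV : V * V = C (11 * (22 * d * c ^ 2)) * ((⟨5, -9, 0⟩ : Za) * lin p q)) :
    ∃ l1 l2 : ℤ, 3 * l1 + l2 ≠ 0 ∧ IsSquare (-(3 * l1 + l2) * F l1 l2) ∧
      p * G2 l1 l2 = q * G1 l1 l2 := by
  obtain ⟨x, y, z⟩ := V
  have hx := congrArg Za.x hV
  have hy := congrArg Za.y hV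
  have hz := congrArg Za.z hV
  simp only [mul_x, mul_y, mul_z, C_x, C_y, C_z, lin_x, lin_y, lin_z] at hx hy hz
  have e0 : x ^ 2 + 4 * y * z - 2 * z ^ 2 = 55 * (22 * d * c ^ 2) * p := by linear_combination hx
  have e1 : 2 * x * y - 8 * y * z + 6 * z ^ 2 = -11 * (22 * d * c ^ 2) * (9 * p + 5 * q) := by
    linear_combination hy
  have e2 : 2 * x * z + y ^ 2 - 2 * y * z - 3 * z ^ 2 = 99 * (22 * d * c ^ 2) * q := by
    linear_combination hz
  have hA : 81*x^2+90*x*y+50*x*z+25*y^2-86*y*z+33*z^2 = 0 := by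
    linear_combination 81 * e0 + 45 * e1 + 25 * e2
  have hCc : 22 * d * c ^ 2 ≠ 0 := by positivity
  set l1 := -15*x+13*y-7*z with hl1
  set l2 := -27*x-15*y+13*z with hl2
  have hFl : F l1 l2 = -(352 * d * c * m) ^ 2 * (3 * l1 + l2) := by
    have h45 : 45 * F l1 l2 = 45 * (-(352 * d * c * m) ^ 2 * (3 * l1 + l2)) := by
      unfold F
      rw [hl1, hl2]
      linear_combination (4608 * x + 30144 * y - 20608 * z) * hA
        + 512 * (-72*x+24*y-8*z) * (27 * e0 + 5 * e2)
        - 512 * (-72*x+24*y-8*z) * 495 * (22 * d * c ^ 2) * hm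
    linarith
  refine ⟨l1, l2, ?_, ⟨352 * d * c * m * (3 * l1 + l2), by rw [hFl]; ring⟩, ?_⟩
  · intro hL
    rw [hL, mul_zero] at hFl
    have h2 : l2 = -3 * l1 := by linarith
    have h1 : l1 = 0 := by
      rw [h2] at hFl
      have : l1 ^ 3 = 0 := by unfold F at hFl; linarith
      exact pow_eq_zero_iff (by norm_num) |>.mp this
    have hyx : y = 6 * x := by omega
    have hzx : z = 9 * x := by omega
    rw [hyx, hzx] at e0 e2
    apply h0
    have : 22 * d * c ^ 2 * (3 * p + q) = 0 := by linarith
    exact (mul_eq_zero.mp this).resolve_left hCc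
  · have key : 9 * (x ^ 2 + 4 * y * z - 2 * z ^ 2) * G2 l1 l2
      - 5 * (2 * x * z + y ^ 2 - 2 * y * z - 3 * z ^ 2) * G1 l1 l2
      = (81*x^2+90*x*y+50*x*z+25*y^2-86*y*z+33*z^2) * (716688*x^4+206496*x^3*y-836352*x^3*z+190080*x^2*y^2+1626048*x^2*y*z-988704*x^2*z^2
      -572064*x*y^3+2717568*x*y^2*z-3285984*x*y*z^2+1134336*x*z^3+243184*y^4-86848*y^3*z
      -651968*y^2*z^2+720640*y*z^3-212336*z^4) := by
      rw [hl1, hl2]; unfold G1 G2; ring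
    have : 495 * (22 * d * c ^ 2) * (p * G2 l1 l2 - q * G1 l1 l2) = 0 := by
      rw [hA, zero_mul, e0, e2] at key
      linear_combination key
    have h3 := (mul_eq_zero.mp this).resolve_left (by positivity)
    linarith

theorem G_bezout1 (p q : ℤ) : (-367*p^3-124*p^2*q-283*p*q^2-42*q^3) * G1 p q
    + (-1517*p^3-116*p^2*q+135*p*q^2+18*q^3) * G2 p q = 15488 * p ^ 7 := by
  unfold G1 G2; ring

theorem G_bezout2 (p q : ℤ) : (432*p^3-633*p^2*q-302*p*q^2+279*q^3) * G1 p q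
    + (-240*p^3-331*p^2*q-1226*p*q^2+2093*q^3) * G2 p q = 15488 * q ^ 7 := by
  unfold G1 G2; ring

/-- Divide a nonzero pair by its gcd. -/
theorem coprime_pair {a b : ℤ} (h : 3 * a + b ≠ 0) : ∃ g p q : ℤ, g ≠ 0 ∧ a = g * p ∧ b = g * q ∧
    IsCoprime p q := by
  have hg : Int.gcd a b ≠ 0 := by
    intro h0
    rw [Int.gcd_eq_zero_iff] at h0
    apply h; rw [h0.1, h0.2]; rfl
  obtain ⟨g, p, q, hg0, hc, ha, hb⟩ := Int.exists_gcd_one' (Nat.pos_of_ne_zero hg)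
  exact ⟨g, p, q, by exact_mod_cast hg0.ne', by rw [ha]; ring, by rw [hb]; ring,
    Int.isCoprime_iff_gcd_eq_one.mpr hc⟩

/-- Points on the curve in coprime coordinates. -/
def Pt (p q : ℤ) : Prop := IsCoprime p q ∧ 3 * p + q ≠ 0 ∧ IsSquare (-(3 * p + q) * F p q)

theorem isSquare_of_mul_sq {g a : ℤ} (hg : g ≠ 0) (h : IsSquare (g ^ 2 * a)) : IsSquare a := by
  obtain ⟨r, hr⟩ := h
  have : g ∣ r := by
    rw [← Int.pow_dvd_pow_iff (n := 2) (by norm_num)]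
    exact ⟨a, by rw [hr]; ring⟩
  obtain ⟨s, rfl⟩ := this
  refine ⟨s, ?_⟩
  have : g ^ 2 * (a - s * s) = 0 := by linear_combination hr
  have := (mul_eq_zero.mp this).resolve_left (by positivity)
  linarith

theorem Pt_of_pair {a b : ℤ} (h : 3 * a + b ≠ 0) (hs : IsSquare (-(3 * a + b) * F a b)) :
    ∃ g p q : ℤ, g ≠ 0 ∧ a = g * p ∧ b = g * q ∧ Pt p q := by
  obtain ⟨g, p, q, hg, rfl, rfl, hc⟩ := coprime_pair h
  refine ⟨g, p, q, hg, rfl, rfl, hc, ?_, ?_⟩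
  · intro h0; apply h; linear_combination g * h0
  · apply isSquare_of_mul_sq (g := g ^ 2) (by positivity)
    convert hs using 1
    unfold F; ring

theorem Pt_mod11 : ∀ p q r : ZMod 11,
    -(3 * p + q) * (p ^ 3 + p ^ 2 * q + 4 * p * q ^ 2 - 2 * q ^ 3) = r * r → p + 4 * q = 0 := by
  decide +kernel

theorem F_ne_zero {p q : ℤ} (h : IsCoprime p q) : F p q ≠ 0 := by
  rw [← N_lin]
  apply N_ne_zero
  intro h0
  have h1 := congrArg Za.x h0
  have h2 := congrArg Za.y h0
  simp at h1 h2
  rw [h1, h2] at h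
  exact not_isCoprime_zero_zero h

theorem dvd11 {q : ℤ} (h : (11 : ℤ) ∣ 6 * q ^ 3) : (11 : ℤ) ∣ q := by
  have hp : Prime (11 : ℤ) := by norm_num
  rcases hp.dvd_or_dvd h with h | h
  · norm_num at h
  · exact hp.dvd_of_dvd_pow h

theorem Pt_d {p q : ℤ} (h : Pt p q) (hT : 0 < -(3 * p + q)) :
    ∃ m n : ℤ, 0 < n ∧ ((-(3 * p + q) = 11 * m ^ 2 ∧ F p q = 11 * n ^ 2) ∨
      (-(3 * p + q) = 22 * m ^ 2 ∧ F p q = 22 * n ^ 2)) := by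
  obtain ⟨hc, h0, r, hr⟩ := h
  have hF0 := F_ne_zero hc
  obtain ⟨a, b, hab, hsq⟩ := Nat.sq_mul_squarefree (-(3 * p + q)).natAbs
  have hTab : -(3 * p + q) = a * (b : ℤ) ^ 2 := by
    have : ((-(3 * p + q)).natAbs : ℤ) = -(3 * p + q) := Int.natAbs_of_nonneg hT.le
    rw [← this, ← hab]; push_cast; ring
  have hb0 : (b : ℤ) ≠ 0 := by rintro hb; rw [hb] at hTab; norm_num at hTab; omega
  have ha0 : (a : ℤ) ≠ 0 := by rintro hb; rw [hb] at hTab; norm_num at hTab; omega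
  obtain ⟨s, hs⟩ : IsSquare ((a : ℤ) * F p q) := by
    apply isSquare_of_mul_sq hb0
    refine ⟨r, ?_⟩
    rw [← hr, hTab]; ring
  have has : (a : ℤ) ∣ s := by
    have hsq' : Squarefree (a : ℤ) := Int.squarefree_natCast.mpr hsq
    exact (hsq'.dvd_pow_iff_dvd (n := 2) (by norm_num)).mp ⟨F p q, by rw [hs]; ring⟩
  obtain ⟨n, rfl⟩ := has
  have hFn : F p q = a * n ^ 2 := by
    apply mul_left_cancel₀ ha0; rw [hs]; ring
  have hcop : IsCoprime (a : ℤ) p := by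
    have h1 : IsCoprime p (-(3 * p + q)) := by
      have : IsCoprime p (-q + p * (-3)) := hc.neg_right.add_mul_left_right _
      convert this using 1; ring
    rw [hTab] at h1
    exact (IsCoprime.of_mul_right_left h1).symm
  have h88 : a ∣ 88 := by
    have h1 : (a : ℤ) ∣ p ^ 3 * 88 := by
      have e2 : p ^ 3 * 88 = F p q + (-(3 * p + q)) * (-29*p^2+10*p*q-2*q^2) := by
        unfold F; ring
      rw [e2, hFn, hTab]
      exact dvd_add (Dvd.intro _ rfl) (Dvd.intro (b ^ 2 * (-29*p^2+10*p*q-2*q^2)) (by ring))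
    have := (hcop.pow_right (n := 3)).dvd_of_dvd_mul_left h1
    exact_mod_cast this
  have hn0 : n ≠ 0 := by rintro rfl; apply hF0; rw [hFn]; ring
  have hmod : (11 : ℤ) ∣ p + 4 * q := by
    have := congrArg (Int.cast : ℤ → ZMod 11) hr
    unfold F at this
    push_cast at this
    have h2 := Pt_mod11 _ _ _ this
    exact (ZMod.intCast_zmod_eq_zero_iff_dvd (p + 4 * q) 11).mp (by push_cast; exact h2)
  have hp11 : Prime (11 : ℤ) := by norm_num
  have h11 : (11 : ℤ) ∣ a := by
    by_contra hna
    obtain ⟨t, ht⟩ := hmod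
    have hpe : p = -4 * q + 11 * t := by linarith
    have hFd : (11 : ℤ) ∣ F p q := by
      rw [hpe]
      exact ⟨-6*q^3+44*t*q^2-121*t^2*q+121*t^3, by unfold F; ring⟩
    rw [hFn] at hFd
    obtain ⟨u, hu⟩ := hp11.dvd_of_dvd_pow ((hp11.dvd_or_dvd hFd).resolve_left hna)
    have h11q : (11 : ℤ) ∣ q := by
      apply dvd11
      refine ⟨-(a * u ^ 2) + 4*t*q^2-11*t^2*q+11*t^3, ?_⟩
      have : F p q = 121 * (a * u ^ 2) := by rw [hFn, hu]; ring
      rw [hpe] at this; unfold F at this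
      linarith
    have h11p : (11 : ℤ) ∣ p := by rw [hpe]; exact dvd_add (Dvd.dvd.mul_left h11q _) ⟨t, rfl⟩
    have := hc.isUnit_of_dvd' h11p h11q
    exact hp11.not_isUnit this
  have h11' : 11 ∣ a := by exact_mod_cast h11
  obtain ⟨e, rfl⟩ := h11'
  have he : e ∣ 8 := Nat.dvd_of_mul_dvd_mul_left (by norm_num : 0 < 11) h88
  have he12 : e = 1 ∨ e = 2 := by
    have : e ≤ 8 := Nat.le_of_dvd (by norm_num) he
    interval_cases e
    all_goals first | omega | skip
    · exact absurd (hsq 2 (by norm_num)) (by norm_num)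
    · exact absurd (hsq 2 (by norm_num)) (by norm_num)
  refine ⟨b, |n|, abs_pos.mpr hn0, ?_⟩
  rw [sq_abs]
  rcases he12 with rfl | rfl
  · left; exact ⟨by rw [hTab]; norm_num, by rw [hFn]; norm_num⟩
  · right; exact ⟨by rw [hTab]; norm_num, by rw [hFn]; norm_num⟩

theorem of_prop {p q x y : ℤ} (hc : IsCoprime p q) (h : p * y = q * x) :
    ∃ k, x = k * p ∧ y = k * q := by
  obtain ⟨α, β, hab⟩ := hc
  exact ⟨α * x + β * y, by linear_combination (-x) * hab - β * h,
    by linear_combination (-y) * hab + α * h⟩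

theorem F_neg (p q : ℤ) : F (-p) (-q) = -F p q := by unfold F; ring

theorem Pt_neg {p q : ℤ} (h : Pt p q) : Pt (-p) (-q) := by
  obtain ⟨hc, h0, hs⟩ := h
  refine ⟨hc.neg_neg, ?_, ?_⟩
  · intro h; apply h0; linarith
  · rw [F_neg]; convert hs using 1; ring

theorem Pt_step_pos {p q : ℤ} (h : Pt p q) (hT : 0 < -(3 * p + q)) :
    ∃ p' q' k : ℤ, Pt p' q' ∧ G1 p' q' = k * p ∧ G2 p' q' = k * q := by
  have main : ∃ l1 l2 : ℤ, 3 * l1 + l2 ≠ 0 ∧ IsSquare (-(3 * l1 + l2) * F l1 l2) ∧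
      p * G2 l1 l2 = q * G1 l1 l2 := by
    obtain ⟨m, n, hn, ⟨hm, hF⟩ | ⟨hm, hF⟩⟩ := Pt_d h hT
    · obtain ⟨V, c, hc, hV⟩ := exists_V11 h.1 hn hm hF
      exact descent_core (by norm_num) hc hm h.2.1 hV
    · obtain ⟨V, c, hc, hV⟩ := exists_V22 h.1 hn hm hF
      exact descent_core (by norm_num) hc hm h.2.1 hV
  obtain ⟨l1, l2, hl, hs, hG⟩ := main
  obtain ⟨g, p', q', hg, rfl, rfl, hpt⟩ := Pt_of_pair hl hs
  have hG' : p * G2 p' q' = q * G1 p' q' := by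
    have : g ^ 4 * (p * G2 p' q' - q * G1 p' q') = 0 := by
      unfold G1 G2 at *; linear_combination hG
    have := (mul_eq_zero.mp this).resolve_left (by positivity)
    linarith
  obtain ⟨k, h1, h2⟩ := of_prop h.1 hG'
  exact ⟨p', q', k, hpt, h1, h2⟩

theorem Pt_step {p q : ℤ} (h : Pt p q) :
    ∃ p' q' k : ℤ, Pt p' q' ∧ G1 p' q' = k * p ∧ G2 p' q' = k * q := by
  rcases lt_or_gt_of_ne h.2.1 with hT | hT
  · exact Pt_step_pos h (by linarith)
  · obtain ⟨p', q', k, hpt, h1, h2⟩ := Pt_step_pos (Pt_neg h) (by linarith)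
    exact ⟨p', q', -k, hpt, by rw [h1]; ring, by rw [h2]; ring⟩

theorem cubic_bound {p q H : ℤ} (hp : |p| ≤ H) (hq : |q| ≤ H) (a b c d : ℤ) :
    |a * p ^ 3 + b * p ^ 2 * q + c * p * q ^ 2 + d * q ^ 3| ≤ (|a| + |b| + |c| + |d|) * H ^ 3 := by
  have hH : 0 ≤ H := (abs_nonneg p).trans hp
  have h1 : |a * p ^ 3| ≤ |a| * H ^ 3 := by
    rw [abs_mul, abs_pow]; gcongr
  have h2 : |b * p ^ 2 * q| ≤ |b| * H ^ 3 := by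
    rw [abs_mul, abs_mul, abs_pow]
    calc |b| * |p| ^ 2 * |q| ≤ |b| * H ^ 2 * H := by gcongr
      _ = _ := by ring
  have h3 : |c * p * q ^ 2| ≤ |c| * H ^ 3 := by
    rw [abs_mul, abs_mul, abs_pow]
    calc |c| * |p| * |q| ^ 2 ≤ |c| * H * H ^ 2 := by gcongr
      _ = _ := by ring
  have h4 : |d * q ^ 3| ≤ |d| * H ^ 3 := by
    rw [abs_mul, abs_pow]; gcongr
  have := abs_add_le (a * p ^ 3 + b * p ^ 2 * q + c * p * q ^ 2) (d * q ^ 3)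
  have := abs_add_le (a * p ^ 3 + b * p ^ 2 * q) (c * p * q ^ 2)
  have := abs_add_le (a * p ^ 3) (b * p ^ 2 * q)
  linarith

theorem height_aux {p q k u v H H' x : ℤ} (hk : |k| ≤ 15488) (hp : |p| ≤ H) (hq : |q| ≤ H)
    (hH' : 0 < H') (hx : |x| = H') {A B : ℤ} (hu : |u| ≤ A * H' ^ 3) (hv : |v| ≤ B * H' ^ 3)
    (hAB : A + B ≤ 5536) (hA : 0 ≤ A) (hB : 0 ≤ B)
    (he : u * (k * p) + v * (k * q) = 15488 * x ^ 7) : H' ^ 4 ≤ 5536 * H := by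
  have hH : 0 ≤ H := (abs_nonneg p).trans hp
  have h1 : 15488 * H' ^ 7 = |u * (k * p) + v * (k * q)| := by
    rw [he, abs_mul, abs_pow, hx]; rfl
  have h2 : |u * (k * p) + v * (k * q)| ≤ |u| * (|k| * |p|) + |v| * (|k| * |q|) := by
    refine (abs_add_le _ _).trans (le_of_eq ?_)
    rw [abs_mul, abs_mul, abs_mul, abs_mul]
  have h3 : |u| * (|k| * |p|) + |v| * (|k| * |q|)
      ≤ (A * H' ^ 3) * (15488 * H) + (B * H' ^ 3) * (15488 * H) := by gcongr
  have h4 : 15488 * H' ^ 3 * H' ^ 4 ≤ 15488 * H' ^ 3 * (5536 * H) := by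
    calc 15488 * H' ^ 3 * H' ^ 4 = 15488 * H' ^ 7 := by ring
      _ ≤ (A * H' ^ 3) * (15488 * H) + (B * H' ^ 3) * (15488 * H) := by linarith
      _ = 15488 * H' ^ 3 * ((A + B) * H) := by ring
      _ ≤ _ := by gcongr
  exact le_of_mul_le_mul_left h4 (by positivity)

theorem height_bound {p q p' q' k : ℤ} (hc : IsCoprime p' q')
    (h1 : G1 p' q' = k * p) (h2 : G2 p' q' = k * q) :
    (max |p'| |q'|) ^ 4 ≤ 5536 * max |p| |q| := by
  have b1 := G_bezout1 p' q'
  have b2 := G_bezout2 p' q'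
  rw [h1, h2] at b1 b2
  have hk : |k| ≤ 15488 := by
    have hd : k ∣ 15488 := by
      obtain ⟨α, β, hab⟩ : IsCoprime (p' ^ 7) (q' ^ 7) := hc.pow
      have e : (15488 : ℤ) = α * (15488 * p' ^ 7) + β * (15488 * q' ^ 7) := by
        linear_combination (-15488) * hab
      rw [e, ← b1, ← b2]
      exact ⟨α * ((-367*p'^3-124*p'^2*q'-283*p'*q'^2-42*q'^3) * p
        + (-1517*p'^3-116*p'^2*q'+135*p'*q'^2+18*q'^3) * q)
        + β * ((432*p'^3-633*p'^2*q'-302*p'*q'^2+279*q'^3) * p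
        + (-240*p'^3-331*p'^2*q'-1226*p'*q'^2+2093*q'^3) * q), by ring⟩
    exact Int.le_of_dvd (by norm_num) ((abs_dvd _ _).mpr hd)
  set H' := max |p'| |q'| with hH'
  have hp' : |p'| ≤ H' := le_max_left _ _
  have hq' : |q'| ≤ H' := le_max_right _ _
  have hpos : 0 < H' := by
    rcases eq_or_ne p' 0 with h | h
    · have : q' ≠ 0 := by
        rintro h0; rw [h, h0] at hc; exact not_isCoprime_zero_zero hc
      exact lt_of_lt_of_le (abs_pos.mpr this) hq'
    · exact lt_of_lt_of_le (abs_pos.mpr h) hp'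
  have hpm : |p| ≤ max |p| |q| := le_max_left _ _
  have hqm : |q| ≤ max |p| |q| := le_max_right _ _
  rcases max_choice |p'| |q'| with hm | hm
  · refine height_aux hk hpm hqm hpos (x := p') hm.symm (cubic_bound hp' hq' (-367) (-124) (-283) (-42))
      (cubic_bound hp' hq' (-1517) (-116) 135 18) (by norm_num) (by norm_num) (by norm_num) ?_
    linear_combination b1
  · refine height_aux hk hpm hqm hpos (x := q') hm.symm (cubic_bound hp' hq' 432 (-633) (-302) 279)
      (cubic_bound hp' hq' (-240) (-331) (-1226) 2093) (by norm_num) (by norm_num) (by norm_num) ?_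
    linear_combination b2

/-- Residue test showing that an integer is not a square. -/
def nsq (v : ℤ) : Bool :=
  decide (v < 0) || !(List.elem (v % 11) [0, 1, 3, 4, 5, 9]) || !(List.elem (v % 9) [0, 1, 4, 7])
    || !(List.elem (v % 64) [0, 1, 4, 9, 16, 17, 25, 33, 36, 41, 49, 57])

theorem sq11 : ∀ r : ℕ, r < 11 → List.elem (((r : ℤ) * r) % 11) [0, 1, 3, 4, 5, 9] = true := by decide
theorem sq9 : ∀ r : ℕ, r < 9 → List.elem (((r : ℤ) * r) % 9) [0, 1, 4, 7] = true := by decide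
theorem sq64 : ∀ r : ℕ, r < 64 → List.elem (((r : ℤ) * r) % 64)
    [0, 1, 4, 9, 16, 17, 25, 33, 36, 41, 49, 57] = true := by decide +kernel

theorem sq_red (r : ℤ) (m : ℕ) (hm : 0 < m) : ∃ s : ℕ, s < m ∧ (r * r) % m = ((s : ℤ) * s) % m := by
  refine ⟨(r % m).toNat, ?_, ?_⟩
  · have := Int.emod_lt_of_pos r (by exact_mod_cast hm : (0 : ℤ) < m)
    omega
  · rw [Int.toNat_of_nonneg (Int.emod_nonneg _ (by omega)), Int.mul_emod]

theorem nsq_spec {v : ℤ} (h : nsq v = true) : ¬ IsSquare v := by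
  rintro ⟨r, rfl⟩
  obtain ⟨s, hs, e⟩ := sq_red r 11 (by norm_num)
  obtain ⟨s', hs', e'⟩ := sq_red r 9 (by norm_num)
  obtain ⟨s'', hs'', e''⟩ := sq_red r 64 (by norm_num)
  push_cast at e e' e''
  unfold nsq at h
  rw [e, e', e'', sq11 s hs, sq9 s' hs', sq64 s'' hs''] at h
  simp at h
  nlinarith

/-- Base check in the box `|p|, |q| ≤ 17`. -/
def baseTest : Bool :=
  allBelow (fun i => allBelow (fun j =>
    (Nat.gcd (i - 17 : ℤ).natAbs (j - 17 : ℤ).natAbs != 1) ||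
    decide (3 * (i - 17 : ℤ) + (j - 17) = 0) ||
    nsq (-(3 * (i - 17 : ℤ) + (j - 17)) * F (i - 17) (j - 17))) 35) 35

theorem baseTest_true : baseTest = true := by decide +kernel

theorem no_small {p q : ℤ} (h : Pt p q) (hp : |p| ≤ 17) (hq : |q| ≤ 17) : False := by
  obtain ⟨hc, h0, hs⟩ := h
  rw [abs_le] at hp hq
  have h1 := allBelow_spec baseTest_true (p + 17).toNat (by omega)
  have h2 := allBelow_spec h1 (q + 17).toNat (by omega)
  have ep : (((p + 17).toNat : ℤ) - 17) = p := by omega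
  have eq : (((q + 17).toNat : ℤ) - 17) = q := by omega
  simp only [ep, eq] at h2
  have hg : Nat.gcd p.natAbs q.natAbs = 1 := Int.isCoprime_iff_gcd_eq_one.mp hc
  rw [hg] at h2
  simp only [bne_self_eq_false, Bool.false_or, Bool.or_eq_true, decide_eq_true_eq] at h2
  rcases h2 with h2 | h2
  · exact h0 h2
  · exact nsq_spec h2 hs

theorem no_Pt_aux : ∀ (n : ℕ) (p q : ℤ), max |p| |q| ≤ n → ¬ Pt p q := by
  intro n
  induction n using Nat.strong_induction_on with
  | _ n ih =>
    intro p q hn h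
    obtain ⟨p', q', k, h', h1, h2⟩ := Pt_step h
    have hb := height_bound h'.1 h1 h2
    set H' := max |p'| |q'| with hH'
    have hp' : |p'| ≤ H' := le_max_left _ _
    have hq' : |q'| ≤ H' := le_max_right _ _
    have hH0 : 0 ≤ H' := (abs_nonneg _).trans hp'
    rcases lt_or_ge H' (n : ℤ) with hlt | hge
    · exact ih H'.toNat (by omega) p' q' (by omega) h'
    · have : H' ≤ 17 := by
        by_contra hcon
        push Not at hcon
        have h18 : 18 ≤ H' := by omega
        have : H' ^ 4 ≤ 5536 * H' := by linarith
        have h3 : H' * 18 ^ 3 ≤ H' * H' ^ 3 := by gcongr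
        nlinarith
      exact no_small h' (hp'.trans this) (hq'.trans this)

theorem no_Pt {p q : ℤ} : ¬ Pt p q := by
  have h0 : 0 ≤ max |p| |q| := (abs_nonneg p).trans (le_max_left _ _)
  exact no_Pt_aux (max |p| |q|).toNat p q (by omega)

theorem no_rat1 (X t : ℚ) : t ^ 2 ≠ -(4 * X ^ 3 + 7 * X ^ 2 - 6 * X + 19) := by
  intro h
  set a := X.num with ha
  set b : ℤ := (X.den : ℤ) with hb
  have hb0 : b ≠ 0 := by rw [hb]; exact_mod_cast X.den_nz
  have hbQ : (b : ℚ) ≠ 0 := by exact_mod_cast hb0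
  have hX : X * b = a := by rw [hb, ha]; exact_mod_cast Rat.mul_den_eq_num X
  have h3 : 3 * (7 * b + a) + (-3 * a + b) = 22 * b := by ring
  have hs : IsSquare (-(3 * (7 * b + a) + (-3 * a + b)) * F (7 * b + a) (-3 * a + b)) := by
    rw [← Rat.isSquare_intCast_iff]
    refine ⟨t * (22 * b ^ 2), ?_⟩
    unfold F
    push_cast
    rw [← hX]
    linear_combination (-484 * (b : ℚ) ^ 4) * h
  obtain ⟨g, p, q, -, -, -, hpt⟩ := Pt_of_pair (by rw [h3]; positivity) hs
  exact no_Pt hpt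

/-- First homogeneous cubic. -/
def fA (a b : ℤ) : ℤ := 4 * a ^ 3 - 4 * a ^ 2 * b - 28 * a * b ^ 2 + 41 * b ^ 3
/-- Second homogeneous cubic. -/
def fB (a b : ℤ) : ℤ := 4 * a ^ 3 + 7 * a ^ 2 * b - 6 * a * b ^ 2 + 19 * b ^ 3

theorem fAB_bezout1 (a b : ℤ) : (-16*a^2+40*a*b-25*b^2) * fA a b
    + (16*a^2-84*a*b+124*b^2) * fB a b = 1331 * b ^ 5 := by unfold fA fB; ring

theorem fAB_bezout2 (a b : ℤ) : (26619*b^2-17374*a*b+15831*a^2) * fA a b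
    + (-57441*b^2+58580*a*b-14500*a^2) * fB a b = 5324 * a ^ 5 := by unfold fA fB; ring

theorem fAB_mod11 : ∀ a b r : ZMod 11,
    -(4 * a ^ 3 - 4 * a ^ 2 * b - 28 * a * b ^ 2 + 41 * b ^ 3) *
      (4 * a ^ 3 + 7 * a ^ 2 * b - 6 * a * b ^ 2 + 19 * b ^ 3) = r * r → a - 4 * b = 0 := by
  decide +kernel

theorem sqfree_split {T G : ℤ} (hT : 0 < T) (h : IsSquare (T * G)) :
    ∃ (d : ℕ) (m n : ℤ), Squarefree d ∧ T = d * m ^ 2 ∧ G = d * n ^ 2 := by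
  obtain ⟨r, hr⟩ := h
  obtain ⟨a, b, hab, hsq⟩ := Nat.sq_mul_squarefree T.natAbs
  have hTab : T = a * (b : ℤ) ^ 2 := by
    have : (T.natAbs : ℤ) = T := Int.natAbs_of_nonneg hT.le
    rw [← this, ← hab]; push_cast; ring
  have hb0 : (b : ℤ) ≠ 0 := by rintro hb; rw [hb] at hTab; norm_num at hTab; omega
  have ha0 : (a : ℤ) ≠ 0 := by rintro hb; rw [hb] at hTab; norm_num at hTab; omega
  obtain ⟨s, hs⟩ : IsSquare ((a : ℤ) * G) := by
    apply isSquare_of_mul_sq hb0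
    refine ⟨r, ?_⟩
    rw [← hr, hTab]; ring
  have has : (a : ℤ) ∣ s := by
    have hsq' : Squarefree (a : ℤ) := Int.squarefree_natCast.mpr hsq
    exact (hsq'.dvd_pow_iff_dvd (n := 2) (by norm_num)).mp ⟨G, by rw [hs]; ring⟩
  obtain ⟨n, rfl⟩ := has
  exact ⟨a, b, n, hsq, hTab, by apply mul_left_cancel₀ ha0; rw [hs]; ring⟩

/-- Residues modulo 32 of squares and of doubled squares. -/
def sqRes : List ℤ := [0, 1, 4, 9, 16, 17, 25]
/-- Residues modulo 32 of doubled squares. -/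
def sqRes2 : List ℤ := [0, 2, 8, 18]

/-- Allowed residues modulo 32 of the denominator. -/
def okB (b : ℤ) : Bool := decide (b % 4 = 1) || decide (b % 8 = 2) || decide (b % 16 = 4) ||
  decide (b % 32 = 8) || decide (b % 16 = 0)

/-- Check modulo 32. -/
def test32 : Bool :=
  allBelow (fun i => allBelow (fun j =>
    !(okB j) || (decide (i % 2 = 0) && decide (j % 2 = 0)) ||
    (!(List.elem ((-fA i j) % 32) sqRes && List.elem (fB i j % 32) sqRes) &&
     !(List.elem ((-fA i j) % 32) sqRes2 && List.elem (fB i j % 32) sqRes2))) 32) 32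

theorem test32_true : test32 = true := by decide +kernel

theorem mem_sqRes (m : ℤ) : List.elem (m ^ 2 % 32) sqRes = true := by
  obtain ⟨s, hs, e⟩ := sq_red m 32 (by norm_num)
  push_cast at e
  rw [pow_two, e]
  revert s
  have : ∀ r : ℕ, r < 32 → List.elem (((r : ℤ) * r) % 32) sqRes = true := by decide +kernel
  intro s hs _
  exact this s hs

theorem mem_sqRes2 (m : ℤ) : List.elem (2 * m ^ 2 % 32) sqRes2 = true := by
  obtain ⟨s, hs, e⟩ := sq_red m 32 (by norm_num)
  push_cast at e
  have : ∀ r : ℕ, r < 32 → List.elem (2 * (((r : ℤ) * r) % 32) % 32) sqRes2 = true := by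
    decide +kernel
  have h2 := this s hs
  rw [← e] at h2
  have e2 : 2 * m ^ 2 % 32 = 2 * (m * m % 32) % 32 := by
    rw [pow_two]; omega
  rw [e2]; exact h2

theorem fA_red (a b : ℤ) : (-fA (a % 32) (b % 32)) % 32 = (-fA a b) % 32 := by
  have : ((-fA (a % 32) (b % 32)) : ℤ) ≡ -fA a b [ZMOD 32] := by
    have ha : a % 32 ≡ a [ZMOD 32] := Int.mod_modEq a 32
    have hb : b % 32 ≡ b [ZMOD 32] := Int.mod_modEq b 32
    unfold fA
    gcongr
  exact this

theorem fB_red (a b : ℤ) : (fB (a % 32) (b % 32)) % 32 = (fB a b) % 32 := by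
  have : ((fB (a % 32) (b % 32)) : ℤ) ≡ fB a b [ZMOD 32] := by
    have ha : a % 32 ≡ a [ZMOD 32] := Int.mod_modEq a 32
    have hb : b % 32 ≡ b [ZMOD 32] := Int.mod_modEq b 32
    unfold fB
    gcongr
  exact this

theorem no_2adic {a b m n : ℤ} {d : ℕ} (hd : d = 1 ∨ d = 2) (hab : ¬ (a % 2 = 0 ∧ b % 2 = 0))
    (hA : -fA a b = d * m ^ 2) (hB : fB a b = d * n ^ 2) (hok : okB (b % 32) = true) : False := by
  have h1 := allBelow_spec test32_true (a % 32).toNat (by omega)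
  have h2 := allBelow_spec h1 (b % 32).toNat (by omega)
  have ea : (((a % 32).toNat : ℕ) : ℤ) = a % 32 := by omega
  have eb : (((b % 32).toNat : ℕ) : ℤ) = b % 32 := by omega
  have pa : (a % 32).toNat % 2 = 0 ↔ a % 2 = 0 := by omega
  have pb : (b % 32).toNat % 2 = 0 ↔ b % 2 = 0 := by omega
  simp only [ea, eb, pa, pb] at h2
  rw [hok, fA_red, fB_red, hA, hB] at h2
  rcases hd with rfl | rfl
  · simp only [Nat.cast_one, one_mul, mem_sqRes] at h2
    simp at h2
    exact hab ⟨by omega, by omega⟩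
  · simp only [Nat.cast_ofNat, mem_sqRes2] at h2
    simp at h2
    exact hab ⟨by omega, by omega⟩

theorem okB_of {b : ℕ} (hb : b ≠ 0) (h : ∀ c : ℕ, c ∣ b → Odd c → c % 4 = 1) :
    okB ((b : ℤ) % 32) = true := by
  obtain ⟨k, c, hc, rfl⟩ := Nat.exists_eq_two_pow_mul_odd hb
  have hc4 := h c (Dvd.intro_left _ rfl) hc
  unfold okB
  simp only [Bool.or_eq_true, decide_eq_true_eq]
  rcases lt_or_ge k 4 with hk | hk
  · interval_cases k <;> push_cast <;> omega
  · obtain ⟨j, rfl⟩ := Nat.exists_eq_add_of_le hk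
    right
    rw [pow_add]
    push_cast
    rw [mul_assoc]
    omega

theorem no_AB {a b r : ℤ} (hc : IsCoprime a b) (hb : 0 < b) (hA : fA a b < 0) (hB : 0 < fB a b)
    (hr : -fA a b * fB a b = r * r) : False := by
  have hp11 : Prime (11 : ℤ) := by norm_num
  have hok : okB (b % 32) = true := by
    have hbn : ((b.toNat : ℕ) : ℤ) = b := by omega
    rw [← hbn]
    apply okB_of (by omega)
    intro c hcb hodd
    have hcb' : (c : ℤ) ∣ b := by rw [← hbn]; exact_mod_cast hcb
    have hcz : (b : ZMod c) = 0 := (ZMod.intCast_zmod_eq_zero_iff_dvd b c).mpr hcb'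
    have hca : IsCoprime (4 * a ^ 3) (c : ℤ) := by
      apply IsCoprime.mul_left
      · have : IsCoprime (2 : ℤ) (c : ℤ) := by
          exact Nat.isCoprime_iff_coprime.mpr (Nat.coprime_two_left.mpr hodd)
        exact (this.pow_left (m := 2))
      · exact (hc.of_isCoprime_of_dvd_right hcb').pow_left
    obtain ⟨α, β, hαβ⟩ := hca
    have hu : (α : ZMod c) * (4 * (a : ZMod c) ^ 3) = 1 := by
      have := congrArg (Int.cast : ℤ → ZMod c) hαβ
      push_cast at this
      simpa using this
    have hr' := congrArg (Int.cast : ℤ → ZMod c) hr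
    unfold fA fB at hr'
    push_cast at hr'
    rw [hcz] at hr'
    have hsq : IsSquare (-1 : ZMod c) := by
      refine ⟨α * r, ?_⟩
      linear_combination (α : ZMod c) ^ 2 * hr'
        + ((α : ZMod c) * (4 * (a : ZMod c) ^ 3) + 1) * hu
    obtain ⟨x, y, hxy⟩ := Nat.eq_sq_add_sq_of_isSquare_mod_neg_one hsq
    rw [hxy] at hodd ⊢
    have h2 : ∀ x < 4, ∀ y < 4, (x ^ 2 + y ^ 2) % 2 = 1 → (x ^ 2 + y ^ 2) % 4 = 1 := by
      decide
    have h3 := h2 (x % 4) (Nat.mod_lt _ (by norm_num)) (y % 4) (Nat.mod_lt _ (by norm_num))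
    have e1 : ((x % 4) ^ 2 + (y % 4) ^ 2) ≡ x ^ 2 + y ^ 2 [MOD 4] := by
      have := Nat.mod_modEq x 4
      have := Nat.mod_modEq y 4
      gcongr
    have e2 : ((x % 4) ^ 2 + (y % 4) ^ 2) % 4 = (x ^ 2 + y ^ 2) % 4 := e1
    rw [Nat.odd_iff] at hodd
    omega
  obtain ⟨d, m, n, hsq, hm, hn⟩ := sqfree_split (T := -fA a b) (by linarith) ⟨r, hr⟩
  have hmod : (11 : ℤ) ∣ a - 4 * b := by
    have := congrArg (Int.cast : ℤ → ZMod 11) hr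
    unfold fA fB at this
    push_cast at this
    have h2 := fAB_mod11 _ _ _ this
    exact (ZMod.intCast_zmod_eq_zero_iff_dvd (a - 4 * b) 11).mp (by push_cast; exact h2)
  have h11 : ¬ (11 : ℤ) ∣ d := by
    rintro ⟨e, he⟩
    obtain ⟨s, hs⟩ := hmod
    have hae : a = 4 * b + 11 * s := by linarith
    have hBe : fB a b = 121 * (3 * b ^ 3 + 22 * s * b ^ 2 + 55 * s ^ 2 * b + 44 * s ^ 3) := by
      rw [hae]; unfold fB; ring
    have hen : e * n ^ 2 = 11 * (3 * b ^ 3 + 22 * s * b ^ 2 + 55 * s ^ 2 * b + 44 * s ^ 3) := by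
      rw [hn, he] at hBe; linarith
    have hne : ¬ (11 : ℤ) ∣ e := by
      rintro ⟨f, hf⟩
      have h121 : (11 : ℤ) * 11 ∣ d := ⟨f, by rw [he, hf]; ring⟩
      have h121' : 11 * 11 ∣ d := by exact_mod_cast h121
      have := hsq 11 h121'
      norm_num at this
    obtain ⟨t, ht⟩ := hp11.dvd_of_dvd_pow ((hp11.dvd_or_dvd (Dvd.intro _ hen.symm)).resolve_left hne)
    have hb3 : (11 : ℤ) ∣ b := by
      have : (11 : ℤ) ∣ 3 * b ^ 3 := by
        rw [ht] at hen
        exact ⟨e * t ^ 2 - (2 * s * b ^ 2 + 5 * s ^ 2 * b + 4 * s ^ 3), by linarith⟩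
      exact hp11.dvd_of_dvd_pow ((hp11.dvd_or_dvd this).resolve_left (by norm_num))
    have ha3 : (11 : ℤ) ∣ a := by
      rw [hae]; exact dvd_add (Dvd.dvd.mul_left hb3 _) ⟨s, rfl⟩
    exact hp11.not_isUnit (hc.isUnit_of_dvd' ha3 hb3)
  have hd4 : d ∣ 4 := by
    have h1 : (d : ℤ) ∣ 5324 * a ^ 5 := by
      rw [← fAB_bezout2, hn, show fA a b = -(d * m ^ 2) by linarith]
      exact ⟨(26619*b^2-17374*a*b+15831*a^2) * (-m^2)
        + (-57441*b^2+58580*a*b-14500*a^2) * n^2, by ring⟩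
    have h2 : (d : ℤ) ∣ 5324 * b ^ 5 := by
      rw [show (5324 : ℤ) * b ^ 5 = 4 * (1331 * b ^ 5) by ring, ← fAB_bezout1, hn,
        show fA a b = -(d * m ^ 2) by linarith]
      exact ⟨4 * ((-16*a^2+40*a*b-25*b^2) * (-m^2)
        + (16*a^2-84*a*b+124*b^2) * n^2), by ring⟩
    have h3 : (d : ℤ) ∣ 5324 := by
      obtain ⟨α, β, hab⟩ : IsCoprime (a ^ 5) (b ^ 5) := hc.pow
      have e : (5324 : ℤ) = α * (5324 * a ^ 5) + β * (5324 * b ^ 5) := by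
        linear_combination (-5324) * hab
      rw [e]
      exact dvd_add (Dvd.dvd.mul_left h1 _) (Dvd.dvd.mul_left h2 _)
    have h4 : d ∣ 11 ^ 3 * 4 := by exact_mod_cast h3
    have hcop : Nat.Coprime d (11 ^ 3) := by
      apply Nat.Coprime.pow_right
      rw [Nat.coprime_comm, Nat.Prime.coprime_iff_not_dvd (by norm_num)]
      intro h; apply h11; exact_mod_cast h
    exact hcop.dvd_of_dvd_mul_left h4
  have hd12 : d = 1 ∨ d = 2 := by
    have : d ≤ 4 := Nat.le_of_dvd (by norm_num) hd4
    interval_cases d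
    all_goals first | omega | skip
    · exact absurd (hsq 2 (by norm_num)) (by norm_num)
  refine no_2adic hd12 ?_ hm hn hok
  rintro ⟨h1, h2⟩
  have := hc.isUnit_of_dvd' (Int.dvd_of_emod_eq_zero h1) (Int.dvd_of_emod_eq_zero h2)
  exact Int.prime_two.not_isUnit this

theorem no_rat2 (X z : ℚ) (hz : z ≠ 0) :
    z ^ 2 ≠ -((4 * X ^ 3 - 4 * X ^ 2 - 28 * X + 41) * (4 * X ^ 3 + 7 * X ^ 2 - 6 * X + 19)) := by
  intro h
  have hz2 : 0 < z ^ 2 := by positivity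
  set f1 := 4 * X ^ 3 - 4 * X ^ 2 - 28 * X + 41 with hf1
  set f2 := 4 * X ^ 3 + 7 * X ^ 2 - 6 * X + 19 with hf2
  have hneg : f1 * f2 < 0 := by linarith
  have hsgn : f1 < 0 ∧ 0 < f2 := by
    rcases mul_neg_iff.mp hneg with ⟨h1, h2⟩ | h1
    · exfalso
      have hu : X ^ 2 + 2 * X - 2 < 0 := by
        have : f1 - f2 = -11 * (X ^ 2 + 2 * X - 2) := by rw [hf1, hf2]; ring
        linarith
      have hX : -4 < X := by nlinarith
      rcases lt_or_ge X (1 / 4) with h4 | h4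
      · have : f2 = (X ^ 2 + 2 * X - 2) * (4 * X - 1) + (4 * X + 17) := by rw [hf2]; ring
        nlinarith
      · have : 0 ≤ X ^ 3 := by positivity
        nlinarith
    · exact h1
  set a := X.num with ha
  set b : ℤ := (X.den : ℤ) with hb
  have hb0 : 0 < b := by rw [hb]; exact_mod_cast X.den_pos
  have hbQ : (0 : ℚ) < b := by exact_mod_cast hb0
  have hX : X * b = a := by rw [hb, ha]; exact_mod_cast Rat.mul_den_eq_num X
  have hc : IsCoprime a b := Rat.isCoprime_num_den X
  have eA : ((fA a b : ℤ) : ℚ) = f1 * b ^ 3 := by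
    unfold fA; push_cast; rw [← hX, hf1]; ring
  have eB : ((fB a b : ℤ) : ℚ) = f2 * b ^ 3 := by
    unfold fB; push_cast; rw [← hX, hf2]; ring
  have hA : fA a b < 0 := by
    have : ((fA a b : ℤ) : ℚ) < 0 := by
      rw [eA]; exact mul_neg_of_neg_of_pos hsgn.1 (by positivity)
    exact_mod_cast this
  have hB : 0 < fB a b := by
    have : (0 : ℚ) < ((fB a b : ℤ) : ℚ) := by
      rw [eB]; exact mul_pos hsgn.2 (by positivity)
    exact_mod_cast this
  obtain ⟨r, hr⟩ : IsSquare (-fA a b * fB a b) := by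
    rw [← Rat.isSquare_intCast_iff]
    refine ⟨z * b ^ 3, ?_⟩
    push_cast
    rw [eA, eB]
    linear_combination (-(b : ℚ) ^ 6) * h
  exact no_AB hc hb0 hA hB hr

theorem rep_unique {K : Type*} [Field K] [Algebra ℚ K] {u : K}
    (hu : u ∉ Set.range (algebraMap ℚ K)) {s t : ℚ}
    (hst : algebraMap ℚ K s * u + algebraMap ℚ K t = 0) : s = 0 ∧ t = 0 := by
  have hs : s = 0 := by
    by_contra hs
    apply hu
    refine ⟨-t / s, ?_⟩
    have hs' : algebraMap ℚ K s ≠ 0 := (map_ne_zero (algebraMap ℚ K)).mpr hs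
    rw [map_div₀, map_neg, div_eq_iff hs']
    linear_combination -hst
  subst hs
  rw [map_zero, zero_mul, zero_add] at hst
  exact ⟨rfl, (map_eq_zero (algebraMap ℚ K)).mp hst⟩

theorem rep {K : Type*} [Field K] [Algebra ℚ K] (hK : Module.finrank ℚ K = 2) {u : K}
    (hu : u ∉ Set.range (algebraMap ℚ K)) (w : K) :
    ∃ α β : ℚ, w = algebraMap ℚ K α * u + algebraMap ℚ K β := by
  have hli : LinearIndependent ℚ ![u, (1 : K)] := by
    rw [LinearIndependent.pair_iff]
    intro s t hst
    rw [Algebra.smul_def, Algebra.smul_def, mul_one] at hst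
    exact rep_unique hu hst
  have hfin : FiniteDimensional ℚ K := Module.finite_of_finrank_pos (by omega)
  have hspan := hli.span_eq_top_of_card_eq_finrank' (by simp [hK])
  have hw : w ∈ Submodule.span ℚ (Set.range ![u, (1 : K)]) := by rw [hspan]; trivial
  rw [Matrix.range_cons, Matrix.range_cons, Matrix.range_empty, Set.union_empty,
    Set.singleton_union, Submodule.mem_span_pair] at hw
  obtain ⟨α, β, h⟩ := hw
  exact ⟨α, β, by rw [← h, Algebra.smul_def, Algebra.smul_def, mul_one]⟩

end Xns11

theorem no_exceptional_quadratic_points_Xns11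
    (K : Type*) [Field K] [Algebra ℚ K] (hK : Module.finrank ℚ K = 2)
    (u v w : K)
    (h1 : v ^ 2 + v = u ^ 3 - u ^ 2 - 7 * u + 10)
    (h2 : w ^ 2 = -(4 * u ^ 3 + 7 * u ^ 2 - 6 * u + 19)) :
    u ∈ Set.range (algebraMap ℚ K) ∧ v ∈ Set.range (algebraMap ℚ K) := by
  by_cases hu : u ∈ Set.range (algebraMap ℚ K)
  · refine ⟨hu, ?_⟩
    obtain ⟨X, rfl⟩ := hu
    have hinj : Function.Injective (algebraMap ℚ K) := (algebraMap ℚ K).injective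
    have hw : w ∉ Set.range (algebraMap ℚ K) := by
      rintro ⟨t, rfl⟩
      apply Xns11.no_rat1 X t
      apply hinj
      simp only [map_add, map_sub, map_mul, map_pow, map_neg, map_ofNat]
      exact h2
    obtain ⟨α, β, rfl⟩ := Xns11.rep hK hw v
    have key : algebraMap ℚ K (α * (2 * β + 1)) * w
        + algebraMap ℚ K (β ^ 2 + β - α ^ 2 * (4 * X ^ 3 + 7 * X ^ 2 - 6 * X + 19)
          - (X ^ 3 - X ^ 2 - 7 * X + 10)) = 0 := by
      simp only [map_add, map_sub, map_mul, map_pow, map_one, map_ofNat]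
      linear_combination h1 - (algebraMap ℚ K α) ^ 2 * h2
    obtain ⟨e1, e2⟩ := Xns11.rep_unique hw key
    by_cases hα : α = 0
    · exact ⟨β, by rw [hα]; simp⟩
    · exfalso
      have hβ := (mul_eq_zero.mp e1).resolve_left hα
      have hβ' : β = -1 / 2 := by linarith
      refine Xns11.no_rat2 X (2 * α * (4 * X ^ 3 + 7 * X ^ 2 - 6 * X + 19)) ?_ ?_
      · refine mul_ne_zero (mul_ne_zero two_ne_zero hα) ?_
        intro h0
        apply Xns11.no_rat1 X 0
        rw [h0]; norm_num
      · rw [hβ'] at e2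
        linear_combination (-4 * (4 * X ^ 3 + 7 * X ^ 2 - 6 * X + 19)) * e2
  · exfalso
    obtain ⟨α, β, rfl⟩ := Xns11.rep hK hu w
    obtain ⟨s, t, hst⟩ := Xns11.rep hK hu (u ^ 2)
    have key : algebraMap ℚ K (-4 * (s ^ 2 + t) - 7 * s + 6 - α ^ 2 * s - 2 * α * β) * u
        + algebraMap ℚ K (-4 * (s * t) - 7 * t - 19 - α ^ 2 * t - β ^ 2) = 0 := by
      simp only [map_add, map_sub, map_mul, map_pow, map_neg, map_ofNat]
      linear_combination -h2 + (4 * u + 4 * algebraMap ℚ K s + 7 + (algebraMap ℚ K α) ^ 2) * hst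
    obtain ⟨e1, e2⟩ := Xns11.rep_unique hu key
    apply Xns11.no_rat1 (-(7 + α ^ 2) / 4 - s) (α * (-(7 + α ^ 2) / 4 - s) + β)
    linear_combination (-(-(7 + α ^ 2) / 4 - s)) * e1 - e2
end
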